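/- arXiv:2207.09552 — 4 statements merged into one kernel-verified Lean document; each statement's English description precedes it below -/
import Mathlib

section
/- For every centrally symmetric convex body K in ℝ², the lattice packing density satisfies δ_L(K) ≥ |K|·|K°|/(2π√3), with equality if and only if K is an ellipse. -/
open MeasureTheory Set Matrix Pointwise

noncomputable section

/-- The lattice `A · ℤⁿ` associated with an (invertible) matrix `A`. -/
def latticeOf {n : ℕ} (A : Matrix (Fin n) (Fin n) ℝ) : Set (Fin n → ℝ) :=
  Set.range fun m : Fin n → ℤ => A.mulVec fun i => (m i : ℝ)

/-- `Λ + K` is non-separable: every affine hyperplane `{y | ⟨u,y⟩ = c}` (with `u ≠ 0`)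
meets `x + K` for some `x ∈ Λ`. -/
def NonSeparable {n : ℕ} (Λ K : Set (Fin n → ℝ)) : Prop :=
  ∀ u : Fin n → ℝ, u ≠ 0 → ∀ c : ℝ, ∃ x ∈ Λ, ∃ y ∈ K, u ⬝ᵥ (x + y) = c

/-- `d_{n,n-1}(K)`: the smallest density `|K|/d(Λ)` of a non-separable
lattice of translates of `K`. -/
def dTrans {n : ℕ} (K : Set (Fin n → ℝ)) : ℝ :=
  sInf {d : ℝ | ∃ A : Matrix (Fin n) (Fin n) ℝ, A.det ≠ 0 ∧
    NonSeparable (latticeOf A) K ∧ d = (volume K).toReal / |A.det|}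

/-- The polar body `K° = {x | ∀ y ∈ K, ⟨y,x⟩ ≤ 1}`. -/
def polarBody {n : ℕ} (K : Set (Fin n → ℝ)) : Set (Fin n → ℝ) :=
  {x | ∀ y ∈ K, y ⬝ᵥ x ≤ 1}

/-- A set `Λ` is `K`-admissible if it meets the interior of `K` only in `0`. -/
def Admissible {n : ℕ} (Λ K : Set (Fin n → ℝ)) : Prop :=
  Λ ∩ interior K = {0}

/-- The critical determinant `Δ(K)`: the smallest determinant of a `K`-admissible lattice. -/
def critDet {n : ℕ} (K : Set (Fin n → ℝ)) : ℝ :=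
  sInf {d : ℝ | ∃ A : Matrix (Fin n) (Fin n) ℝ, A.det ≠ 0 ∧
    Admissible (latticeOf A) K ∧ d = |A.det|}

/-- The densest lattice packing density `δ_L(K) = |K| / (2ⁿ Δ(K))` of a
centrally symmetric convex body `K ⊆ ℝⁿ`. -/
def deltaL {n : ℕ} (K : Set (Fin n → ℝ)) : ℝ :=
  (volume K).toReal / (2 ^ n * critDet K)

/-- An ellipse: the image of the closed unit disc under an invertible affine map. -/
def IsEllipse (K : Set (Fin 2 → ℝ)) : Prop :=
  ∃ A : Matrix (Fin 2) (Fin 2) ℝ, A.det ≠ 0 ∧ ∃ v : Fin 2 → ℝ,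
    K = (fun x => A.mulVec x + v) '' {x : Fin 2 → ℝ | x ⬝ᵥ x ≤ 1}

/-- The planar cross product. -/
def cr (a b : Fin 2 → ℝ) : ℝ := a 0 * b 1 - a 1 * b 0

lemma dot2 (a b : Fin 2 → ℝ) : a ⬝ᵥ b = a 0 * b 0 + a 1 * b 1 := by
  simp [dotProduct, Fin.sum_univ_two]

lemma critDet_nonneg {n : ℕ} (K : Set (Fin n → ℝ)) : 0 ≤ critDet K := by
  apply Real.sInf_nonneg
  rintro d ⟨A, -, -, rfl⟩
  exact abs_nonneg _

lemma polar_neg {K : Set (Fin 2 → ℝ)} (hs : K = -K) {a : Fin 2 → ℝ} (ha : a ∈ polarBody K) :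
    -a ∈ polarBody K := by
  intro y hy
  have : -y ∈ K := by rw [hs] at hy; simpa using hy
  have := ha _ this
  simpa [dot2] using this

lemma polar_convex (K : Set (Fin 2 → ℝ)) : Convex ℝ (polarBody K) := by
  intro a ha b hb s t hs ht hst y hy
  have h1 := ha y hy
  have h2 := hb y hy
  simp only [dot2, Pi.add_apply, Pi.smul_apply, smul_eq_mul] at *
  nlinarith

lemma polar_lt {K : Set (Fin 2 → ℝ)} {a x : Fin 2 → ℝ} (ha : a ∈ polarBody K)
    (hx : x ∈ interior K) : a ⬝ᵥ x < 1 := by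
  by_contra hcon
  push Not at hcon
  have hc : Filter.Tendsto (fun r : ℝ => r • x) (nhds 1) (nhds ((1 : ℝ) • x)) :=
    (continuous_id.smul continuous_const).tendsto 1
  rw [one_smul] at hc
  have hm : ∀ᶠ r : ℝ in nhds 1, r • x ∈ K := hc (mem_interior_iff_mem_nhds.1 hx)
  obtain ⟨ε, hε, hb⟩ := Metric.eventually_nhds_iff.1 hm
  have h1 := hb (y := 1 + ε / 2) (by
    rw [Real.dist_eq]; rw [show 1 + ε / 2 - 1 = ε / 2 by ring, abs_of_pos (by positivity)]; linarith)
  have := ha _ h1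
  simp only [dot2, Pi.smul_apply, smul_eq_mul] at *
  nlinarith

/-- The set of determinants of admissible lattices. -/
def critSet (K : Set (Fin 2 → ℝ)) : Set ℝ :=
  {d : ℝ | ∃ A : Matrix (Fin 2) (Fin 2) ℝ, A.det ≠ 0 ∧
    Admissible (latticeOf A) K ∧ d = |A.det|}

lemma mulVec2 (A : Matrix (Fin 2) (Fin 2) ℝ) (x : Fin 2 → ℝ) (i : Fin 2) :
    (A *ᵥ x) i = A i 0 * x 0 + A i 1 * x 1 := by
  rw [Matrix.mulVec, dot2]

lemma critDet_le_of_mem {K : Set (Fin 2 → ℝ)} {d : ℝ} (h : d ∈ critSet K) : critDet K ≤ d := by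
  apply csInf_le _ h
  refine ⟨0, ?_⟩
  rintro d ⟨A, -, -, rfl⟩
  exact abs_nonneg _

lemma mem_critSet {K : Set (Fin 2 → ℝ)} (h0 : (0 : Fin 2 → ℝ) ∈ interior K)
    (u0 u1 v0 v1 d : ℝ) (hd : u0 * v1 - u1 * v0 = d) (hd0 : 0 < d)
    (h : ∀ m n : ℤ, (m ≠ 0 ∨ n ≠ 0) → ∃ a ∈ polarBody K,
      1 ≤ a 0 * (m * u0 + n * v0) + a 1 * (m * u1 + n * v1)) :
    d ∈ critSet K := by
  have hdet : (!![u0, v0; u1, v1] : Matrix (Fin 2) (Fin 2) ℝ).det = d := by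
    rw [Matrix.det_fin_two_of, ← hd]; ring
  refine ⟨!![u0, v0; u1, v1], by rw [hdet]; exact hd0.ne', ?_, by rw [hdet, abs_of_pos hd0]⟩
  ext x
  simp only [mem_inter_iff, mem_singleton_iff]
  constructor
  · rintro ⟨⟨m, rfl⟩, hx⟩
    by_cases hm : m 0 ≠ 0 ∨ m 1 ≠ 0
    · exfalso
      obtain ⟨a, ha, h1⟩ := h _ _ hm
      have h2 := polar_lt ha hx
      rw [dot2] at h2
      simp only [mulVec2] at h2
      simp at h2
      nlinarith
    · push Not at hm
      ext i
      simp only [mulVec2]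
      simp [hm]
  · rintro rfl
    refine ⟨⟨0, ?_⟩, h0⟩
    ext i
    simp only [mulVec2]
    simp

lemma cr_mem_critSet {K : Set (Fin 2 → ℝ)} (hs : K = -K) (h0 : (0 : Fin 2 → ℝ) ∈ interior K)
    {p q : Fin 2 → ℝ} (hp : p ∈ polarBody K) (hq : q ∈ polarBody K)
    (hD : 0 < cr p q) : 1 / cr p q ∈ critSet K := by
  have hD' := hD.ne'
  have e : cr p q = p 0 * q 1 - p 1 * q 0 := rfl
  set D := cr p q
  apply mem_critSet h0 (q 1 / D) (-q 0 / D) (-p 1 / D) (p 0 / D)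
  · field_simp
    rw [e]; ring
  · positivity
  intro m n hmn
  have hP : p 0 * (m * (q 1 / D) + n * (-p 1 / D)) + p 1 * (m * (-q 0 / D) + n * (p 0 / D)) = m := by
    field_simp
    rw [e]; ring
  have hQ : q 0 * (m * (q 1 / D) + n * (-p 1 / D)) + q 1 * (m * (-q 0 / D) + n * (p 0 / D)) = n := by
    field_simp
    rw [e]; ring
  have key : ∀ k : ℤ, k ≠ 0 → (1 : ℝ) ≤ k ∨ (1 : ℝ) ≤ -k := by
    intro k hk
    rcases lt_or_gt_of_ne hk with h | h
    · right; have : k ≤ -1 := by omega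
      have : (k : ℝ) ≤ -1 := by exact_mod_cast this
      linarith
    · left; exact_mod_cast h
  rcases hmn with h | h
  · rcases key m h with h | h
    · exact ⟨p, hp, by rw [hP]; exact h⟩
    · refine ⟨-p, polar_neg hs hp, ?_⟩
      simp only [Pi.neg_apply]; linarith
  · rcases key n h with h | h
    · exact ⟨q, hq, by rw [hQ]; exact h⟩
    · refine ⟨-q, polar_neg hs hq, ?_⟩
      simp only [Pi.neg_apply]; linarith

lemma critDet_cr_le {K : Set (Fin 2 → ℝ)} (hs : K = -K) (h0 : (0 : Fin 2 → ℝ) ∈ interior K)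
    {p q : Fin 2 → ℝ} (hp : p ∈ polarBody K) (hq : q ∈ polarBody K) :
    critDet K * cr p q ≤ 1 := by
  rcases le_or_gt (cr p q) 0 with hD | hD
  · nlinarith [critDet_nonneg K]
  rw [← le_div_iff₀ hD]
  exact critDet_le_of_mem (cr_mem_critSet hs h0 hp hq hD)

lemma hex_int (x t s : ℝ) (hx0 : 0 ≤ x) (hx1 : x ≤ 1) (ht : 0 ≤ t)
    (m n : ℤ) (hmn : m ≠ 0 ∨ n ≠ 0) :
    (1 ≤ m * x + n * (x - 1) ∨ 1 ≤ -(m * x + n * (x - 1))) ∨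
    (1 ≤ m + n * t ∨ 1 ≤ -(m + n * t)) ∨ (1 ≤ m * s + n ∨ 1 ≤ -(m * s + n)) := by
  have key : ∀ k : ℤ, k ≤ -1 ∨ k = 0 ∨ 1 ≤ k := by intro k; omega
  have c1 : ∀ k : ℤ, k ≤ -1 → (k : ℝ) ≤ -1 := by intro k hk; exact_mod_cast hk
  have c2 : ∀ k : ℤ, 1 ≤ k → (1 : ℝ) ≤ k := by intro k hk; exact_mod_cast hk
  rcases key m with h | h | h <;> rcases key n with h' | h' | h'
  · have := c1 _ h; have := c1 _ h'
    right; left; right; nlinarith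
  · have := c1 _ h; subst h'
    right; left; right; simp; linarith
  · have := c1 _ h; have := c2 _ h'
    left; right; nlinarith
  · have := c1 _ h'; subst h
    right; right; right; simp; linarith
  · omega
  · have := c2 _ h'; subst h
    right; right; left; simp; linarith
  · have := c2 _ h; have := c1 _ h'
    left; left; nlinarith
  · have := c2 _ h; subst h'
    right; left; left; simp; linarith
  · have := c2 _ h; have := c2 _ h'
    right; left; left; nlinarith

lemma critDet_hex {K : Set (Fin 2 → ℝ)} (hs : K = -K) (h0 : (0 : Fin 2 → ℝ) ∈ interior K)
    {a b c : Fin 2 → ℝ} (ha : a ∈ polarBody K) (hb : b ∈ polarBody K) (hc : c ∈ polarBody K)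
    {α β γ : ℝ} (eα : α = cr a b) (eβ : β = cr b c) (eγ : γ = cr a c)
    (hα : 0 < α) (hβ : 0 < β) (hγ : 0 < γ)
    (h1 : 0 < β + γ - α) (h2 : 0 < γ + α - β) (h3 : 0 < α + β - γ) :
    critDet K ≤ (α * (β + γ - α) + β * (γ + α - β) + γ * (α + β - γ)) / (4 * (α * β * γ)) := by
  have eα' : α = a 0 * b 1 - a 1 * b 0 := eα
  have eβ' : β = b 0 * c 1 - b 1 * c 0 := eβ
  have eγ' : γ = a 0 * c 1 - a 1 * c 0 := eγ
  have nα := hα.ne'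
  have nβ := hβ.ne'
  have nγ := hγ.ne'
  have rel : ∀ i : Fin 2, β * a i - γ * b i + α * c i = 0 := by
    intro i; rw [eα', eβ', eγ']
    fin_cases i <;> simp <;> ring
  -- the polar vertices
  refine critDet_le_of_mem (mem_critSet h0
    (((b 1 - a 1) / α + (c 1 - b 1) / β) / 2) (-((b 0 - a 0) / α + (c 0 - b 0) / β) / 2)
    (((c 1 - b 1) / β + (-a 1 - c 1) / γ) / 2) (-((c 0 - b 0) / β + (-a 0 - c 0) / γ) / 2)
    _ ?_ ?_ ?_)
  · field_simp
    rw [eα', eβ', eγ']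
    ring
  · positivity
  intro m n hmn
  have hA : a 0 * (m * (((b 1 - a 1) / α + (c 1 - b 1) / β) / 2)
      + n * (((c 1 - b 1) / β + (-a 1 - c 1) / γ) / 2))
      + a 1 * (m * (-((b 0 - a 0) / α + (c 0 - b 0) / β) / 2)
      + n * (-((c 0 - b 0) / β + (-a 0 - c 0) / γ) / 2))
      = m * ((β + γ - α) / (2 * β)) + n * ((β + γ - α) / (2 * β) - 1) := by
    field_simp
    rw [eα', eβ', eγ']
    ring
  have hB : b 0 * (m * (((b 1 - a 1) / α + (c 1 - b 1) / β) / 2)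
      + n * (((c 1 - b 1) / β + (-a 1 - c 1) / γ) / 2))
      + b 1 * (m * (-((b 0 - a 0) / α + (c 0 - b 0) / β) / 2)
      + n * (-((c 0 - b 0) / β + (-a 0 - c 0) / γ) / 2))
      = m + n * ((γ + α - β) / (2 * γ)) := by
    field_simp
    rw [eα', eβ', eγ']
    ring
  have hC : c 0 * (m * (((b 1 - a 1) / α + (c 1 - b 1) / β) / 2)
      + n * (((c 1 - b 1) / β + (-a 1 - c 1) / γ) / 2))
      + c 1 * (m * (-((b 0 - a 0) / α + (c 0 - b 0) / β) / 2)
      + n * (-((c 0 - b 0) / β + (-a 0 - c 0) / γ) / 2))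
      = m * ((γ + α - β) / (2 * α)) + n := by
    field_simp
    rw [eα', eβ', eγ']
    ring
  have := hex_int ((β + γ - α) / (2 * β)) ((γ + α - β) / (2 * γ)) ((γ + α - β) / (2 * α))
    (by positivity) (by rw [div_le_one (by positivity)]; linarith) (by positivity)
    m n hmn
  have neg : ∀ p : Fin 2 → ℝ, p ∈ polarBody K → ∀ x y z : ℝ, p 0 * x + p 1 * y = z →
      (1 ≤ z ∨ 1 ≤ -z) → ∃ a ∈ polarBody K, 1 ≤ a 0 * x + a 1 * y := by
    intro p hp x y z hz h
    rcases h with h | h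
    · exact ⟨p, hp, by linarith⟩
    · refine ⟨-p, polar_neg hs hp, ?_⟩
      simp only [Pi.neg_apply]; linarith
  rcases this with h | h | h
  · exact neg a ha _ _ _ hA h
  · exact neg b hb _ _ _ hB h
  · exact neg c hc _ _ _ hC h

lemma schur {x y z : ℝ} (hx : 0 < x) (hy : 0 < y) (hz : 0 < z) :
    (x * (y + z - x) + y * (z + x - y) + z * (x + y - z)) * (x + y + z) ≤ 9 * (x * y * z) ∧
    ((x * (y + z - x) + y * (z + x - y) + z * (x + y - z)) * (x + y + z) = 9 * (x * y * z) →
      x = y ∧ y = z) := by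
  have main : ∀ p q r : ℝ, 0 < r → r ≤ q → q ≤ p →
      (p * (q + r - p) + q * (r + p - q) + r * (p + q - r)) * (p + q + r) ≤ 9 * (p * q * r) ∧
      ((p * (q + r - p) + q * (r + p - q) + r * (p + q - r)) * (p + q + r) = 9 * (p * q * r) →
      p = q ∧ q = r) := by
    intro p q r hr h1 h2
    have id : 9 * (p * q * r) -
      (p * (q + r - p) + q * (r + p - q) + r * (p + q - r)) * (p + q + r)
        = (p - q) ^ 2 * (p + q - r) + r * (p - r) * (q - r) := by ring
    have t1 : 0 ≤ (p - q) ^ 2 * (p + q - r) := mul_nonneg (sq_nonneg _) (by linarith)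
    have t2 : 0 ≤ r * (p - r) * (q - r) :=
      mul_nonneg (mul_nonneg hr.le (by linarith)) (by linarith)
    refine ⟨by linarith, fun h => ?_⟩
    have z1 : (p - q) ^ 2 * (p + q - r) = 0 := by linarith
    have z2 : r * (p - r) * (q - r) = 0 := by linarith
    have e1 : p = q := by
      rcases mul_eq_zero.1 z1 with h | h
      · have := pow_eq_zero_iff (two_ne_zero) |>.1 h; linarith
      · linarith
    refine ⟨e1, ?_⟩
    subst e1
    rcases mul_eq_zero.1 z2 with h | h
    · rcases mul_eq_zero.1 h with h | h <;> linarith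
    · linarith
  rcases le_total x y with h1 | h1 <;> rcases le_total y z with h2 | h2 <;>
    rcases le_total x z with h3 | h3
  · obtain ⟨a, b⟩ := main z y x hx h1 h2
    exact ⟨by linarith, fun h => by have := b (by linarith); constructor <;> linarith [this.1, this.2]⟩
  · obtain ⟨a, b⟩ := main z y x hx h1 h2
    exact ⟨by linarith, fun h => by have := b (by linarith); constructor <;> linarith [this.1, this.2]⟩
  · obtain ⟨a, b⟩ := main y z x hx h3 h2
    exact ⟨by linarith, fun h => by have := b (by linarith); constructor <;> linarith [this.1, this.2]⟩
  · obtain ⟨a, b⟩ := main y x z hz h3 h1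
    exact ⟨by linarith, fun h => by have := b (by linarith); constructor <;> linarith [this.1, this.2]⟩
  · obtain ⟨a, b⟩ := main z x y hy h1 h3
    exact ⟨by linarith, fun h => by have := b (by linarith); constructor <;> linarith [this.1, this.2]⟩
  · obtain ⟨a, b⟩ := main x z y hy h2 h3
    exact ⟨by linarith, fun h => by have := b (by linarith); constructor <;> linarith [this.1, this.2]⟩
  · obtain ⟨a, b⟩ := main x y z hz h2 h1
    exact ⟨by linarith, fun h => by have := b (by linarith); constructor <;> linarith [this.1, this.2]⟩
  · obtain ⟨a, b⟩ := main x y z hz h2 h1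
    exact ⟨by linarith, fun h => by have := b (by linarith); constructor <;> linarith [this.1, this.2]⟩

/-- The area of a (possibly degenerate) centrally symmetric hexagon in the polar body is at most
`9 / (4 Δ)`, with equality only for affinely regular ones. -/
lemma critDet_hex_le {K : Set (Fin 2 → ℝ)} (hs : K = -K) (h0 : (0 : Fin 2 → ℝ) ∈ interior K)
    {a b c : Fin 2 → ℝ} (ha : a ∈ polarBody K) (hb : b ∈ polarBody K) (hc : c ∈ polarBody K) :
    critDet K * (cr a b + cr b c + cr a c) ≤ 9 / 4 ∧
    (critDet K * (cr a b + cr b c + cr a c) = 9 / 4 → cr a b = cr b c ∧ cr b c = cr a c) := by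
  have hΔ := critDet_nonneg K
  suffices H : critDet K * (cr a b + cr b c + cr a c) ≤ 2 ∨
      (critDet K * (cr a b + cr b c + cr a c) ≤ 9 / 4 ∧
    (critDet K * (cr a b + cr b c + cr a c) = 9 / 4 → cr a b = cr b c ∧ cr b c = cr a c)) by
    rcases H with H | H
    · exact ⟨by linarith, fun h => by linarith⟩
    · exact H
  have pair : ∀ p q r : Fin 2 → ℝ, p ∈ polarBody K → q ∈ polarBody K → r ∈ polarBody K →
      critDet K * (cr p r + cr q r) ≤ 2 := by
    intro p q r hp hq hr
    have hm : (1 / 2 : ℝ) • p + (1 / 2 : ℝ) • q ∈ polarBody K :=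
      polar_convex K hp hq (by norm_num) (by norm_num) (by norm_num)
    have := critDet_cr_le hs h0 hm hr
    simp only [cr, Pi.add_apply, Pi.smul_apply, smul_eq_mul] at *
    nlinarith
  have anti : ∀ p q, cr p (-q) = cr q p := by intro p q; simp [cr]; ring
  have anti2 : ∀ p q, cr (-p) q = cr q p := by intro p q; simp [cr]; ring
  rcases le_or_gt (cr a b) 0 with hα | hα
  · left
    have := pair a b c ha hb hc
    nlinarith
  rcases le_or_gt (cr b c) 0 with hβ | hβ
  · left
    have := pair b c (-a) hb hc (polar_neg hs ha)
    rw [anti, anti] at this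
    nlinarith
  rcases le_or_gt (cr a c) 0 with hγ | hγ
  · left
    have := pair a (-c) b ha (polar_neg hs hc) hb
    rw [anti2] at this
    nlinarith
  have hab := critDet_cr_le hs h0 ha hb
  have hbc := critDet_cr_le hs h0 hb hc
  have hac := critDet_cr_le hs h0 ha hc
  rcases le_or_gt (cr b c + cr a c - cr a b) 0 with h1 | h1
  · left; nlinarith
  rcases le_or_gt (cr a c + cr a b - cr b c) 0 with h2 | h2
  · left; nlinarith
  rcases le_or_gt (cr a b + cr b c - cr a c) 0 with h3 | h3
  · left; nlinarith
  right
  have H := critDet_hex hs h0 ha hb hc rfl rfl rfl hα hβ hγ h1 h2 h3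
  obtain ⟨S1, S2⟩ := schur hα hβ hγ
  set α := cr a b
  set β := cr b c
  set γ := cr a c
  set N := α * (β + γ - α) + β * (γ + α - β) + γ * (α + β - γ)
  have hP : 0 < α * β * γ := by positivity
  rw [le_div_iff₀ (by positivity)] at H
  have hsum : 0 < α + β + γ := by positivity
  have H2 : critDet K * (4 * (α * β * γ)) * (α + β + γ) ≤ N * (α + β + γ) :=
    mul_le_mul_of_nonneg_right H hsum.le
  refine ⟨?_, fun h => S2 (le_antisymm S1 ?_)⟩
  · have : critDet K * (α + β + γ) * (4 * (α * β * γ)) ≤ 9 / 4 * (4 * (α * β * γ)) := by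
      linarith
    exact le_of_mul_le_mul_right this (by positivity)
  · have : critDet K * (4 * (α * β * γ)) * (α + β + γ) = 9 / 4 * (4 * (α * β * γ)) := by
      rw [← h]; ring
    linarith

/-- The closed unit disc. -/
def disc : Set (Fin 2 → ℝ) := {x : Fin 2 → ℝ | x ⬝ᵥ x ≤ 1}

lemma disc_lattice (A : Matrix (Fin 2) (Fin 2) ℝ) (hA : A.det ≠ 0) {R : ℝ}
    (h : ∀ m n : ℤ, (m ≠ 0 ∨ n ≠ 0) →
      R ≤ (A 0 0 * m + A 0 1 * n) ^ 2 + (A 1 0 * m + A 1 1 * n) ^ 2) :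
    Real.sqrt 3 / 2 * R ≤ |A.det| := by
  rw [Matrix.det_fin_two] at *
  set p := A 0 0
  set q := A 1 0
  set r := A 0 1
  set s := A 1 1
  set N := p ^ 2 + q ^ 2 with hN
  have hNpos : 0 < N := by
    by_contra hc
    have hp : p = 0 := by nlinarith [sq_nonneg p, sq_nonneg q]
    have hq : q = 0 := by nlinarith [sq_nonneg p, sq_nonneg q]
    apply hA; rw [hp, hq]; ring
  have hd : 0 < |p * s - r * q| := abs_pos.2 hA
  have hd2 : |p * s - r * q| ^ 2 = (p * s - r * q) ^ 2 := sq_abs _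
  set d := |p * s - r * q|
  let z : UpperHalfPlane := ⟨⟨(p * r + q * s) / N, d / N⟩, by positivity⟩
  obtain ⟨g, hg⟩ := ModularGroup.exists_smul_mem_fd z
  have h3 := ModularGroup.three_le_four_mul_im_sq_of_mem_fd hg
  have him := ModularGroup.im_smul_eq_div_normSq g z
  rw [ModularGroup.denom_apply] at him
  have hne : g 1 1 ≠ 0 ∨ g 1 0 ≠ 0 := by
    by_contra hc
    push Not at hc
    have := g.det_coe
    rw [Matrix.det_fin_two] at this
    rw [hc.1, hc.2] at this
    simp at this
  have hbig := h _ _ hne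
  set c := g 1 0
  set e := g 1 1
  have hz : Complex.normSq ((c : ℂ) * (z : ℂ) + (e : ℂ))
      = ((p * e + r * c) ^ 2 + (q * e + s * c) ^ 2) / N := by
    have : (z : ℂ) = ⟨(p * r + q * s) / N, d / N⟩ := rfl
    rw [this, Complex.normSq_apply]
    simp
    field_simp
    rw [hd2, hN]
    ring
  have hzi : z.im = d / N := rfl
  rw [hz, hzi] at him
  set V := (p * e + r * c) ^ 2 + (q * e + s * c) ^ 2
  have hVne : V ≠ 0 := by
    intro hV
    rw [hV, zero_div, div_zero] at him
    rw [him] at h3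
    norm_num at h3
  have hVpos : 0 < V := lt_of_le_of_ne (by positivity) hVne.symm
  have him2 : (g • z).im = d / V := by rw [him]; field_simp
  rw [him2, div_pow] at h3
  have h4 : 3 * V ^ 2 ≤ 4 * d ^ 2 := by
    have : 0 < V ^ 2 := by positivity
    rw [← mul_div_assoc, le_div_iff₀ this] at h3
    exact h3
  have h5 : (Real.sqrt 3 / 2 * V) ≤ d := by
    apply le_of_sq_le_sq _ hd.le
    rw [mul_pow, div_pow, Real.sq_sqrt (by norm_num)]
    linarith
  have : Real.sqrt 3 / 2 * R ≤ Real.sqrt 3 / 2 * V := by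
    apply mul_le_mul_of_nonneg_left hbig (by positivity)
  linarith

lemma critDet_ge {K : Set (Fin 2 → ℝ)} (hne : (critSet K).Nonempty)
    (N : Matrix (Fin 2) (Fin 2) ℝ) (hN : N.det ≠ 0)
    (h : ∀ x : Fin 2 → ℝ, (N *ᵥ x) ⬝ᵥ (N *ᵥ x) < 1 → x ∈ K) :
    Real.sqrt 3 / 2 / |N.det| ≤ critDet K := by
  apply le_csInf hne
  rintro d ⟨A, hA, hadm, rfl⟩
  rw [div_le_iff₀ (abs_pos.2 hN), ← abs_mul, ← Matrix.det_mul, Matrix.det_mul_comm, ← mul_one (Real.sqrt 3 / 2)]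
  apply disc_lattice _ (by rw [Matrix.det_mul]; exact mul_ne_zero hN hA)
  intro m n hmn
  by_contra hlt
  push Not at hlt
  set x : Fin 2 → ℝ := A *ᵥ (fun i => ((![m, n] : Fin 2 → ℤ) i : ℝ)) with hx
  have e0 : x 0 = A 0 0 * m + A 0 1 * n := by rw [hx, mulVec2]; simp
  have e1 : x 1 = A 1 0 * m + A 1 1 * n := by rw [hx, mulVec2]; simp
  have hopen : IsOpen {x : Fin 2 → ℝ | (N *ᵥ x) ⬝ᵥ (N *ᵥ x) < 1} := by
    apply isOpen_lt _ continuous_const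
    simp only [dot2, mulVec2]
    fun_prop
  have hxi : x ∈ interior K := by
    apply interior_maximal (s := K) (t := {x : Fin 2 → ℝ | (N *ᵥ x) ⬝ᵥ (N *ᵥ x) < 1}) h hopen
    simp only [mem_ofPred_eq, dot2, mulVec2, e0, e1]
    simp only [Matrix.mul_apply, Fin.sum_univ_two] at hlt
    nlinarith
  have hx0 : x ∈ ({0} : Set (Fin 2 → ℝ)) := by
    rw [← hadm]; exact ⟨⟨_, rfl⟩, hxi⟩
  rw [mem_singleton_iff] at hx0
  rw [hx0] at e0 e1
  simp at e0 e1
  rw [Matrix.det_fin_two] at hA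
  have k1 : (A 0 0 * A 1 1 - A 0 1 * A 1 0) * m = 0 := by linear_combination -A 1 1 * e0 + A 0 1 * e1
  have k2 : (A 0 0 * A 1 1 - A 0 1 * A 1 0) * n = 0 := by linear_combination A 1 0 * e0 - A 0 0 * e1
  have m0 : (m : ℝ) = 0 := by simpa [hA] using k1
  have n0 : (n : ℝ) = 0 := by simpa [hA] using k2
  rcases hmn with h | h
  · exact h (by exact_mod_cast m0)
  · exact h (by exact_mod_cast n0)

lemma volume_disc : volume disc = ENNReal.ofReal Real.pi := by
  have h := PiLp.volume_preserving_ofLp (Fin 2)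
  have hm : MeasurableSet disc := by
    apply IsClosed.measurableSet
    apply isClosed_le _ continuous_const
    simp only [dot2]
    fun_prop
  rw [← h.measure_preimage hm.nullMeasurableSet]
  have : (WithLp.ofLp ⁻¹' disc : Set (EuclideanSpace ℝ (Fin 2))) = Metric.closedBall 0 1 := by
    ext x
    simp only [disc, mem_preimage, mem_ofPred_eq, dot2, Metric.mem_closedBall, dist_zero_right]
    rw [EuclideanSpace.norm_eq, Real.sqrt_le_iff, Fin.sum_univ_two]
    simp [sq]
  rw [this]
  have := EuclideanSpace.volume_closedBall_fin_two 0 1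
  rw [this]
  simp

lemma volume_ellipse (A : Matrix (Fin 2) (Fin 2) ℝ) :
    (volume ((A *ᵥ ·) '' disc)).toReal = |A.det| * Real.pi := by
  have : (A *ᵥ ·) = (Matrix.toLin' A : (Fin 2 → ℝ) → (Fin 2 → ℝ)) := by ext; simp
  rw [this, Measure.addHaar_image_linearMap, volume_disc, LinearMap.det_toLin',
    ENNReal.toReal_mul, ENNReal.toReal_ofReal (abs_nonneg _), ENNReal.toReal_ofReal Real.pi_pos.le]

lemma mem_ellipse {A : Matrix (Fin 2) (Fin 2) ℝ} (hA : A.det ≠ 0) (x : Fin 2 → ℝ) :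
    x ∈ (A *ᵥ ·) '' disc ↔ (A⁻¹ *ᵥ x) ⬝ᵥ (A⁻¹ *ᵥ x) ≤ 1 := by
  have hu : IsUnit A.det := isUnit_iff_ne_zero.2 hA
  constructor
  · rintro ⟨y, hy, rfl⟩
    simp only [Matrix.mulVec_mulVec, Matrix.nonsing_inv_mul _ hu, Matrix.one_mulVec]
    exact hy
  · intro h
    refine ⟨A⁻¹ *ᵥ x, h, ?_⟩
    simp only [Matrix.mulVec_mulVec, Matrix.mul_nonsing_inv _ hu, Matrix.one_mulVec]

lemma polar_ellipse {A : Matrix (Fin 2) (Fin 2) ℝ} (hA : A.det ≠ 0) :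
    polarBody ((A *ᵥ ·) '' disc) = (Aᵀ⁻¹ *ᵥ ·) '' disc := by
  have hu : IsUnit Aᵀ.det := isUnit_iff_ne_zero.2 (by rwa [Matrix.det_transpose])
  ext x
  rw [mem_ellipse (by
    rw [Matrix.det_nonsing_inv]; simpa using hA), Matrix.nonsing_inv_nonsing_inv _ hu]
  have hdot : ∀ z, (A *ᵥ z) ⬝ᵥ x = z ⬝ᵥ (Aᵀ *ᵥ x) := by
    intro z
    simp only [dot2, mulVec2, Matrix.transpose_apply]; ring
  set w := Aᵀ *ᵥ x
  constructor
  · intro h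
    rw [dot2]
    by_contra hc
    push Not at hc
    set L := w 0 * w 0 + w 1 * w 1
    have hs : 0 < Real.sqrt L := Real.sqrt_pos.2 (by linarith)
    have hs2 : Real.sqrt L * Real.sqrt L = L := Real.mul_self_sqrt (by linarith)
    have hz : (Real.sqrt L)⁻¹ • w ∈ disc := by
      simp only [disc, mem_ofPred_eq, dot2, Pi.smul_apply, smul_eq_mul]
      have : (Real.sqrt L)⁻¹ * w 0 * ((Real.sqrt L)⁻¹ * w 0)
        + (Real.sqrt L)⁻¹ * w 1 * ((Real.sqrt L)⁻¹ * w 1) = L / (Real.sqrt L * Real.sqrt L) := by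
        field_simp
        simp only [L]; ring
      rw [this, hs2]
      exact div_self_le_one L
    have h1 := h _ ⟨_, hz, rfl⟩
    simp only [hdot] at h1
    rw [smul_dotProduct, dot2, smul_eq_mul] at h1
    change (Real.sqrt L)⁻¹ * L ≤ 1 at h1
    rw [inv_mul_le_iff₀ hs] at h1
    nlinarith
  · rintro h _ ⟨z, hz, rfl⟩
    simp only [hdot]
    simp only [disc, mem_ofPred_eq] at hz
    rw [dot2] at *
    nlinarith [sq_nonneg (z 0 - w 0), sq_nonneg (z 1 - w 1)]

lemma bipolar {K : Set (Fin 2 → ℝ)} (hc : IsClosed K) (hconv : Convex ℝ K)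
    (h0 : (0 : Fin 2 → ℝ) ∈ K) : polarBody (polarBody K) = K := by
  ext x
  constructor
  · intro hx
    by_contra hxK
    obtain ⟨f, u, hf, hu⟩ := geometric_hahn_banach_closed_point hconv hc hxK
    have hu0 : 0 < u := by simpa using hf 0 h0
    have hfe : ∀ y : Fin 2 → ℝ, f y = y 0 * f ![1, 0] + y 1 * f ![0, 1] := by
      intro y
      have : y = y 0 • ![1, 0] + y 1 • ![0, 1] := by
        ext i; fin_cases i <;> simp
      conv_lhs => rw [this]
      rw [map_add, map_smul, map_smul]
      simp
    have hw : (![f ![1, 0] / u, f ![0, 1] / u] : Fin 2 → ℝ) ∈ polarBody K := by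
      intro y hy
      have := hf y hy
      rw [hfe] at this
      rw [dot2]
      simp only [Matrix.cons_val_zero, Matrix.cons_val_one]
      rw [← mul_div_assoc, ← mul_div_assoc, ← add_div, div_le_one hu0]
      exact this.le
    have := hx _ hw
    rw [dot2] at this
    simp only [Matrix.cons_val_zero, Matrix.cons_val_one] at this
    rw [div_mul_eq_mul_div, div_mul_eq_mul_div, ← add_div, div_le_one hu0] at this
    rw [hfe] at hu
    linarith
  · intro hx y hy
    rw [dotProduct_comm]
    exact hy x hx

lemma ode_lemma {f : ℝ → ℝ} {M : ℝ} (hf : ContinuousOn f (Ioo 0 1))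
    (h : ∀ x ∈ Ioo (0 : ℝ) 1, x ≠ 1 / 2 → ∃ D : ℝ,
      (∀ t ∈ Ioo (0 : ℝ) 1, f t * Real.sqrt (1 - x ^ 2) + t * D ≤ M) ∧
      f x * Real.sqrt (1 - x ^ 2) + x * D = M) :
    ∃ C : ℝ, ∀ x ∈ Ioo (0 : ℝ) 1, f x = M * Real.sqrt (1 - x ^ 2) + C * x := by
  have hw : ∀ x ∈ Ioo (0 : ℝ) 1, 0 < 1 - x ^ 2 := by
    rintro x ⟨h0, h1⟩; nlinarith
  have hφc : ∀ x ∈ Ioo (0 : ℝ) 1, ContinuousAt (fun y : ℝ => M / Real.sqrt (1 - y ^ 2)) x := by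
    intro x hx
    apply ContinuousAt.div continuousAt_const
    · exact (Real.continuous_sqrt.continuousAt).comp (by fun_prop)
    · exact (Real.sqrt_pos.2 (hw x hx)).ne'
  have hfc : ∀ x ∈ Ioo (0 : ℝ) 1, ContinuousAt f x := fun x hx =>
    hf.continuousAt (isOpen_Ioo.mem_nhds hx)
  have step0 : ∀ t ∈ Ioo (0 : ℝ) 1, ∀ x ∈ Ioo (0 : ℝ) 1, x ≠ 1 / 2 →
      f t / t - f x / x ≤ M / Real.sqrt (1 - x ^ 2) * (1 / t - 1 / x) := by
    intro t ht x hx hx2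
    obtain ⟨D, h1, h2⟩ := h x hx hx2
    have h3 := h1 t ht
    have hs := Real.sqrt_pos.2 (hw x hx)
    set w := Real.sqrt (1 - x ^ 2)
    have hx0 := hx.1
    have ht0 := ht.1
    have e : M / w * (1 / t - 1 / x) - (f t / t - f x / x)
        = (M - (f t * w + t * D)) / (t * w) + (f x * w + x * D - M) / (x * w) := by
      field_simp
      ring
    have : 0 ≤ (M - (f t * w + t * D)) / (t * w) := div_nonneg (by linarith) (by positivity)
    rw [h2, sub_self, zero_div, add_zero] at e
    linarith
  have step1 : ∀ t ∈ Ioo (0 : ℝ) 1, ∀ x ∈ Ioo (0 : ℝ) 1,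
      f t / t - f x / x ≤ M / Real.sqrt (1 - x ^ 2) * (1 / t - 1 / x) := by
    intro t ht x hx
    by_cases hx2 : x = 1 / 2
    · have c1 : ContinuousAt (fun x => f t / t - f x / x) x :=
        continuousAt_const.sub ((hfc x hx).div continuousAt_id hx.1.ne')
      have c2 : ContinuousAt (fun x => M / Real.sqrt (1 - x ^ 2) * (1 / t - 1 / x)) x :=
        (hφc x hx).mul (continuousAt_const.sub (continuousAt_const.div continuousAt_id hx.1.ne'))
      apply le_of_tendsto_of_tendsto (b := nhdsWithin x {x}ᶜ)
        (c1.tendsto.mono_left nhdsWithin_le_nhds) (c2.tendsto.mono_left nhdsWithin_le_nhds)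
      have e1 : ∀ᶠ y in nhdsWithin x {x}ᶜ, y ∈ Ioo (0 : ℝ) 1 :=
        nhdsWithin_le_nhds (isOpen_Ioo.mem_nhds hx)
      filter_upwards [e1, self_mem_nhdsWithin] with y hy hy2
      apply step0 t ht y hy
      rw [← hx2]; exact hy2
    · exact step0 t ht x hx hx2
  have hη : ∀ x ∈ Ioo (0 : ℝ) 1, HasDerivAt (fun y : ℝ => 1 / y) (-(x ^ 2)⁻¹) x := by
    intro x hx
    simpa using hasDerivAt_inv hx.1.ne'
  have step2 : ∀ x ∈ Ioo (0 : ℝ) 1,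
      HasDerivAt (fun y => f y / y) (M / Real.sqrt (1 - x ^ 2) * (-(x ^ 2)⁻¹)) x := by
    intro x hx
    set φ : ℝ → ℝ := fun y : ℝ => M / Real.sqrt (1 - y ^ 2) with hφ
    have hr : HasDerivAt (fun y => f y / y - φ x * (1 / y)) 0 x := by
      rw [hasDerivAt_iff_isLittleO]
      have o1 : (fun t => φ t - φ x) =o[nhds x] (fun _ => (1 : ℝ)) := by
        rw [Asymptotics.isLittleO_one_iff]
        have := (hφc x hx).tendsto.sub_const (φ x)
        simpa using this
      have o2 : (fun t : ℝ => 1 / t - 1 / x) =O[nhds x] (fun t => t - x) := (hη x hx).isBigO_sub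
      have o3 := o1.mul_isBigO o2
      simp only [one_mul] at o3
      refine Asymptotics.IsBigO.trans_isLittleO ?_ o3
      apply Asymptotics.IsBigO.of_bound 1
      filter_upwards [isOpen_Ioo.mem_nhds hx] with t ht
      have a1 := step1 t ht x hx
      have a2 := step1 x hx t ht
      change _ ≤ φ x * _ at a1
      change _ ≤ φ t * _ at a2
      simp only [smul_zero, sub_zero, one_mul, Real.norm_eq_abs]
      rw [abs_le]
      have := neg_abs_le ((φ t - φ x) * (1 / t - 1 / x))
      have := le_abs_self ((φ t - φ x) * (1 / t - 1 / x))
      constructor <;> nlinarith [abs_nonneg ((φ t - φ x) * (1 / t - 1 / x))]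
    have := hr.add ((hη x hx).const_mul (φ x))
    convert! this using 1
    · ext y; simp
    · simp [hφ]
  have step3 : ∀ x ∈ Ioo (0 : ℝ) 1,
      HasDerivAt (fun y => f y / y - M * (Real.sqrt (1 - y ^ 2) / y)) 0 x := by
    intro x hx
    have hs := Real.sqrt_pos.2 (hw x hx)
    have hs2 := Real.sq_sqrt (hw x hx).le
    have d1 : HasDerivAt (fun y : ℝ => 1 - y ^ 2) (-(2 * x)) x := by
      simpa using ((hasDerivAt_pow 2 x).const_sub 1)
    have d2 := (d1.sqrt (hw x hx).ne').div (hasDerivAt_id x) hx.1.ne'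
    have d3 := (step2 x hx).sub (d2.const_mul M)
    convert! d3 using 1
    have hx0 := hx.1.ne'
    simp only [id]
    field_simp
    rw [hs2]; ring
  have hconst := isOpen_Ioo.exists_is_const_of_deriv_eq_zero (𝕜 := ℝ) (s := Ioo (0 : ℝ) 1)
    (f := fun y => f y / y - M * (Real.sqrt (1 - y ^ 2) / y)) isPreconnected_Ioo
    (fun x hx => (step3 x hx).differentiableAt.differentiableWithinAt)
    (fun x hx => (step3 x hx).deriv)
  obtain ⟨C, hC⟩ := hconst
  refine ⟨C, fun x hx => ?_⟩
  have := hC x hx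
  have hx0 := hx.1.ne'

  field_simp at this
  linarith

/-- `m` and `F` describe the width and the upper boundary of `C`. -/
structure Upper (C : Set (Fin 2 → ℝ)) (m : ℝ) (F : ℝ → ℝ) : Prop where
  pos : 0 < m
  mem : ∀ t ∈ Icc (-1 : ℝ) 1, ![m * t, F t] ∈ C
  le : ∀ p ∈ C, p 0 / m ∈ Icc (-1 : ℝ) 1 ∧ p 1 ≤ F (p 0 / m)

lemma exists_upper {C : Set (Fin 2 → ℝ)} (hc : IsCompact C) (hconv : Convex ℝ C)
    (hneg : ∀ p ∈ C, -p ∈ C) (hpos : ∃ p ∈ C, 0 < p 0) : ∃ m F, Upper C m F := by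
  obtain ⟨p₀, hp₀, hp0⟩ := hpos
  obtain ⟨q, hq, hmax⟩ := hc.exists_isMaxOn ⟨p₀, hp₀⟩ (f := fun p : Fin 2 → ℝ => p 0)
    (by fun_prop)
  have hm : 0 < q 0 := lt_of_lt_of_le hp0 (hmax hp₀)
  have hex : ∀ t : ℝ, ∃ y : ℝ, t ∈ Icc (-1 : ℝ) 1 → (![q 0 * t, y] ∈ C ∧
      ∀ z : ℝ, ![q 0 * t, z] ∈ C → z ≤ y) := by
    intro t
    by_cases ht : t ∈ Icc (-1 : ℝ) 1
    · have hne : (C ∩ {p : Fin 2 → ℝ | p 0 = q 0 * t}).Nonempty := by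
        refine ⟨((1 + t) / 2) • q + ((1 - t) / 2) • (-q),
          hconv hq (hneg q hq) (by linarith [ht.1]) (by linarith [ht.2]) (by ring), ?_⟩
        simp
        ring
      have hcl : IsClosed {p : Fin 2 → ℝ | p 0 = q 0 * t} :=
        isClosed_eq (by fun_prop) continuous_const
      obtain ⟨r, hr, hrmax⟩ := (hc.inter_right hcl).exists_isMaxOn hne
        (f := fun p : Fin 2 → ℝ => p 1) (by fun_prop)
      refine ⟨r 1, fun _ => ⟨?_, ?_⟩⟩
      · have : ![q 0 * t, r 1] = r := by
          ext i; fin_cases i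
          · simpa using hr.2.symm
          · simp
        rw [this]; exact hr.1
      · intro z hz
        have := hrmax (show ![q 0 * t, z] ∈ C ∩ {p : Fin 2 → ℝ | p 0 = q 0 * t} from ⟨hz, by simp⟩)
        simpa using this
    · exact ⟨0, fun h => absurd h ht⟩
  choose F hF using hex
  refine ⟨q 0, F, hm, fun t ht => (hF t ht).1, ?_⟩
  intro p hp
  have h1 : p 0 ≤ q 0 := hmax hp
  have h2 : -(p 0) ≤ q 0 := by simpa using hmax (hneg p hp)
  have hI : p 0 / q 0 ∈ Icc (-1 : ℝ) 1 := by
    constructor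
    · rw [le_div_iff₀ hm]; linarith
    · rw [div_le_one hm]; exact h1
  refine ⟨hI, (hF _ hI).2 _ ?_⟩
  have : ![q 0 * (p 0 / q 0), p 1] = p := by
    ext i; fin_cases i
    · simp; field_simp
    · simp
  rw [this]; exact hp

namespace Upper


variable {C : Set (Fin 2 → ℝ)} {m : ℝ} {F : ℝ → ℝ}

lemma le' (h : Upper C m F) {t y : ℝ} (hp : ![m * t, y] ∈ C) : y ≤ F t := by
  have := (h.le _ hp).2
  have hm := h.pos.ne'
  have e : m * t / m = t := by field_simp
  simpa [e] using this

lemma concave (h : Upper C m F) (hconv : Convex ℝ C) : ConcaveOn ℝ (Icc (-1) 1) F := by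
  refine ⟨convex_Icc _ _, ?_⟩
  intro x hx y hy a b ha hb hab
  apply h.le'
  have := hconv (h.mem x hx) (h.mem y hy) ha hb hab
  convert this using 1
  ext i; fin_cases i
  · simp; ring
  · simp

lemma cont (h : Upper C m F) (hconv : Convex ℝ C) : ContinuousOn F (Ioo (-1) 1) := by
  have := (h.concave hconv).continuousOn_interior
  rwa [interior_Icc] at this

lemma bdd (h : Upper C m F) (hc : IsCompact C) : ∃ R : ℝ, ∀ t ∈ Icc (-1 : ℝ) 1, |F t| ≤ R := by
  obtain ⟨R, hR⟩ := hc.isBounded.exists_norm_le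
  refine ⟨R, fun t ht => ?_⟩
  have h1 := hR _ (h.mem t ht)
  have h2 := norm_le_pi_norm (![m * t, F t]) 1
  simp only [Matrix.cons_val_one, Real.norm_eq_abs] at h2
  exact h2.trans h1

lemma integrable (h : Upper C m F) (hc : IsCompact C) (hconv : Convex ℝ C) :
    IntegrableOn F (Icc (-1) 1) := by
  rw [integrableOn_Icc_iff_integrableOn_Ioo]
  obtain ⟨R, hR⟩ := h.bdd hc
  apply IntegrableOn.of_bound (by simp)
    ((h.cont hconv).aestronglyMeasurable measurableSet_Ioo) R
  rw [ae_restrict_iff' measurableSet_Ioo]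
  exact Filter.Eventually.of_forall fun t ht => hR t (Ioo_subset_Icc_self ht)

lemma gcont (h : Upper C m F) (hconv : Convex ℝ C) :
    ContinuousOn (fun θ => F (Real.cos θ) * Real.sin θ) (Ioo 0 Real.pi) := by
  apply ContinuousOn.mul _ Real.continuous_sin.continuousOn
  apply (h.cont hconv).comp Real.continuous_cos.continuousOn
  intro θ hθ
  constructor
  · rw [← Real.cos_pi]
    exact Real.cos_lt_cos_of_nonneg_of_le_pi hθ.1.le le_rfl hθ.2
  · rw [← Real.cos_zero]
    exact Real.cos_lt_cos_of_nonneg_of_le_pi le_rfl hθ.2.le hθ.1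

lemma gint (h : Upper C m F) (hc : IsCompact C) (hconv : Convex ℝ C) :
    IntegrableOn (fun θ => F (Real.cos θ) * Real.sin θ) (Icc 0 Real.pi) := by
  rw [integrableOn_Icc_iff_integrableOn_Ioo]
  obtain ⟨R, hR⟩ := h.bdd hc
  apply IntegrableOn.of_bound (by simp)
    ((h.gcont hconv).aestronglyMeasurable measurableSet_Ioo) R
  apply Filter.Eventually.of_forall
  intro θ
  rw [Real.norm_eq_abs, abs_mul]
  have h1 := hR (Real.cos θ) ⟨Real.neg_one_le_cos θ, Real.cos_le_one θ⟩
  have h2 := Real.abs_sin_le_one θ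
  nlinarith [abs_nonneg (F (Real.cos θ)), abs_nonneg (Real.sin θ)]

lemma integral_eq (h : Upper C m F) (hc : IsCompact C) (hconv : Convex ℝ C) :
    ∫ t in (-1 : ℝ)..1, F t = ∫ θ in (0 : ℝ)..Real.pi, F (Real.cos θ) * Real.sin θ := by
  have himg : Real.cos '' (Set.uIcc 0 Real.pi) ⊆ Icc (-1) 1 := by
    rintro _ ⟨θ, -, rfl⟩
    exact ⟨Real.neg_one_le_cos θ, Real.cos_le_one θ⟩
  have := intervalIntegral.integral_comp_mul_deriv''' (a := 0) (b := Real.pi) (f := Real.cos)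
    (f' := fun θ => -Real.sin θ) (g := F) Real.continuous_cos.continuousOn
    (fun x _ => (Real.hasDerivAt_cos x).hasDerivWithinAt)
    (by
      apply (h.cont hconv).mono
      rintro _ ⟨θ, hθ, rfl⟩
      rw [min_eq_left Real.pi_pos.le, max_eq_right Real.pi_pos.le] at hθ
      constructor
      · rw [← Real.cos_pi]
        exact Real.cos_lt_cos_of_nonneg_of_le_pi hθ.1.le le_rfl hθ.2
      · rw [← Real.cos_zero]
        exact Real.cos_lt_cos_of_nonneg_of_le_pi le_rfl hθ.2.le hθ.1)
    ((h.integrable hc hconv).mono_set himg)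
    (by
      rw [uIcc_of_le Real.pi_pos.le]
      have := (h.gint hc hconv).neg
      refine this.congr (Filter.Eventually.of_forall fun θ => ?_)
      simp)
  rw [Real.cos_zero, Real.cos_pi] at this
  rw [intervalIntegral.integral_symm, ← this, ← intervalIntegral.integral_neg]
  simp

/-- The sum of the three heights weighted by sines; up to a factor the area of a hexagon. -/
def G (F : ℝ → ℝ) (θ : ℝ) : ℝ :=
  F (Real.cos θ) * Real.sin θ + F (Real.cos (θ + Real.pi / 3)) * Real.sin (θ + Real.pi / 3)
    + F (Real.cos (θ + 2 * (Real.pi / 3))) * Real.sin (θ + 2 * (Real.pi / 3))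

lemma Gint (h : Upper C m F) (hc : IsCompact C) (hconv : Convex ℝ C) :
    IntervalIntegrable (G F) volume 0 (Real.pi / 3) ∧
    ∫ t in (-1 : ℝ)..1, F t = ∫ θ in (0 : ℝ)..(Real.pi / 3), G F θ := by
  rw [h.integral_eq hc hconv]
  have hpi := Real.pi_pos
  set g : ℝ → ℝ := fun θ => F (Real.cos θ) * Real.sin θ with hg
  have hIntg : IntervalIntegrable g volume 0 Real.pi := by
    rw [intervalIntegrable_iff_integrableOn_Icc_of_le hpi.le]
    exact h.gint hc hconv
  have sub : ∀ a b : ℝ, 0 ≤ a → a ≤ b → b ≤ Real.pi → IntervalIntegrable g volume a b := by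
    intro a b h0 h1 h2
    apply hIntg.mono_set
    rw [uIcc_of_le h1, uIcc_of_le hpi.le]
    exact Icc_subset_Icc h0 h2
  have i1 := sub 0 (Real.pi / 3) le_rfl (by linarith) (by linarith)
  have i2 := sub (Real.pi / 3) (2 * (Real.pi / 3)) (by linarith) (by linarith) (by linarith)
  have i3 := sub (2 * (Real.pi / 3)) Real.pi (by linarith) (by linarith) (by linarith)
  have j2 : IntervalIntegrable (fun θ => g (θ + Real.pi / 3)) volume 0 (Real.pi / 3) := by
    have := i2.comp_add_right (Real.pi / 3)
    convert this using 1 <;> ring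
  have j3 : IntervalIntegrable (fun θ => g (θ + 2 * (Real.pi / 3))) volume 0 (Real.pi / 3) := by
    have := i3.comp_add_right (2 * (Real.pi / 3))
    convert this using 1 <;> ring
  have eG : G F = fun θ => g θ + g (θ + Real.pi / 3) + g (θ + 2 * (Real.pi / 3)) := by
    ext θ; simp [G, hg]
  rw [eG]
  refine ⟨(i1.add j2).add j3, ?_⟩
  rw [intervalIntegral.integral_add (i1.add j2) j3, intervalIntegral.integral_add i1 j2,
    intervalIntegral.integral_comp_add_right g, intervalIntegral.integral_comp_add_right g,
    ← intervalIntegral.integral_add_adjacent_intervals (i1.trans i2) i3,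
    ← intervalIntegral.integral_add_adjacent_intervals i1 i2]
  congr 2
  · congr 1 <;> ring
  · ring
  · ring

lemma vol_le (h : Upper C m F) (hc : IsCompact C) (hconv : Convex ℝ C)
    (hneg : ∀ p ∈ C, -p ∈ C) :
    (volume C).toReal ≤ 2 * m * ∫ t in (-1 : ℝ)..1, F t := by
  have hm := h.pos
  have hI := h.integrable hc hconv
  have hI' : IntervalIntegrable F volume (-1) 1 := by
    rwa [intervalIntegrable_iff_integrableOn_Icc_of_le (by norm_num)]
  have hIn : IntervalIntegrable (fun t => F (-t)) volume (-1) 1 := by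
    have := hI'.comp_sub_left 0
    simpa using this.symm
  set W : ℝ → ℝ := fun x => F (x / m) + F (-(x / m)) with hW
  have hWint : IntervalIntegrable W volume (-m) m := by
    have := (hI'.add hIn).comp_mul_left (c := m⁻¹)
    have e : W = fun x => F (m⁻¹ * x) + F (-(m⁻¹ * x)) := by
      ext x; simp only [hW]; rw [div_eq_inv_mul]
    rw [e]
    convert this using 1 <;> field_simp
  have hWval : ∫ x in (-m)..m, W x = 2 * m * ∫ t in (-1 : ℝ)..1, F t := by
    have := intervalIntegral.integral_comp_div (a := -m) (b := m)
      (fun t => F t + F (-t)) hm.ne'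
    simp only [hW]
    rw [this, neg_div, div_self hm.ne', intervalIntegral.integral_add hI' hIn,
      intervalIntegral.integral_comp_neg]
    simp; ring
  have hslice : ∀ x y : ℝ, ![x, y] ∈ C → x ∈ Icc (-m) m ∧ y ∈ Icc (-F (-(x / m))) (F (x / m)) := by
    intro x y hxy
    obtain ⟨h1, h2⟩ := h.le _ hxy
    obtain ⟨-, h3⟩ := h.le _ (hneg _ hxy)
    simp only [Matrix.cons_val_zero, Matrix.cons_val_one, Pi.neg_apply, mem_Icc, neg_div] at *
    rw [le_div_iff₀ hm, div_le_iff₀ hm] at h1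
    exact ⟨⟨by linarith, by linarith⟩, by linarith, h2⟩
  have hWnn : ∀ x ∈ Icc (-m) m, 0 ≤ W x := by
    intro x hx
    have hx' : x / m ∈ Icc (-1 : ℝ) 1 := by
      constructor
      · rw [le_div_iff₀ hm]; linarith [hx.1]
      · rw [div_le_iff₀ hm]; linarith [hx.2]
    have h1 := h.mem _ hx'
    have h2 := (hslice _ _ h1).2
    have e : m * (x / m) / m = x / m := by field_simp
    rw [e] at h2
    simp only [hW]; linarith [h2.1]
  have hmp := volume_preserving_finTwoArrow ℝ
  have hCm : MeasurableSet C := hc.isClosed.measurableSet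
  have hvol : volume C ≤ ENNReal.ofReal (∫ x in (-m)..m, W x) := by
    have e1 : volume C = volume ((MeasurableEquiv.finTwoArrow (α := ℝ)).symm ⁻¹' C) :=
      (hmp.symm.measure_preimage hCm.nullMeasurableSet).symm
    have hm2 : MeasurableSet ((MeasurableEquiv.finTwoArrow (α := ℝ)).symm ⁻¹' C) :=
      (MeasurableEquiv.measurable _) hCm
    rw [e1, Measure.volume_eq_prod, Measure.prod_apply hm2,
      intervalIntegral.integral_of_le (by linarith), ← integral_Icc_eq_integral_Ioc,
      ofReal_integral_eq_lintegral_ofReal, ← lintegral_indicator measurableSet_Icc]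
    · apply lintegral_mono
      intro x
      by_cases hx : x ∈ Icc (-m) m
      · rw [indicator_of_mem hx]
        have : Prod.mk x ⁻¹' ((MeasurableEquiv.finTwoArrow (α := ℝ)).symm ⁻¹' C)
            ⊆ Icc (-F (-(x / m))) (F (x / m)) := by
          intro y hy
          exact (hslice x y hy).2
        refine (measure_mono this).trans ?_
        rw [Real.volume_Icc]
        simp only [hW]
        apply ENNReal.ofReal_le_ofReal
        linarith
      · have : Prod.mk x ⁻¹' ((MeasurableEquiv.finTwoArrow (α := ℝ)).symm ⁻¹' C) = ∅ := by
          ext y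
          simp only [mem_empty_iff_false, iff_false]
          intro hy
          exact hx (hslice x y hy).1
        simp only [this]
        simp
    · have := (intervalIntegrable_iff_integrableOn_Icc_of_le (by linarith)).1 hWint
      exact this
    · rw [Filter.EventuallyLE, ae_restrict_iff' measurableSet_Icc]
      exact Filter.Eventually.of_forall hWnn
  rw [← hWval]
  apply ENNReal.toReal_le_of_le_ofReal _ hvol
  apply intervalIntegral.integral_nonneg (by linarith) hWnn

lemma trig (θ : ℝ) :
    Real.cos (θ + Real.pi / 3) = Real.cos θ / 2 - Real.sqrt 3 / 2 * Real.sin θ ∧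
    Real.sin (θ + Real.pi / 3) = Real.sin θ / 2 + Real.sqrt 3 / 2 * Real.cos θ ∧
    Real.cos (θ + 2 * (Real.pi / 3)) = -(Real.cos θ / 2) - Real.sqrt 3 / 2 * Real.sin θ ∧
    Real.sin (θ + 2 * (Real.pi / 3)) = -(Real.sin θ / 2) + Real.sqrt 3 / 2 * Real.cos θ := by
  have h2c : Real.cos (2 * (Real.pi / 3)) = -(1 / 2) := by
    rw [Real.cos_two_mul, Real.cos_pi_div_three]; norm_num
  have h2s : Real.sin (2 * (Real.pi / 3)) = Real.sqrt 3 / 2 := by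
    rw [Real.sin_two_mul, Real.cos_pi_div_three, Real.sin_pi_div_three]; ring
  refine ⟨?_, ?_, ?_, ?_⟩
  · rw [Real.cos_add, Real.cos_pi_div_three, Real.sin_pi_div_three]; ring
  · rw [Real.sin_add, Real.cos_pi_div_three, Real.sin_pi_div_three]; ring
  · rw [Real.cos_add, h2c, h2s]; ring
  · rw [Real.sin_add, h2c, h2s]; ring

lemma cosmem (θ : ℝ) : Real.cos θ ∈ Icc (-1 : ℝ) 1 := ⟨Real.neg_one_le_cos θ, Real.cos_le_one θ⟩

/-- A point of the upper boundary. -/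
def P (m : ℝ) (F : ℝ → ℝ) (t : ℝ) : Fin 2 → ℝ := ![m * t, F t]

lemma P0 (t : ℝ) : P m F t 0 = m * t := rfl
lemma P1 (t : ℝ) : P m F t 1 = F t := rfl

lemma hexsum (θ : ℝ) :
    cr (P m F (Real.cos θ)) (P m F (Real.cos (θ + Real.pi / 3)))
    + cr (P m F (Real.cos (θ + Real.pi / 3))) (P m F (Real.cos (θ + 2 * (Real.pi / 3))))
    + cr (P m F (Real.cos θ)) (P m F (Real.cos (θ + 2 * (Real.pi / 3))))
    = m * Real.sqrt 3 * G F θ := by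
  obtain ⟨h1, h2, h3, h4⟩ := trig θ
  have h3' : Real.sqrt 3 ^ 2 = 3 := Real.sq_sqrt (by norm_num)
  simp only [cr, P0, P1, G]
  generalize F (Real.cos θ) = a
  generalize F (Real.cos (θ + Real.pi / 3)) = b
  generalize F (Real.cos (θ + 2 * (Real.pi / 3))) = c
  rw [h1, h2, h3, h4]
  linear_combination (-(m * (b + c) * Real.cos θ / 2)) * h3'

end Upper

namespace Upper

variable {C : Set (Fin 2 → ℝ)} {m : ℝ} {F : ℝ → ℝ}

lemma sas_le (h : Upper C m F) (hc : IsCompact C) (hconv : Convex ℝ C)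
    (hneg : ∀ p ∈ C, -p ∈ C) {B : ℝ}
    (H : ∀ a ∈ C, ∀ b ∈ C, ∀ c ∈ C, cr a b + cr b c + cr a c ≤ B) :
    (volume C).toReal ≤ 2 * Real.pi / (3 * Real.sqrt 3) * B ∧
    ((volume C).toReal = 2 * Real.pi / (3 * Real.sqrt 3) * B →
      ∀ θ ∈ Ioo 0 (Real.pi / 3), m * Real.sqrt 3 * G F θ = B) := by
  have hm := h.pos
  have hpi := Real.pi_pos
  have h3 : 0 < Real.sqrt 3 := by positivity
  obtain ⟨hI, heq⟩ := h.Gint hc hconv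
  have hv := h.vol_le hc hconv hneg
  rw [heq] at hv
  have hle : ∀ θ : ℝ, m * Real.sqrt 3 * G F θ ≤ B := by
    intro θ
    rw [← hexsum]
    exact H _ (h.mem _ (cosmem _)) _ (h.mem _ (cosmem _)) _ (h.mem _ (cosmem _))
  set b := B / (m * Real.sqrt 3) with hb
  have hle' : ∀ θ : ℝ, G F θ ≤ b := by
    intro θ
    rw [hb, le_div_iff₀ (by positivity)]
    linarith [hle θ]
  have hIntg : ∫ θ in (0 : ℝ)..(Real.pi / 3), G F θ ≤ Real.pi / 3 * b := by
    have := intervalIntegral.integral_mono_on (a := 0) (b := Real.pi / 3) (by positivity) hI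
      (intervalIntegrable_const (c := b)) (fun θ _ => hle' θ)
    simpa using this
  have e : 2 * Real.pi / (3 * Real.sqrt 3) * B = 2 * m * (Real.pi / 3 * b) := by
    rw [hb]; field_simp
  have hmono : 2 * m * ∫ θ in (0 : ℝ)..(Real.pi / 3), G F θ ≤ 2 * m * (Real.pi / 3 * b) :=
    mul_le_mul_of_nonneg_left hIntg (by positivity)
  rw [e]
  refine ⟨hv.trans hmono, fun hEq => ?_⟩
  rw [hEq] at hv
  have hIntg2 : ∫ θ in (0 : ℝ)..(Real.pi / 3), G F θ = Real.pi / 3 * b :=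
    le_antisymm hIntg (le_of_mul_le_mul_left hv (by positivity))
  have hz : ∫ θ in (0 : ℝ)..(Real.pi / 3), (b - G F θ) = 0 := by
    rw [intervalIntegral.integral_sub intervalIntegrable_const hI, hIntg2]
    simp
  have hae : (fun θ => b - G F θ) =ᵐ[volume.restrict (Ioc 0 (Real.pi / 3))] 0 :=
    (intervalIntegral.integral_eq_zero_iff_of_le_of_nonneg_ae (by positivity)
      (Filter.Eventually.of_forall fun θ => by simpa using hle' θ)
      (intervalIntegrable_const.sub hI)).1 hz
  have hae2 : (fun θ => b - G F θ) =ᵐ[volume.restrict (Ioo 0 (Real.pi / 3))] fun _ => 0 :=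
    ae_restrict_of_ae_restrict_of_subset Ioo_subset_Ioc_self hae
  have hgc := h.gcont hconv
  have hGc : ContinuousOn (G F) (Ioo 0 (Real.pi / 3)) := by
    apply ContinuousOn.add
    · apply ContinuousOn.add
      · exact hgc.mono (Ioo_subset_Ioo le_rfl (by linarith))
      · exact hgc.comp (f := fun θ : ℝ => θ + Real.pi / 3) (by fun_prop)
          (fun θ hθ => ⟨by linarith [hθ.1], by linarith [hθ.2]⟩)
    · exact hgc.comp (f := fun θ : ℝ => θ + 2 * (Real.pi / 3)) (by fun_prop)
          (fun θ hθ => ⟨by linarith [hθ.1], by linarith [hθ.2]⟩)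
  have hall := Measure.eqOn_open_of_ae_eq hae2 isOpen_Ioo (continuousOn_const.sub hGc)
    continuousOn_const
  intro θ hθ
  have := hall hθ
  simp only at this
  have h1 : G F θ = b := by linarith
  rw [h1, hb]
  field_simp

lemma support (h : Upper C m F) {B : ℝ}
    (H : ∀ a ∈ C, ∀ b ∈ C, ∀ c ∈ C, cr a b + cr b c + cr a c ≤ B)
    (H' : ∀ a ∈ C, ∀ b ∈ C, ∀ c ∈ C, cr a b + cr b c + cr a c = B →
      cr a b = cr b c ∧ cr b c = cr a c)
    (hG : ∀ θ ∈ Ioo 0 (Real.pi / 3), m * Real.sqrt 3 * G F θ = B) :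
    ∀ x ∈ Ioo (-1 : ℝ) 1, x ≠ 1 / 2 → x ≠ -(1 / 2) → ∃ D : ℝ,
      (∀ t ∈ Icc (-1 : ℝ) 1,
        F t * Real.sqrt (1 - x ^ 2) + t * D ≤ 2 * B / (3 * (m * Real.sqrt 3))) ∧
      F x * Real.sqrt (1 - x ^ 2) + x * D = 2 * B / (3 * (m * Real.sqrt 3)) := by
  have hm := h.pos
  have hpi := Real.pi_pos
  have hs3 : 0 < Real.sqrt 3 := by positivity
  have h3' : Real.sqrt 3 ^ 2 = 3 := Real.sq_sqrt (by norm_num)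
  -- a reformulation clearing denominators
  have aux : ∀ x s d : ℝ,
      (∀ t ∈ Icc (-1 : ℝ) 1, m * t * d + F t * (m * Real.sqrt 3 * s) ≤ 2 * B / 3) →
      m * x * d + F x * (m * Real.sqrt 3 * s) = 2 * B / 3 → s = Real.sqrt (1 - x ^ 2) →
      ∃ D : ℝ, (∀ t ∈ Icc (-1 : ℝ) 1,
        F t * Real.sqrt (1 - x ^ 2) + t * D ≤ 2 * B / (3 * (m * Real.sqrt 3))) ∧
      F x * Real.sqrt (1 - x ^ 2) + x * D = 2 * B / (3 * (m * Real.sqrt 3)) := by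
    intro x s d h1 h2 h3
    have e : ∀ t, F t * Real.sqrt (1 - x ^ 2) + t * (d / Real.sqrt 3)
        = (m * t * d + F t * (m * Real.sqrt 3 * s)) / (m * Real.sqrt 3) := by
      intro t; rw [← h3]; field_simp; ring
    have e2 : 2 * B / (3 * (m * Real.sqrt 3)) = (2 * B / 3) / (m * Real.sqrt 3) := by
      field_simp
    refine ⟨d / Real.sqrt 3, fun t ht => ?_, ?_⟩
    · rw [e, e2]
      exact div_le_div_of_nonneg_right (h1 t ht) (by positivity)
    · rw [e, e2, h2]
  intro x hx hx1 hx2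
  set φ := Real.arccos x with hφ
  have hcos : Real.cos φ = x := Real.cos_arccos hx.1.le hx.2.le
  have hsin : Real.sin φ = Real.sqrt (1 - x ^ 2) := Real.sin_arccos x
  have hφ0 : 0 < φ := Real.arccos_pos.2 hx.2
  have hφpi : φ < Real.pi := by
    rcases lt_or_eq_of_le (Real.arccos_le_pi x) with hlt | heq
    · exact hlt
    · exfalso
      rw [← hφ] at heq
      rw [heq, Real.cos_pi] at hcos
      linarith [hx.1]
  have n1 : φ ≠ Real.pi / 3 := by
    intro he; rw [he, Real.cos_pi_div_three] at hcos; exact hx1 hcos.symm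
  have n2 : φ ≠ 2 * (Real.pi / 3) := by
    intro he
    rw [he, Real.cos_two_mul, Real.cos_pi_div_three] at hcos
    apply hx2; rw [← hcos]; norm_num
  have main : ∀ θ ∈ Ioo 0 (Real.pi / 3), ∀ a b c : Fin 2 → ℝ, a = P m F (Real.cos θ) →
      b = P m F (Real.cos (θ + Real.pi / 3)) → c = P m F (Real.cos (θ + 2 * (Real.pi / 3))) →
      a ∈ C ∧ b ∈ C ∧ c ∈ C ∧ cr a b = B / 3 ∧ cr b c = B / 3 ∧ cr a c = B / 3 := by
    rintro θ hθ a b c rfl rfl rfl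
    have ha : P m F (Real.cos θ) ∈ C := h.mem _ (cosmem _)
    have hb : P m F (Real.cos (θ + Real.pi / 3)) ∈ C := h.mem _ (cosmem _)
    have hc : P m F (Real.cos (θ + 2 * (Real.pi / 3))) ∈ C := h.mem _ (cosmem _)
    have hS := hexsum (m := m) (F := F) θ
    rw [hG θ hθ] at hS
    obtain ⟨e1, e2⟩ := H' _ ha _ hb _ hc hS
    exact ⟨ha, hb, hc, by linarith, by linarith, by linarith⟩
  rcases lt_or_gt_of_ne n1 with hlt1 | hgt1
  · obtain ⟨ha, hb, hc, e1, e2, e3⟩ := main φ ⟨hφ0, hlt1⟩ _ _ _ rfl rfl rfl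
    obtain ⟨t1, t2, t3, t4⟩ := trig φ
    set x1 := Real.cos (φ + Real.pi / 3)
    set x2 := Real.cos (φ + 2 * (Real.pi / 3))
    rw [hcos] at ha e1 e3 t1 t3
    have hx12 : x1 + x2 = -(Real.sqrt 3 * Real.sin φ) := by rw [t1, t3]; ring
    apply aux x (Real.sin φ) (F x1 + F x2) _ _ hsin
    · intro t ht
      have hP : P m F t ∈ C := h.mem t ht
      have := H _ hP _ hb _ hc
      rw [e2] at this
      simp only [cr, P0, P1] at this
      have : m * t * (F x1 + F x2) - F t * m * (x1 + x2) ≤ 2 * B / 3 := by linarith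
      rw [hx12] at this
      linarith
    · simp only [cr, P0, P1] at e1 e3
      have : m * x * (F x1 + F x2) - F x * m * (x1 + x2) = 2 * B / 3 := by linarith
      rw [hx12] at this
      linarith
  rcases lt_or_gt_of_ne n2 with hlt2 | hgt2
  · obtain ⟨ha, hb, hc, e1, e2, e3⟩ := main (φ - Real.pi / 3)
      ⟨by linarith, by linarith⟩ _ _ _ rfl rfl rfl
    obtain ⟨t1, t2, t3, t4⟩ := trig (φ - Real.pi / 3)
    have hφe : φ - Real.pi / 3 + Real.pi / 3 = φ := by ring
    rw [hφe] at hb e1 e2 t1 t2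
    set x0 := Real.cos (φ - Real.pi / 3)
    set x2 := Real.cos (φ - Real.pi / 3 + 2 * (Real.pi / 3))
    have hx12 : x2 - x0 = -(Real.sqrt 3 * Real.sin φ) := by
      rw [t3, t2]; linear_combination (-(x0 / 2)) * (-h3')
    rw [hcos] at hb e1 e2
    apply aux x (Real.sin φ) (F x2 - F x0) _ _ hsin
    · intro t ht
      have hP : P m F t ∈ C := h.mem t ht
      have := H _ ha _ hP _ hc
      rw [e3] at this
      simp only [cr, P0, P1] at this
      have : m * t * (F x2 - F x0) - F t * m * (x2 - x0) ≤ 2 * B / 3 := by linarith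
      rw [hx12] at this
      linarith
    · simp only [cr, P0, P1] at e1 e2
      have : m * x * (F x2 - F x0) - F x * m * (x2 - x0) = 2 * B / 3 := by linarith
      rw [hx12] at this
      linarith
  · obtain ⟨ha, hb, hc, e1, e2, e3⟩ := main (φ - 2 * (Real.pi / 3))
      ⟨by linarith, by linarith⟩ _ _ _ rfl rfl rfl
    obtain ⟨t1, t2, t3, t4⟩ := trig (φ - 2 * (Real.pi / 3))
    have hφe : φ - 2 * (Real.pi / 3) + 2 * (Real.pi / 3) = φ := by ring
    rw [hφe] at hc e3 e2 t3 t4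
    set x0 := Real.cos (φ - 2 * (Real.pi / 3))
    set x1 := Real.cos (φ - 2 * (Real.pi / 3) + Real.pi / 3)
    have hx12 : -x0 - x1 = -(Real.sqrt 3 * Real.sin φ) := by
      rw [t1, t4]; linear_combination (-(x0 / 2)) * (-h3')
    rw [hcos] at hc e3 e2
    apply aux x (Real.sin φ) (-F x0 - F x1) _ _ hsin
    · intro t ht
      have hP : P m F t ∈ C := h.mem t ht
      have := H _ ha _ hb _ hP
      rw [e1] at this
      simp only [cr, P0, P1] at this
      have : m * t * (-F x0 - F x1) - F t * m * (-x0 - x1) ≤ 2 * B / 3 := by linarith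
      rw [hx12] at this
      linarith
    · simp only [cr, P0, P1] at e3 e2
      have : m * x * (-F x0 - F x1) - F x * m * (-x0 - x1) = 2 * B / 3 := by linarith
      rw [hx12] at this
      linarith

set_option maxHeartbeats 1000000 in
lemma formula (h : Upper C m F) (hconv : Convex ℝ C) {B : ℝ} (hB : 0 < B)
    (H : ∀ a ∈ C, ∀ b ∈ C, ∀ c ∈ C, cr a b + cr b c + cr a c ≤ B)
    (H' : ∀ a ∈ C, ∀ b ∈ C, ∀ c ∈ C, cr a b + cr b c + cr a c = B →
      cr a b = cr b c ∧ cr b c = cr a c)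
    (hG : ∀ θ ∈ Ioo 0 (Real.pi / 3), m * Real.sqrt 3 * G F θ = B) :
    ∃ M L : ℝ, 0 < M ∧ ∀ x ∈ Ioo (-1 : ℝ) 1, F x = M * Real.sqrt (1 - x ^ 2) + L * x := by
  have hm := h.pos
  have hpi := Real.pi_pos
  have hs3 : 0 < Real.sqrt 3 := by positivity
  have hsup := h.support H H' hG
  have hcont := h.cont hconv
  set M := 2 * B / (3 * (m * Real.sqrt 3)) with hM
  have hMpos : 0 < M := by positivity
  obtain ⟨L, hL⟩ := ode_lemma (f := F) (M := M) (hcont.mono (Ioo_subset_Ioo (by norm_num) le_rfl))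
    (by
      intro x hx hx2
      obtain ⟨D, h1, h2⟩ := hsup x ⟨by linarith [hx.1], hx.2⟩ hx2 (by linarith [hx.1])
      exact ⟨D, fun t ht => h1 t ⟨by linarith [ht.1], ht.2.le⟩, h2⟩)
  obtain ⟨L', hL'⟩ := ode_lemma (f := fun x => F (-x)) (M := M)
    (hcont.comp (f := fun x : ℝ => -x) (by fun_prop)
      (fun x hx => ⟨by linarith [hx.2], by linarith [hx.1]⟩))
    (by
      intro x hx hx2
      obtain ⟨D, h1, h2⟩ := hsup (-x) ⟨by linarith [hx.2], by linarith [hx.1]⟩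
        (by linarith [hx.1]) (by intro he; apply hx2; linarith)
      refine ⟨-D, fun t ht => ?_, ?_⟩
      · have := h1 (-t) ⟨by linarith [ht.2], by linarith [ht.1]⟩
        rw [neg_sq] at this
        linarith
      · rw [neg_sq] at h2
        linarith)
  have hLL : L' = -L := by
    set θ := Real.pi / 12 with hθ
    have ha : P m F (Real.cos θ) ∈ C := h.mem _ (cosmem _)
    have hb : P m F (Real.cos (θ + Real.pi / 3)) ∈ C := h.mem _ (cosmem _)
    have hc : P m F (Real.cos (θ + 2 * (Real.pi / 3))) ∈ C := h.mem _ (cosmem _)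
    have hS := hexsum (m := m) (F := F) θ
    rw [hG θ ⟨by positivity, by rw [hθ]; linarith⟩] at hS
    obtain ⟨e1, e2⟩ := H' _ ha _ hb _ hc hS
    obtain ⟨t1, t2, t3, t4⟩ := trig θ
    have hq : Real.cos θ ^ 2 + Real.sin θ ^ 2 = 1 := Real.cos_sq_add_sin_sq θ
    have s1 : 0 < Real.sin θ := Real.sin_pos_of_pos_of_lt_pi (by positivity) (by rw [hθ]; linarith)
    have c1 : 0 < Real.cos θ := Real.cos_pos_of_mem_Ioo ⟨by rw [hθ]; linarith, by rw [hθ]; linarith⟩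
    have s2 : 0 < Real.sin (θ + Real.pi / 3) :=
      Real.sin_pos_of_pos_of_lt_pi (by positivity) (by rw [hθ]; linarith)
    have c2 : 0 < Real.cos (θ + Real.pi / 3) :=
      Real.cos_pos_of_mem_Ioo ⟨by rw [hθ]; linarith, by rw [hθ]; linarith⟩
    have s3 : 0 < Real.sin (θ + 2 * (Real.pi / 3)) :=
      Real.sin_pos_of_pos_of_lt_pi (by positivity) (by rw [hθ]; linarith)
    have q2 := Real.cos_sq_add_sin_sq (θ + Real.pi / 3)
    have q3 := Real.cos_sq_add_sin_sq (θ + 2 * (Real.pi / 3))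
    have hsum : Real.cos (θ + Real.pi / 3) = Real.cos θ + Real.cos (θ + 2 * (Real.pi / 3)) := by
      rw [t1, t3]; ring
    have ssum : Real.sin (θ + Real.pi / 3) = Real.sin θ + Real.sin (θ + 2 * (Real.pi / 3)) := by
      rw [t2, t4]; ring
    have c3 : Real.cos (θ + 2 * (Real.pi / 3)) < 0 := by rw [t3]; nlinarith
    set x0 := Real.cos θ
    set x1 := Real.cos (θ + Real.pi / 3)
    set x2 := Real.cos (θ + 2 * (Real.pi / 3))
    set y0 := Real.sin θ
    set y1 := Real.sin (θ + Real.pi / 3)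
    set y2 := Real.sin (θ + 2 * (Real.pi / 3))
    have sq0 : Real.sqrt (1 - x0 ^ 2) = y0 := by
      rw [show 1 - x0 ^ 2 = y0 ^ 2 by linarith]; exact Real.sqrt_sq s1.le
    have sq1 : Real.sqrt (1 - x1 ^ 2) = y1 := by
      rw [show 1 - x1 ^ 2 = y1 ^ 2 by linarith]; exact Real.sqrt_sq s2.le
    have sq2 : Real.sqrt (1 - (-x2) ^ 2) = y2 := by
      rw [show 1 - (-x2) ^ 2 = y2 ^ 2 by linarith]; exact Real.sqrt_sq s3.le
    have f0 := hL x0 ⟨c1, by nlinarith⟩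
    have f1 := hL x1 ⟨c2, by nlinarith⟩
    have f2 := hL' (-x2) ⟨by linarith, by nlinarith⟩
    rw [sq0] at f0
    rw [sq1] at f1
    rw [sq2, neg_neg] at f2
    -- `b = a + c`
    have hκ : cr (P m F x0) (P m F x1) = B / 3 := by linarith
    have hκ2 : cr (P m F x1) (P m F x2) = B / 3 := by linarith
    have hκ3 : cr (P m F x0) (P m F x2) = B / 3 := by linarith
    have rel : B / 3 * (F x0 - F x1 + F x2) = 0 := by
      have e : cr (P m F x1) (P m F x2) * F x0 - cr (P m F x0) (P m F x2) * F x1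
          + cr (P m F x0) (P m F x1) * F x2 = 0 := by
        simp only [cr, P0, P1]; ring
      rw [hκ, hκ2, hκ3] at e
      linarith
    have rel2 : F x0 - F x1 + F x2 = 0 := by
      rcases mul_eq_zero.1 rel with h | h
      · linarith
      · exact h
    rw [f0, f1, f2] at rel2
    have : x2 * (L' + L) = 0 := by
      have e1 : x1 = x0 + x2 := hsum
      have e2 : y1 = y0 + y2 := ssum
      rw [e1, e2] at rel2
      linarith
    rcases mul_eq_zero.1 this with h | h <;> linarith
  refine ⟨M, L, hMpos, fun x hx => ?_⟩
  rcases lt_trichotomy x 0 with hx0 | hx0 | hx0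
  · have := hL' (-x) ⟨by linarith, by linarith [hx.1]⟩
    rw [neg_neg, neg_sq, hLL] at this
    linarith
  · subst hx0
    have hF0 : Filter.Tendsto F (nhdsWithin 0 (Ioi 0)) (nhds (F 0)) :=
      ((hcont.continuousAt (isOpen_Ioo.mem_nhds hx)).tendsto).mono_left nhdsWithin_le_nhds
    have hR : Filter.Tendsto (fun x : ℝ => M * Real.sqrt (1 - x ^ 2) + L * x)
        (nhdsWithin 0 (Ioi 0)) (nhds (M * Real.sqrt (1 - 0 ^ 2) + L * 0)) := by
      have : Continuous (fun x : ℝ => M * Real.sqrt (1 - x ^ 2) + L * x) := by fun_prop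
      exact (this.tendsto 0).mono_left nhdsWithin_le_nhds
    refine tendsto_nhds_unique hF0 (hR.congr' ?_)
    filter_upwards [Ioo_mem_nhdsGT (show (0 : ℝ) < 1 by norm_num)] with y hy
    exact (hL y hy).symm
  · exact hL x ⟨hx0, hx.2⟩

end Upper

/-- Two star-shaped sets agreeing inside a strip. -/
lemma star_subset {A B : Set (Fin 2 → ℝ)} {m : ℝ} (hm : 0 < m) (hB : IsClosed B)
    (hstar : ∀ p ∈ A, ∀ t ∈ Ioo (0 : ℝ) 1, t • p ∈ A)
    (hA : ∀ p ∈ A, |p 0| ≤ m)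
    (hAB : ∀ p ∈ A, |p 0| < m → p ∈ B) : A ⊆ B := by
  intro p hp
  have ht : Filter.Tendsto (fun t : ℝ => t • p) (nhdsWithin 1 (Iio 1)) (nhds ((1 : ℝ) • p)) := by
    have : Continuous (fun t : ℝ => t • p) := by fun_prop
    exact (this.tendsto 1).mono_left nhdsWithin_le_nhds
  rw [one_smul] at ht
  refine hB.mem_of_tendsto ht ?_
  filter_upwards [Ioo_mem_nhdsLT (show (0 : ℝ) < 1 by norm_num)] with t ht
  refine hAB _ (hstar p hp t ht) ?_
  have h1 := hA p hp
  simp only [Pi.smul_apply, smul_eq_mul, abs_mul, abs_of_pos ht.1]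
  nlinarith [ht.1, ht.2, abs_nonneg (p 0)]

lemma mem_ellipse_LM {m M L : ℝ} (hm : 0 < m) (hM : 0 < M) (p : Fin 2 → ℝ) :
    p ∈ ((!![m, 0; L, M] : Matrix (Fin 2) (Fin 2) ℝ) *ᵥ ·) '' disc ↔
      (p 0 / m) ^ 2 + ((p 1 - L * (p 0 / m)) / M) ^ 2 ≤ 1 := by
  constructor
  · rintro ⟨x, hx, rfl⟩
    have hx' : x 0 * x 0 + x 1 * x 1 ≤ 1 := by rw [← dot2]; exact hx
    simp only [mulVec2]
    have e0 : (m * x 0 + 0 * x 1) / m = x 0 := by field_simp; ring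
    have e1 : (L * x 0 + M * x 1 - L * x 0) / M = x 1 := by field_simp; ring
    simp only [Matrix.of_apply, Matrix.cons_val', Matrix.cons_val_zero, Matrix.cons_val_one,
      Matrix.cons_val_fin_one, e0, e1]
    nlinarith
  · intro h
    refine ⟨![p 0 / m, (p 1 - L * (p 0 / m)) / M], ?_, ?_⟩
    · show ![p 0 / m, (p 1 - L * (p 0 / m)) / M] ⬝ᵥ ![p 0 / m, (p 1 - L * (p 0 / m)) / M] ≤ (1 : ℝ)
      rw [dot2]
      simp only [Matrix.cons_val_zero, Matrix.cons_val_one]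
      nlinarith
    · ext i
      fin_cases i
      · simp [mulVec2]; field_simp
      · simp [mulVec2]; field_simp; ring

lemma Upper.to_ellipse {C : Set (Fin 2 → ℝ)} {m : ℝ} {F : ℝ → ℝ} (h : Upper C m F)
    (hcl : IsClosed C) (hconv : Convex ℝ C)
    (hneg : ∀ p ∈ C, -p ∈ C) (h0 : (0 : Fin 2 → ℝ) ∈ C) {M L : ℝ} (hM : 0 < M)
    (hF : ∀ x ∈ Ioo (-1 : ℝ) 1, F x = M * Real.sqrt (1 - x ^ 2) + L * x) :
    C = ((!![m, 0; L, M] : Matrix (Fin 2) (Fin 2) ℝ) *ᵥ ·) '' disc := by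
  have hm := h.pos
  set E := ((!![m, 0; L, M] : Matrix (Fin 2) (Fin 2) ℝ) *ᵥ ·) '' disc with hE
  have hmemE : ∀ p, p ∈ E ↔ (p 0 / m) ^ 2 + ((p 1 - L * (p 0 / m)) / M) ^ 2 ≤ 1 :=
    fun p => mem_ellipse_LM hm hM p
  have hEcl : IsClosed E := by
    have : E = {p : Fin 2 → ℝ | (p 0 / m) ^ 2 + ((p 1 - L * (p 0 / m)) / M) ^ 2 ≤ 1} := by
      ext p; exact hmemE p
    rw [this]
    exact isClosed_le (by fun_prop) continuous_const
  have hstrip : ∀ p : Fin 2 → ℝ, |p 0| < m → p 0 / m ∈ Ioo (-1 : ℝ) 1 := by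
    intro p hp
    obtain ⟨a, b⟩ := abs_lt.1 hp
    exact ⟨by rw [lt_div_iff₀ hm]; linarith, by rw [div_lt_one hm]; exact b⟩
  have hstrip' : ∀ p : Fin 2 → ℝ, p 0 / m ∈ Icc (-1 : ℝ) 1 → |p 0| ≤ m := by
    intro p hp
    obtain ⟨a, b⟩ := hp
    rw [le_div_iff₀ hm] at a
    rw [div_le_one hm] at b
    exact abs_le.2 ⟨by linarith, b⟩
  have hsq : ∀ t z : ℝ, t ∈ Ioo (-1 : ℝ) 1 →
      (t ^ 2 + (z / M) ^ 2 ≤ 1 ↔ |z| ≤ M * Real.sqrt (1 - t ^ 2)) := by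
    intro t z ht
    have hpos : 0 ≤ 1 - t ^ 2 := by nlinarith [ht.1, ht.2]
    have : t ^ 2 + (z / M) ^ 2 ≤ 1 ↔ |z / M| ≤ Real.sqrt (1 - t ^ 2) := by
      rw [← Real.sqrt_sq_eq_abs, Real.sqrt_le_sqrt_iff hpos]
      constructor <;> intro h <;> linarith
    rw [this, abs_div, abs_of_pos hM, div_le_iff₀ hM, mul_comm]
  apply Subset.antisymm
  · apply star_subset hm hEcl
    · intro p hp t ht
      have := hconv hp h0 ht.1.le (show 0 ≤ 1 - t by linarith [ht.2]) (by ring)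
      simpa using this
    · intro p hp
      exact hstrip' p (h.le p hp).1
    · intro p hp hlt
      have ht := hstrip p hlt
      rw [hmemE, hsq _ _ ht]
      have h1 := (h.le p hp).2
      have h2 := (h.le (-p) (hneg p hp)).2
      have e : (-p) 0 / m = -(p 0 / m) := by simp [neg_div]
      rw [e, hF _ ⟨by linarith [ht.2], by linarith [ht.1]⟩, neg_sq] at h2
      rw [hF _ ht] at h1
      simp only [Pi.neg_apply] at h2
      exact abs_le.2 ⟨by linarith, by linarith⟩
  · apply star_subset hm hcl
    · intro p hp t ht
      rw [hmemE] at hp ⊢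
      have e : ((t • p) 0 / m) ^ 2 + (((t • p) 1 - L * ((t • p) 0 / m)) / M) ^ 2
          = t ^ 2 * ((p 0 / m) ^ 2 + ((p 1 - L * (p 0 / m)) / M) ^ 2) := by
        simp only [Pi.smul_apply, smul_eq_mul]; ring
      rw [e]
      have : t ^ 2 ≤ 1 := by nlinarith [ht.1, ht.2]
      have := mul_le_mul this hp (by positivity) (by norm_num)
      linarith
    · intro p hp
      rw [hmemE] at hp
      apply hstrip'
      have : (p 0 / m) ^ 2 ≤ 1 := by nlinarith [sq_nonneg ((p 1 - L * (p 0 / m)) / M)]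
      exact abs_le.1 ((sq_le_one_iff_abs_le_one _).1 this)
    · intro p hp hlt
      have ht := hstrip p hlt
      rw [hmemE, hsq _ _ ht] at hp
      obtain ⟨a, b⟩ := abs_le.1 hp
      have q1 := h.mem (p 0 / m) ⟨ht.1.le, ht.2.le⟩
      have q2 := hneg _ (h.mem (-(p 0 / m)) ⟨by linarith [ht.2], by linarith [ht.1]⟩)
      rw [hF _ ht] at q1
      rw [hF _ ⟨by linarith [ht.2], by linarith [ht.1]⟩, neg_sq] at q2
      set t := p 0 / m with htdef
      have hp0 : p 0 = m * t := by rw [htdef]; field_simp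
      have hsp : 0 < Real.sqrt (1 - t ^ 2) := Real.sqrt_pos.2 (by nlinarith [ht.1, ht.2])
      set s := Real.sqrt (1 - t ^ 2)
      have hMs : 0 < M * s := by positivity
      set z := p 1 - L * t with hz
      have hp1 : p 1 = z + L * t := by rw [hz]; ring
      have key := hconv q1 q2 (a := (1 + z / (M * s)) / 2) (b := (1 - z / (M * s)) / 2)
        (by have : -1 ≤ z / (M * s) := by rw [le_div_iff₀ hMs]; linarith
            linarith)
        (by have : z / (M * s) ≤ 1 := by rw [div_le_one hMs]; linarith
            linarith) (by ring)
      convert key using 1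
      ext i
      fin_cases i
      · simp [hp0]; ring
      · simp [hp1]; field_simp; ring

lemma zero_mem_interior_of_symm {K : Set (Fin 2 → ℝ)} (hKconv : Convex ℝ K)
    (hKint : (interior K).Nonempty) (hsymm : K = -K) : (0 : Fin 2 → ℝ) ∈ interior K := by
  obtain ⟨x, hx⟩ := hKint
  have hx' : -x ∈ interior K := by
    have h1 : -interior K ⊆ interior K := by
      apply interior_maximal _ isOpen_interior.neg
      intro y hy
      rw [hsymm]
      have h2 : -y ∈ K := interior_subset (Set.mem_neg.1 hy)
      exact Set.mem_neg.2 h2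
    exact h1 (by simpa using hx)
  have := hKconv.interior hx hx' (a := 1 / 2) (b := 1 / 2) (by norm_num) (by norm_num)
    (by norm_num)
  simpa using this

/-- `K` contains a box around the origin. -/
lemma exists_box {K : Set (Fin 2 → ℝ)} (h0 : (0 : Fin 2 → ℝ) ∈ interior K) :
    ∃ r : ℝ, 0 < r ∧ ∀ x : Fin 2 → ℝ, |x 0| ≤ r → |x 1| ≤ r → x ∈ K := by
  obtain ⟨r, hr, hsub⟩ := Metric.isOpen_iff.1 isOpen_interior 0 h0
  refine ⟨r / 2, by positivity, fun x hx0 hx1 => interior_subset (hsub ?_)⟩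
  rw [mem_ball_zero_iff]
  refine (pi_norm_lt_iff hr).2 fun i => ?_
  rw [Real.norm_eq_abs]
  fin_cases i
  · show |x 0| < r
    linarith
  · show |x 1| < r
    linarith

lemma polar_compact {K : Set (Fin 2 → ℝ)} (h0 : (0 : Fin 2 → ℝ) ∈ interior K) :
    IsCompact (polarBody K) := by
  obtain ⟨r, hr, hbox⟩ := exists_box h0
  apply Metric.isCompact_of_isClosed_isBounded
  · have : polarBody K = ⋂ y ∈ K, {x : Fin 2 → ℝ | y ⬝ᵥ x ≤ 1} := by
      ext x; simp [polarBody]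
    rw [this]
    refine isClosed_biInter fun y _ => ?_
    refine isClosed_le ?_ continuous_const
    have : (fun x : Fin 2 → ℝ => y ⬝ᵥ x) = fun x => y 0 * x 0 + y 1 * x 1 := by
      ext x; exact dot2 y x
    show Continuous (fun x : Fin 2 → ℝ => y ⬝ᵥ x)
    rw [this]
    fun_prop
  · rw [isBounded_iff_forall_norm_le]
    refine ⟨1 / r, fun x hx => ?_⟩
    have key : ∀ y : Fin 2 → ℝ, |y 0| ≤ r → |y 1| ≤ r → y 0 * x 0 + y 1 * x 1 ≤ 1 := by
      intro y h1 h2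
      have := hx y (hbox y h1 h2)
      rwa [dot2] at this
    have ha : |r| ≤ r := (abs_of_pos hr).le
    have ha' : |-r| ≤ r := by rw [abs_neg]; exact ha
    have hz : |(0 : ℝ)| ≤ r := by rw [abs_zero]; exact hr.le
    have k1 := key ![r, 0] ha hz
    have k2 := key ![-r, 0] ha' hz
    have k3 := key ![0, r] hz ha
    have k4 := key ![0, -r] hz ha'
    simp at k1 k2 k3 k4
    refine (pi_norm_le_iff_of_nonneg (by positivity)).2 fun i => ?_
    rw [Real.norm_eq_abs]
    fin_cases i
    · show |x 0| ≤ 1 / r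
      rw [le_div_iff₀ hr]
      rcases abs_cases (x 0) with ⟨e, -⟩ | ⟨e, -⟩ <;> rw [e] <;> linarith
    · show |x 1| ≤ 1 / r
      rw [le_div_iff₀ hr]
      rcases abs_cases (x 1) with ⟨e, -⟩ | ⟨e, -⟩ <;> rw [e] <;> linarith

lemma polar_axes {K : Set (Fin 2 → ℝ)} (hKc : IsCompact K) :
    ∃ ε : ℝ, 0 < ε ∧ ![ε, 0] ∈ polarBody K ∧ ![0, ε] ∈ polarBody K := by
  obtain ⟨R, hR⟩ := hKc.isBounded.exists_norm_le
  have hpos : 0 < |R| + 1 := by positivity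
  have key : ∀ y ∈ K, ∀ i, y i ≤ |R| + 1 := by
    intro y hy i
    have h1 := hR y hy
    have h2 := norm_le_pi_norm y i
    rw [Real.norm_eq_abs] at h2
    have h3 := le_abs_self (y i)
    have h4 := le_abs_self R
    linarith
  refine ⟨1 / (|R| + 1), by positivity, fun y hy => ?_, fun y hy => ?_⟩
  · rw [dot2]
    have := key y hy 0
    simp only [Matrix.cons_val_zero, Matrix.cons_val_one, mul_zero, add_zero]
    rw [mul_one_div, div_le_one hpos]
    exact this
  · rw [dot2]
    have := key y hy 1
    simp only [Matrix.cons_val_zero, Matrix.cons_val_one, mul_zero, zero_add]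
    rw [mul_one_div, div_le_one hpos]
    exact this

lemma critSet_nonempty {K : Set (Fin 2 → ℝ)} (hKc : IsCompact K) (hsymm : K = -K)
    (h0 : (0 : Fin 2 → ℝ) ∈ interior K) : (critSet K).Nonempty := by
  obtain ⟨ε, hε, h1, h2⟩ := polar_axes hKc
  exact ⟨_, cr_mem_critSet hsymm h0 h1 h2 (by simp [cr]; positivity)⟩

lemma critDet_pos {K : Set (Fin 2 → ℝ)} (hKc : IsCompact K) (hsymm : K = -K)
    (h0 : (0 : Fin 2 → ℝ) ∈ interior K) : 0 < critDet K := by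
  obtain ⟨r, hr, hbox⟩ := exists_box h0
  have hdet : (!![1 / r, 0; 0, 1 / r] : Matrix (Fin 2) (Fin 2) ℝ).det ≠ 0 := by
    simp [Matrix.det_fin_two]
    exact hr.ne'
  refine lt_of_lt_of_le ?_ (critDet_ge (critSet_nonempty hKc hsymm h0)
    (!![1 / r, 0; 0, 1 / r]) hdet ?_)
  · have := abs_pos.2 hdet
    positivity
  · intro x hx
    rw [dot2] at hx
    simp only [mulVec2, Matrix.of_apply, Matrix.cons_val', Matrix.cons_val_zero,
      Matrix.cons_val_one, Matrix.cons_val_fin_one, zero_mul, add_zero, zero_add] at hx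
    have e : ∀ z : ℝ, 1 / r * z * (1 / r * z) < 1 → |z| ≤ r := by
      intro z hz
      refine abs_le_of_sq_le_sq ?_ hr.le
      have : 1 / r * z * (1 / r * z) = z ^ 2 / r ^ 2 := by field_simp
      rw [this, div_lt_one (by positivity)] at hz
      exact hz.le
    exact hbox x (e _ (by nlinarith [mul_self_nonneg (1 / r * x 1)]))
      (e _ (by nlinarith [mul_self_nonneg (1 / r * x 0)]))

lemma ellipse_center {K : Set (Fin 2 → ℝ)} (hsymm : K = -K)
    {A : Matrix (Fin 2) (Fin 2) ℝ} (hA : A.det ≠ 0) {v : Fin 2 → ℝ}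
    (hK : K = (fun x => A.mulVec x + v) '' {x : Fin 2 → ℝ | x ⬝ᵥ x ≤ 1}) : v = 0 := by
  have hu : IsUnit A.det := isUnit_iff_ne_zero.2 hA
  set w := A⁻¹ *ᵥ v with hw
  have hv : A *ᵥ w = v := by
    rw [hw, Matrix.mulVec_mulVec, Matrix.mul_nonsing_inv _ hu, Matrix.one_mulVec]
  have step : ∀ x : Fin 2 → ℝ, x ⬝ᵥ x ≤ 1 → (x + (w + w)) ⬝ᵥ (x + (w + w)) ≤ 1 := by
    intro x hx
    have h1 : A *ᵥ x + v ∈ K := by rw [hK]; exact ⟨x, hx, rfl⟩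
    rw [hsymm, hK] at h1
    obtain ⟨y, hy, hyx⟩ := h1
    have e : A *ᵥ y = A *ᵥ (-(x + (w + w))) := by
      rw [Matrix.mulVec_neg, Matrix.mulVec_add, Matrix.mulVec_add, hv]
      have : A *ᵥ y + v = -(A *ᵥ x + v) := hyx
      rw [eq_sub_of_add_eq this]
      abel
    have e2 : y = -(x + (w + w)) := by
      have := congrArg (A⁻¹ *ᵥ ·) e
      simpa only [Matrix.mulVec_mulVec, Matrix.nonsing_inv_mul _ hu, Matrix.one_mulVec] using this
    have hy' : y ⬝ᵥ y ≤ 1 := hy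
    rw [e2, neg_dotProduct_neg] at hy'
    exact hy'
  have hs : w ⬝ᵥ w = 0 := by
    by_contra hne
    have hnn : 0 ≤ w ⬝ᵥ w := by
      rw [dot2]
      nlinarith [mul_self_nonneg (w 0), mul_self_nonneg (w 1)]
    have hs : 0 < w ⬝ᵥ w := lt_of_le_of_ne hnn (Ne.symm hne)
    set r := Real.sqrt (w ⬝ᵥ w) with hr
    have hrp : 0 < r := Real.sqrt_pos.2 hs
    have hr2 : r ^ 2 = w ⬝ᵥ w := Real.sq_sqrt hnn
    rw [dot2] at hr2
    have h1 := step ((1 / r) • w) (by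
      rw [dot2]
      simp only [Pi.smul_apply, smul_eq_mul]
      have : 1 / r * w 0 * (1 / r * w 0) + 1 / r * w 1 * (1 / r * w 1)
        = (w 0 * w 0 + w 1 * w 1) / r ^ 2 := by field_simp
      rw [this, hr2, div_self]
      rw [← hr2]; positivity)
    rw [dot2] at h1
    simp only [Pi.smul_apply, Pi.add_apply, smul_eq_mul] at h1
    have e : (1 / r * w 0 + (w 0 + w 0)) * (1 / r * w 0 + (w 0 + w 0))
        + (1 / r * w 1 + (w 1 + w 1)) * (1 / r * w 1 + (w 1 + w 1))
        = (1 / r + 2) ^ 2 * (w 0 * w 0 + w 1 * w 1) := by ring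
    rw [e, ← hr2] at h1
    have e2 : (1 / r + 2) ^ 2 * r ^ 2 = (1 + 2 * r) ^ 2 := by field_simp
    rw [e2] at h1
    nlinarith
  rw [dotProduct_self_eq_zero] at hs
  rw [← hv, hs, Matrix.mulVec_zero]

/-- The area estimate for the polar body, with its equality case. -/
lemma main_polar {K : Set (Fin 2 → ℝ)}
    (hKc : IsCompact K) (hKconv : Convex ℝ K) (hsymm : K = -K)
    (h0 : (0 : Fin 2 → ℝ) ∈ interior K) :
    critDet K * (volume (polarBody K)).toReal ≤ Real.pi * Real.sqrt 3 / 2 ∧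
    (critDet K * (volume (polarBody K)).toReal = Real.pi * Real.sqrt 3 / 2 → IsEllipse K) := by
  have hΔ := critDet_pos hKc hsymm h0
  have h3 : 0 < Real.sqrt 3 := by positivity
  have h3' : Real.sqrt 3 ^ 2 = 3 := Real.sq_sqrt (by norm_num)
  have hC := polar_compact h0
  have hCconv := polar_convex K
  have hneg : ∀ p ∈ polarBody K, -p ∈ polarBody K := fun p hp => polar_neg hsymm hp
  obtain ⟨ε, hε, hε1, hε2⟩ := polar_axes hKc
  obtain ⟨m, F, hU⟩ := exists_upper hC hCconv hneg ⟨_, hε1, by simpa using hε⟩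
  set Δ := critDet K with hΔdef
  have hB : 0 < 9 / 4 / Δ := by positivity
  have H : ∀ a ∈ polarBody K, ∀ b ∈ polarBody K, ∀ c ∈ polarBody K,
      cr a b + cr b c + cr a c ≤ 9 / 4 / Δ := by
    intro a ha b hb c hc
    rw [le_div_iff₀ hΔ]
    have := (critDet_hex_le hsymm h0 ha hb hc).1
    linarith
  have H' : ∀ a ∈ polarBody K, ∀ b ∈ polarBody K, ∀ c ∈ polarBody K,
      cr a b + cr b c + cr a c = 9 / 4 / Δ → cr a b = cr b c ∧ cr b c = cr a c := by
    intro a ha b hb c hc he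
    apply (critDet_hex_le hsymm h0 ha hb hc).2
    rw [he, ← hΔdef]
    field_simp
  have e : 2 * Real.pi / (3 * Real.sqrt 3) * (9 / 4 / Δ) = Real.pi * Real.sqrt 3 / 2 / Δ := by
    field_simp
    rw [h3']; norm_num
  obtain ⟨s1, s2⟩ := hU.sas_le hC hCconv hneg H
  rw [e] at s1 s2
  constructor
  · rw [le_div_iff₀ hΔ] at s1
    linarith
  · intro hEq
    have hG := s2 (by rw [eq_div_iff hΔ.ne']; linarith)
    obtain ⟨M, L, hM, hF⟩ := hU.formula hCconv hB H H' hG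
    have hzero : (0 : Fin 2 → ℝ) ∈ polarBody K := by
      intro y _; simp
    have hell := hU.to_ellipse hC.isClosed hCconv hneg hzero hM hF
    have hm := hU.pos
    have hdet : (!![m, 0; L, M] : Matrix (Fin 2) (Fin 2) ℝ).det ≠ 0 := by
      simp [Matrix.det_fin_two]
      exact ⟨hm.ne', hM.ne'⟩
    have hbi := bipolar hKc.isClosed hKconv (interior_subset h0)
    rw [hell, polar_ellipse hdet] at hbi
    refine ⟨(!![m, 0; L, M] : Matrix (Fin 2) (Fin 2) ℝ)ᵀ⁻¹, ?_, 0, ?_⟩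
    · rw [Matrix.det_nonsing_inv, Matrix.det_transpose, Ring.inverse_eq_inv']
      exact inv_ne_zero hdet
    · rw [← hbi]
      simp only [add_zero]
      rfl

lemma ellipse_polar {K : Set (Fin 2 → ℝ)}
    (hKc : IsCompact K) (hsymm : K = -K)
    (h0 : (0 : Fin 2 → ℝ) ∈ interior K) (hE : IsEllipse K) :
    Real.pi * Real.sqrt 3 / 2 ≤ critDet K * (volume (polarBody K)).toReal := by
  obtain ⟨A, hA, v, hK⟩ := hE
  have hv := ellipse_center hsymm hA hK
  subst hv
  have hK' : K = (A *ᵥ ·) '' disc := by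
    rw [hK]; simp only [add_zero]; rfl
  have hd := abs_pos.2 hA
  have hinv : A⁻¹.det = A.det⁻¹ := by
    rw [Matrix.det_nonsing_inv, Ring.inverse_eq_inv']
  have h1 := critDet_ge (critSet_nonempty hKc hsymm h0) A⁻¹
    (by rw [hinv]; exact inv_ne_zero hA) (by
      intro x hx
      rw [hK', mem_ellipse hA]
      exact hx.le)
  have h2 : (volume (polarBody K)).toReal = |A.det|⁻¹ * Real.pi := by
    rw [hK', polar_ellipse hA, volume_ellipse, Matrix.det_nonsing_inv, Ring.inverse_eq_inv',
      Matrix.det_transpose, abs_inv]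
  rw [hinv, abs_inv, div_inv_eq_mul] at h1
  rw [h2]
  have hp := Real.pi_pos
  calc Real.pi * Real.sqrt 3 / 2
      = Real.sqrt 3 / 2 * |A.det| * (|A.det|⁻¹ * Real.pi) := by field_simp
    _ ≤ _ := mul_le_mul_of_nonneg_right h1 (by positivity)

/-- For every centrally symmetric convex body `K ⊆ ℝ²`,
`δ_L(K) ≥ |K|·|K°|/(2π√3)`, with equality if and only if `K` is an ellipse. -/
theorem deltaL_ge_volume_mul_volume_polar (K : Set (Fin 2 → ℝ))
    (hKc : IsCompact K) (hKconv : Convex ℝ K) (hKint : (interior K).Nonempty)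
    (hsymm : K = -K) :
    deltaL K ≥ (volume K).toReal * (volume (polarBody K)).toReal / (2 * Real.pi * Real.sqrt 3) ∧
    (deltaL K = (volume K).toReal * (volume (polarBody K)).toReal / (2 * Real.pi * Real.sqrt 3)
      ↔ IsEllipse K) := by
  have h0 := zero_mem_interior_of_symm hKconv hKint hsymm
  have hΔ := critDet_pos hKc hsymm h0
  obtain ⟨m1, m2⟩ := main_polar hKc hKconv hsymm h0
  have hp := Real.pi_pos
  have h3 : 0 < Real.sqrt 3 := by positivity
  have hV : 0 < (volume K).toReal := by
    refine ENNReal.toReal_pos ?_ hKc.measure_lt_top.ne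
    exact (Measure.measure_pos_of_nonempty_interior _ hKint).ne'
  set V := (volume K).toReal
  set W := (volume (polarBody K)).toReal
  have e1 : deltaL K = V / (4 * critDet K) := by
    unfold deltaL
    norm_num [V]
  have e2 : V / (4 * critDet K) - V * W / (2 * Real.pi * Real.sqrt 3)
      = V / (2 * Real.pi * Real.sqrt 3 * critDet K)
        * (Real.pi * Real.sqrt 3 / 2 - critDet K * W) := by
    field_simp
    ring
  have hc : 0 < V / (2 * Real.pi * Real.sqrt 3 * critDet K) := by positivity
  rw [e1]
  constructor
  · have := mul_nonneg hc.le (sub_nonneg.2 m1)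
    linarith
  · constructor
    · intro hEq
      apply m2
      rw [sub_eq_zero.2 hEq] at e2
      rcases mul_eq_zero.1 e2.symm with h | h
      · exact absurd h hc.ne'
      · linarith
    · intro hE
      have h4 := ellipse_polar hKc hsymm h0 hE
      have h5 : Real.pi * Real.sqrt 3 / 2 - critDet K * W = 0 := by linarith
      rw [h5, mul_zero] at e2
      linarith
end
end

section
/- For every convex body K in ℝ³, the smallest possible density of a non-separable lattice of translates of K satisfies d_{3,2}(K) ≤ π/(4√3). -/
open MeasureTheory Set Matrix Pointwise

noncomputable section

abbrev V3 := Fin 3 → ℝ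

def det3 (a b c : V3) : ℝ :=
  a 0 * (b 1 * c 2 - b 2 * c 1) - a 1 * (b 0 * c 2 - b 2 * c 0) + a 2 * (b 0 * c 1 - b 1 * c 0)

/-- The functional of eight points which is maximised. -/
def Gf (w : Fin 8 → V3) : ℝ :=
  det3 (w 0 - w 4) (w 1 - w 5) (w 3 - w 7) + det3 (w 1 - w 5) (w 2 - w 6) (w 3 - w 7)
    + det3 (w 2 - w 6) (w 0 - w 4) (w 3 - w 7)

def Bl (r : ℝ) : Set V3 := {x | x 0 ^ 2 + x 1 ^ 2 + x 2 ^ 2 ≤ r ^ 2}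

lemma continuous_Gf : Continuous Gf := by
  unfold Gf det3
  fun_prop

lemma Gf_linear : ∃ c : (Fin 8 → Fin 2 → ℝ) → Fin 8 → ℝ, ∀ w : Fin 8 → V3,
    Gf w = ∑ j, c (fun i => Fin.tail (w i)) j * w j 0 := by
  refine ⟨fun q j => Gf (fun i => Fin.cons (if i = j then 1 else 0) (q i)), fun w => ?_⟩
  have h1 : ∀ i (t : ℝ), (Fin.cons t (Fin.tail (w i)) : V3) 0 = t := fun i t => rfl
  have h2 : ∀ i (t : ℝ), (Fin.cons t (Fin.tail (w i)) : V3) 1 = w i 1 := fun i t => rfl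
  have h3 : ∀ i (t : ℝ), (Fin.cons t (Fin.tail (w i)) : V3) 2 = w i 2 := fun i t => rfl
  simp only [Fin.sum_univ_eight, Gf, det3, Pi.sub_apply, h1, h2, h3]
  simp
  ring

lemma isClosed_Bl (r : ℝ) : IsClosed (Bl r) :=
  isClosed_le (by fun_prop) continuous_const

lemma isCompact_Bl (r : ℝ) : IsCompact (Bl r) := by
  refine Metric.isCompact_of_isClosed_isBounded (isClosed_Bl r) ?_
  refine (Metric.isBounded_closedBall (x := (0 : V3)) (r := |r|)).subset fun x hx => ?_
  have hx : x 0 ^ 2 + x 1 ^ 2 + x 2 ^ 2 ≤ r ^ 2 := hx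
  rw [mem_closedBall_zero_iff, pi_norm_le_iff_of_nonneg (abs_nonneg r)]
  intro i
  rw [Real.norm_eq_abs]
  apply sq_le_sq.1
  fin_cases i <;> simp <;> nlinarith [sq_nonneg (x 0), sq_nonneg (x 1), sq_nonneg (x 2)]

lemma volume_Bl {r : ℝ} (hr : 0 ≤ r) : volume (Bl r) = ENNReal.ofReal (4 * Real.pi / 3 * r ^ 3) := by
  have h := (PiLp.volume_preserving_ofLp (Fin 3)).measure_preimage
    (isClosed_Bl r).measurableSet.nullMeasurableSet
  rw [← h]
  have : (@WithLp.ofLp 2 (Fin 3 → ℝ)) ⁻¹' (Bl r) = Metric.closedBall (0 : EuclideanSpace ℝ (Fin 3)) r := by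
    ext x
    simp only [mem_preimage, Bl, Set.mem_ofPred_eq, mem_closedBall_zero_iff, EuclideanSpace.norm_eq,
      Fin.sum_univ_three, Real.norm_eq_abs, sq_abs]
    rw [Real.sqrt_le_left hr]
  rw [this, EuclideanSpace.volume_closedBall_fin_three, ← ENNReal.ofReal_pow hr,
    ← ENNReal.ofReal_mul (by positivity)]
  congr 1
  ring

/-- Slicing in direction of coordinate zero. -/
def slice (A : Set V3) (q : Fin 2 → ℝ) : Set ℝ := {t | (Fin.cons t q : V3) ∈ A}

lemma measurable_cons (q : Fin 2 → ℝ) : Measurable (fun t : ℝ => (Fin.cons t q : V3)) := by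
  rw [measurable_pi_iff]
  intro i
  refine Fin.cases ?_ (fun j => ?_) i
  · exact measurable_id
  · simp

lemma continuous_cons (q : Fin 2 → ℝ) : Continuous (fun t : ℝ => (Fin.cons t q : V3)) := by
  rw [continuous_pi_iff]
  intro i
  refine Fin.cases ?_ (fun j => ?_) i
  · exact continuous_id
  · simpa using continuous_const

lemma measurableSet_slice {A : Set V3} (hA : MeasurableSet A) (q : Fin 2 → ℝ) :
    MeasurableSet (slice A q) := measurable_cons q hA

lemma volume_slice {A : Set V3} (hA : MeasurableSet A) :
    volume A = ∫⁻ q, volume (slice A q) ∧ Measurable fun q => volume (slice A q) := by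
  let e := MeasurableEquiv.piFinSuccAbove (fun _ : Fin 3 => ℝ) 0
  have he : MeasurePreserving e.symm := (volume_preserving_piFinSuccAbove (fun _ : Fin 3 => ℝ) 0).symm
  have hs : ∀ q, slice A q = (fun t => (t, q)) ⁻¹' (e.symm ⁻¹' A) := fun q => by
    ext t
    simp [slice, e, MeasurableEquiv.piFinSuccAbove]
    rfl
  have hm : MeasurableSet (e.symm ⁻¹' A) := e.symm.measurable hA
  simp only [hs]
  refine ⟨?_, measurable_measure_prodMk_right hm⟩
  rw [← he.measure_preimage hA.nullMeasurableSet]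
  exact Measure.prod_apply_symm hm

lemma det3_mulVec (Q : Matrix (Fin 3) (Fin 3) ℝ) (a b c : V3) :
    det3 (Q *ᵥ a) (Q *ᵥ b) (Q *ᵥ c) = Q.det * det3 a b c := by
  simp only [det3, Matrix.mulVec, dotProduct, Fin.sum_univ_three, Matrix.det_fin_three]
  ring

lemma Gf_mulVec (Q : Matrix (Fin 3) (Fin 3) ℝ) (w : Fin 8 → V3) :
    Gf (fun i => Q *ᵥ w i) = Q.det * Gf w := by
  simp only [Gf, ← Matrix.mulVec_sub, det3_mulVec]
  ring

lemma orth_det {Q : Matrix (Fin 3) (Fin 3) ℝ} (hQ : Qᵀ * Q = 1) : |Q.det| = 1 := by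
  have := congrArg Matrix.det hQ
  rw [Matrix.det_mul, Matrix.det_transpose, Matrix.det_one] at this
  rcases mul_self_eq_one_iff.1 this with h | h <;> simp [h]

lemma mem_Bl_iff {r : ℝ} {x : V3} : x ∈ Bl r ↔ x ⬝ᵥ x ≤ r ^ 2 := by
  simp only [Bl, Set.mem_ofPred_eq, dotProduct, Fin.sum_univ_three, pow_two]

lemma orth_mem_Bl {Q : Matrix (Fin 3) (Fin 3) ℝ} (hQ : Qᵀ * Q = 1) {r : ℝ} {x : V3} :
    Q *ᵥ x ∈ Bl r ↔ x ∈ Bl r := by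
  rw [mem_Bl_iff, mem_Bl_iff, Matrix.dotProduct_mulVec, Matrix.vecMul_mulVec, hQ, Matrix.vecMul_one]

lemma orth_measurePreserving {Q : Matrix (Fin 3) (Fin 3) ℝ} (hQ : Qᵀ * Q = 1) :
    MeasurePreserving (fun x : V3 => Q *ᵥ x) := by
  have hd := orth_det hQ
  refine ⟨(Continuous.matrix_mulVec continuous_const continuous_id).measurable, ?_⟩
  have h := Real.map_matrix_volume_pi_eq_smul_volume_pi (M := Q)
    (by intro h; rw [h] at hd; simp at hd)
  rw [abs_inv, hd] at h
  rw [inv_one, ENNReal.ofReal_one, one_smul] at h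
  exact h

/-- There is an orthogonal matrix which takes a given vector to a multiple of `e₀`. -/
lemma exists_orth (v : V3) (hv : v ≠ 0) : ∃ Q : Matrix (Fin 3) (Fin 3) ℝ, Qᵀ * Q = 1 ∧ Q * Qᵀ = 1 ∧
    ∃ s : ℝ, Q *ᵥ v = Pi.single 0 s := by
  have hvv : 0 < v ⬝ᵥ v := lt_of_le_of_ne (by simp only [dotProduct]; exact Finset.sum_nonneg fun i _ => mul_self_nonneg _)
    (fun h => hv (dotProduct_self_eq_zero.1 h.symm))
  set s := Real.sqrt (v ⬝ᵥ v) with hs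
  have hss : s * s = v 0 * v 0 + v 1 * v 1 + v 2 * v 2 := by
    rw [hs, Real.mul_self_sqrt hvv.le]; simp [dotProduct, Fin.sum_univ_three]
  by_cases hw : v = Pi.single 0 s
  · exact ⟨1, by simp, by simp, s, by simpa using hw⟩
  set w : V3 := v - Pi.single 0 s with hwd
  have hww : w ⬝ᵥ w ≠ 0 := fun h => hw (sub_eq_zero.1 (dotProduct_self_eq_zero.1 h))
  have e0 : w 0 = v 0 - s := by simp [hwd]
  have e1 : w 1 = v 1 := by simp [hwd]
  have e2 : w 2 = v 2 := by simp [hwd]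
  set k := 2 / (w ⬝ᵥ w) with hk
  have hkk : k * (w 0 * w 0 + w 1 * w 1 + w 2 * w 2) = 2 := by
    have : w 0 * w 0 + w 1 * w 1 + w 2 * w 2 = w ⬝ᵥ w := by simp [dotProduct, Fin.sum_univ_three]
    rw [this, hk]; field_simp
  let Q : Matrix (Fin 3) (Fin 3) ℝ := 1 - k • Matrix.vecMulVec w w
  have hQT : Qᵀ = Q := by
    simp only [Q, Matrix.transpose_sub, Matrix.transpose_one, Matrix.transpose_smul,
      Matrix.transpose_vecMulVec]
  have hww' : w ⬝ᵥ w * k = 2 := by rw [hk]; field_simp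
  have hQQ : Q * Q = 1 := by
    simp only [Q, mul_sub, sub_mul, mul_one, one_mul, Matrix.smul_mul, Matrix.mul_smul,
      Matrix.vecMulVec_mul_vecMulVec, smul_smul]
    ext i j
    simp [Matrix.vecMulVec_apply]
    linear_combination (k * w i * w j) * hww'
  refine ⟨Q, by rw [hQT, hQQ], by rw [hQT, hQQ], s, ?_⟩
  have key : k * (w ⬝ᵥ v) = 1 := by
    have : w ⬝ᵥ v = w 0 * v 0 + w 1 * v 1 + w 2 * v 2 := by simp [dotProduct, Fin.sum_univ_three]
    rw [this]
    rw [e0, e1, e2] at hkk ⊢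
    linear_combination hkk / 2 - k / 2 * hss
  have : Q *ᵥ v = v - (k * (w ⬝ᵥ v)) • w := by
    simp only [Q, Matrix.sub_mulVec, Matrix.one_mulVec, Matrix.smul_mulVec, Matrix.vecMulVec_mulVec]
    ext i
    simp
    ring
  rw [this, key, one_smul, hwd]
  simp

def ell (C : Set V3) (q : Fin 2 → ℝ) : ℝ := (volume (slice C q)).toReal

/-- The (open) Steiner symmetral in direction of coordinate zero. -/
def St (C : Set V3) : Set V3 := {x | |x 0| < ell C (Fin.tail x) / 2}

lemma isCompact_slice {C : Set V3} (hC : IsCompact C) (q : Fin 2 → ℝ) : IsCompact (slice C q) := by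
  refine (hC.image (continuous_apply 0)).of_isClosed_subset (hC.isClosed.preimage (continuous_cons q)) ?_
  intro t ht
  exact ⟨_, ht, rfl⟩

lemma slice_St (C : Set V3) (q : Fin 2 → ℝ) : slice (St C) q = Ioo (-(ell C q / 2)) (ell C q / 2) := by
  ext t
  have : (Fin.tail (Fin.cons t q : V3)) = q := Fin.tail_cons (α := fun _ => ℝ) t q
  simp only [slice, St, Set.mem_ofPred_eq, mem_Ioo, ← abs_lt]
  rw [this]
  rfl

lemma volume_slice_St {C : Set V3} (hC : IsCompact C) (q : Fin 2 → ℝ) :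
    volume (slice (St C) q) = volume (slice C q) := by
  rw [slice_St, Real.volume_Ioo, ← ENNReal.ofReal_toReal (isCompact_slice hC q).measure_lt_top.ne]
  congr 1
  simp only [ell]
  ring

lemma measurableSet_St {C : Set V3} (hC : IsCompact C) : MeasurableSet (St C) := by
  have h1 : Measurable (ell C) := (volume_slice hC.measurableSet).2.ennreal_toReal
  have h2 : Measurable fun x : V3 => Fin.tail x := by
    rw [measurable_pi_iff]
    intro i
    exact measurable_pi_apply _
  exact measurableSet_lt (by fun_prop) ((h1.comp h2).div_const 2)

lemma volume_St {C : Set V3} (hC : IsCompact C) : volume (St C) = volume C := by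
  rw [(volume_slice (measurableSet_St hC)).1, (volume_slice hC.measurableSet).1]
  simp only [volume_slice_St hC]

lemma exists_ends {C : Set V3} (hC : IsCompact C) {x : V3} (hx : x ∈ St C) :
    ∃ a b : ℝ, (Fin.cons a (Fin.tail x) : V3) ∈ C ∧ (Fin.cons b (Fin.tail x) : V3) ∈ C ∧
      2 * |x 0| ≤ b - a := by
  have hx : |x 0| < ell C (Fin.tail x) / 2 := hx
  have hc := isCompact_slice hC (Fin.tail x)
  have hne : (slice C (Fin.tail x)).Nonempty := by
    rw [nonempty_iff_ne_empty]
    intro h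
    have : ell C (Fin.tail x) = 0 := by simp [ell, h]
    have := abs_nonneg (x 0)
    linarith
  refine ⟨_, _, hc.sInf_mem hne, hc.sSup_mem hne, ?_⟩
  have hsub : slice C (Fin.tail x) ⊆ Icc (sInf (slice C (Fin.tail x))) (sSup (slice C (Fin.tail x))) :=
    fun t ht => ⟨csInf_le hc.bddBelow ht, le_csSup hc.bddAbove ht⟩
  have h0 : sInf (slice C (Fin.tail x)) ≤ sSup (slice C (Fin.tail x)) :=
    csInf_le_csSup hne hc.bddBelow hc.bddAbove
  have := ENNReal.toReal_mono (by simp) (measure_mono (μ := volume) hsub)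
  rw [Real.volume_Icc, ENNReal.toReal_ofReal (by linarith)] at this
  have : ell C (Fin.tail x) ≤ _ := this
  linarith

def GBound (g : ℝ) (C : Set V3) : Prop := ∀ w : Fin 8 → V3, (∀ j, w j ∈ C) → |Gf w| ≤ g

lemma GBound_St {C : Set V3} (hC : IsCompact C) {g : ℝ} (hG : GBound g C) : GBound g (St C) := by
  intro w hw
  choose a b ha hb hab using fun j => exists_ends hC (hw j)
  obtain ⟨c, hc⟩ := Gf_linear
  set d := c (fun i => Fin.tail (w i)) with hd
  have key : ∀ t : Fin 8 → ℝ, Gf (fun i => Fin.cons (t i) (Fin.tail (w i))) = ∑ j, d j * t j := by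
    intro t
    rw [hc]
    rfl
  have h1 := hG (fun i => Fin.cons (if 0 ≤ d i then b i else a i) (Fin.tail (w i)))
    (fun j => by split_ifs; exacts [hb j, ha j])
  have h2 := hG (fun i => Fin.cons (if 0 ≤ d i then a i else b i) (Fin.tail (w i)))
    (fun j => by split_ifs; exacts [ha j, hb j])
  rw [key] at h1 h2
  rw [hc w]
  change |∑ j, d j * w j 0| ≤ g
  have h3 : 2 * |∑ j, d j * w j 0| ≤ ∑ j, d j * (if 0 ≤ d j then b j else a j)
      - ∑ j, d j * (if 0 ≤ d j then a j else b j) := by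
    rw [← Finset.sum_sub_distrib]
    calc 2 * |∑ j, d j * w j 0| ≤ 2 * ∑ j, |d j * w j 0| := by
          gcongr; exact Finset.abs_sum_le_sum_abs _ _
      _ = ∑ j, |d j| * (2 * |w j 0|) := by
          rw [Finset.mul_sum]; refine Finset.sum_congr rfl fun j _ => ?_; rw [abs_mul]; ring
      _ ≤ ∑ j, |d j| * (b j - a j) := by gcongr with j; exact hab j
      _ ≤ _ := by
          refine Finset.sum_le_sum fun j _ => ?_
          split_ifs with h
          · rw [abs_of_nonneg h]; linarith
          · rw [abs_of_neg (not_le.1 h)]; linarith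
  have := abs_le.1 h1
  have := abs_le.1 h2
  linarith

lemma GBound_closure {C : Set V3} {g : ℝ} (hG : GBound g C) : GBound g (closure C) := by
  intro w hw
  have h1 : w ∈ closure (Set.pi univ fun _ : Fin 8 => C) := by
    rw [closure_pi_set]; exact fun j _ => hw j
  have h2 : IsClosed {w : Fin 8 → V3 | |Gf w| ≤ g} := isClosed_le continuous_Gf.abs continuous_const
  have h3 : (Set.pi univ fun _ : Fin 8 => C) ⊆ {w : Fin 8 → V3 | |Gf w| ≤ g} :=
    fun w hw => hG w fun j => hw j (mem_univ j)
  exact closure_minimal h3 h2 h1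

lemma slice_Bl (r : ℝ) (q : Fin 2 → ℝ) : slice (Bl r) q = {t | t ^ 2 ≤ r ^ 2 - q 0 ^ 2 - q 1 ^ 2} := by
  ext t
  have h0 : (Fin.cons t q : V3) 0 = t := rfl
  have h1 : (Fin.cons t q : V3) 1 = q 0 := rfl
  have h2 : (Fin.cons t q : V3) 2 = q 1 := rfl
  simp only [slice, Bl, Set.mem_ofPred_eq, h0, h1, h2]
  constructor <;> intro h <;> linarith

lemma St_subset_Bl {C : Set V3} {R : ℝ} (hCR : C ⊆ Bl R) : St C ⊆ Bl R := by
  intro x hx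
  have hx : |x 0| < ell C (Fin.tail x) / 2 := hx
  set q := Fin.tail x with hq
  have q0 : q 0 = x 1 := rfl
  have q1 : q 1 = x 2 := rfl
  set h := R ^ 2 - q 0 ^ 2 - q 1 ^ 2 with hh
  have hsub : slice C q ⊆ Icc (-Real.sqrt h) (Real.sqrt h) := by
    intro t ht
    have : t ∈ slice (Bl R) q := hCR ht
    rw [slice_Bl] at this
    exact abs_le.1 (Real.abs_le_sqrt this)
  have h1 := ENNReal.toReal_mono (by simp) (measure_mono (μ := volume) hsub)
  rw [Real.volume_Icc, ENNReal.toReal_ofReal (by linarith [Real.sqrt_nonneg h])] at h1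
  have h1 : ell C q ≤ _ := h1
  have h2 : |x 0| < Real.sqrt h := by linarith
  have h3 := (Real.lt_sqrt (abs_nonneg _)).1 h2
  rw [sq_abs] at h3
  change x 0 ^ 2 + x 1 ^ 2 + x 2 ^ 2 ≤ R ^ 2
  rw [hh, q0, q1] at h3
  linarith

lemma slice_nested (C : Set V3) (r : ℝ) (q : Fin 2 → ℝ) :
    slice (St C) q ⊆ slice (Bl r) q ∨ slice (Bl r) q ⊆ slice (St C) q := by
  rw [or_iff_not_imp_left, not_subset]
  rintro ⟨t, ht, htB⟩ b hb
  rw [slice_St, mem_Ioo, ← abs_lt] at ht ⊢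
  rw [slice_Bl] at hb htB
  have hb : b ^ 2 ≤ _ := hb
  have htB : ¬ (t ^ 2 ≤ _) := htB
  exact (sq_lt_sq.1 (by linarith)).trans ht

/-- Steiner symmetrization strictly increases the overlap with the ball when there are enough lines
meeting both differences. -/
lemma overlap_lt {C : Set V3} (hC : IsCompact C) {r s : ℝ} {E : Set V3}
    (mE : MeasurableSet E) (hEA : E ⊆ Bl r \ C) (hED : ∀ x ∈ E, x - Pi.single 0 s ∈ C \ Bl r)
    (h : volume E ≠ 0) :
    volume (C ∩ Bl r) < volume (St C ∩ Bl r) := by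
  have mC := hC.measurableSet
  have mB := (isClosed_Bl r).measurableSet
  have mS := measurableSet_St hC
  rw [(volume_slice (mC.inter mB)).1, (volume_slice (mS.inter mB)).1]
  have fin : ∀ q, volume (slice C q) ≠ ⊤ := fun q => (isCompact_slice hC q).measure_lt_top.ne
  have finB : ∀ q, volume (slice (Bl r) q) ≠ ⊤ :=
    fun q => (isCompact_slice (isCompact_Bl r) q).measure_lt_top.ne
  have hle : ∀ q, volume (slice (C ∩ Bl r) q) ≤ volume (slice (St C ∩ Bl r) q) := by
    intro q
    rcases slice_nested C r q with hn | hn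
    · have : slice (St C ∩ Bl r) q = slice (St C) q := inter_eq_left.2 hn
      rw [this, volume_slice_St hC]
      exact measure_mono fun t ht => ht.1
    · have : slice (St C ∩ Bl r) q = slice (Bl r) q := inter_eq_right.2 hn
      rw [this]
      exact measure_mono fun t ht => ht.2
  have hlt : ∀ q, volume (slice E q) ≠ 0 →
      volume (slice (C ∩ Bl r) q) < volume (slice (St C ∩ Bl r) q) := by
    intro q hq
    have hA : volume (slice (Bl r) q \ slice C q) ≠ 0 := fun h0 =>
      hq (measure_mono_null (fun t ht => hEA ht) h0)
    have hD : volume (slice C q \ slice (Bl r) q) ≠ 0 := fun h0 => by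
      apply hq
      have h1 : volume ((fun t => t + (-s)) ⁻¹' (slice C q \ slice (Bl r) q)) = 0 := by
        rw [measure_preimage_add_right]; exact h0
      refine measure_mono_null (fun t ht => ?_) h1
      have h2 : (Fin.cons t q : V3) - Pi.single 0 s ∈ C \ Bl r := hED _ ht
      have h3 : (Fin.cons t q : V3) - Pi.single 0 s = Fin.cons (t + -s) q := by
        ext i
        refine Fin.cases ?_ (fun j => ?_) i
        · simp [sub_eq_add_neg]
        · simp
      rw [h3] at h2
      exact h2
    have mCq := measurableSet_slice mC q
    have mBq := measurableSet_slice mB q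
    have hi : slice (C ∩ Bl r) q = slice C q ∩ slice (Bl r) q := rfl
    rcases slice_nested C r q with hn | hn
    · have : slice (St C ∩ Bl r) q = slice (St C) q := inter_eq_left.2 hn
      rw [this, volume_slice_St hC, hi, ← measure_inter_add_sdiff (slice C q) mBq]
      exact ENNReal.lt_add_right (measure_ne_top_of_subset inter_subset_left (fin q)) hD
    · have : slice (St C ∩ Bl r) q = slice (Bl r) q := inter_eq_right.2 hn
      rw [this, hi, ← measure_inter_add_sdiff (slice (Bl r) q) mCq, inter_comm]
      exact ENNReal.lt_add_right (measure_ne_top_of_subset inter_subset_left (finB q)) hA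
  refine lintegral_strict_mono_of_ae_le_of_ae_lt_on
    (s := {q | volume (slice E q) ≠ 0})
    (volume_slice (mS.inter mB)).2.aemeasurable ?_ (Filter.Eventually.of_forall hle) ?_
    (Filter.Eventually.of_forall hlt)
  · rw [← (volume_slice (mC.inter mB)).1]
    exact measure_ne_top_of_subset inter_subset_left hC.measure_lt_top.ne
  · intro h0
    apply h
    rw [(volume_slice mE).1, lintegral_eq_zero_iff (volume_slice mE).2]
    exact h0

open TopologicalSpace in
/-- The class of compact sets in which the extremal set is sought. -/
def Cls (R g r : ℝ) : Set (NonemptyCompacts V3) :=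
  {C | (C : Set V3) ⊆ Bl R ∧ GBound g C ∧ volume (Bl r) ≤ volume (C : Set V3)}

open TopologicalSpace in
lemma usc_measure (μ : Measure V3) [μ.OuterRegular] :
    UpperSemicontinuous fun C : NonemptyCompacts V3 => μ (C : Set V3) := by
  intro C a ha
  obtain ⟨U, hCU, hU, hlt⟩ := (C : Set V3).exists_isOpen_lt_of_lt a ha
  filter_upwards [(NonemptyCompacts.isOpen_subsets_of_isOpen hU).mem_nhds hCU] with D hD
  exact (measure_mono hD).trans_lt hlt

open TopologicalSpace in
lemma isClosed_GBound (g : ℝ) : IsClosed {C : NonemptyCompacts V3 | GBound g C} := by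
  rw [← isOpen_compl_iff, isOpen_iff_mem_nhds]
  intro C hC
  have hC : ¬ GBound g (C : Set V3) := hC
  unfold GBound at hC
  push Not at hC
  obtain ⟨w, hw, hg⟩ := hC
  have h1 : {w : Fin 8 → V3 | g < |Gf w|} ∈ nhds w :=
    (isOpen_lt continuous_const continuous_Gf.abs).mem_nhds hg
  rw [nhds_pi, Filter.mem_pi'] at h1
  obtain ⟨I, t, ht, hsub⟩ := h1
  have h2 : ∀ j, ∀ᶠ D : NonemptyCompacts V3 in nhds C, ((D : Set V3) ∩ interior (t j)).Nonempty :=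
    fun j => (NonemptyCompacts.isOpen_inter_nonempty_of_isOpen isOpen_interior).mem_nhds
      ⟨w j, hw j, mem_interior_iff_mem_nhds.2 (ht j)⟩
  filter_upwards [Filter.eventually_all.2 h2] with D hD hDG
  choose y hy using hD
  have h3 : g < |Gf y| := hsub fun j _ => interior_subset (hy j).2
  exact absurd (hDG y fun j => (hy j).1) (not_le.2 h3)

lemma isCompact_Cls (R g r : ℝ) : IsCompact (Cls R g r) := by
  have h1 := TopologicalSpace.NonemptyCompacts.isCompact_subsets_of_isCompact (isCompact_Bl R)
  have h2 := (usc_measure volume).isClosed_preimage (volume (Bl r))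
  exact h1.inter_right ((isClosed_GBound g).inter h2)

/-- Two sets of positive measure overlap after some translation. -/
lemma exists_translate {A D : Set V3} (hA : MeasurableSet A) (hD : MeasurableSet D)
    (hA0 : volume A ≠ 0) (hD0 : volume D ≠ 0) :
    ∃ v : V3, volume (A ∩ {x | x - v ∈ D}) ≠ 0 := by
  by_contra! hcon
  have h1 : ∫⁻ x, ∫⁻ v, (A ×ˢ D).indicator 1 (x, x - v) = ∫⁻ v, ∫⁻ x, (A ×ˢ D).indicator (1 : V3 × V3 → ENNReal) (x, x - v) := by
    apply lintegral_lintegral_swap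
    refine Measurable.aemeasurable ?_
    exact (measurable_one.indicator (hA.prod hD)).comp (measurable_fst.prodMk (measurable_fst.sub measurable_snd))
  have h2 : ∀ v, ∫⁻ x, (A ×ˢ D).indicator (1 : V3 × V3 → ENNReal) (x, x - v) = 0 := by
    intro v
    have hm : MeasurableSet {x : V3 | x - v ∈ D} := (measurable_id.sub_const v) hD
    rw [← hcon v, ← lintegral_indicator_one (hA.inter hm)]
    rfl
  have h3 : ∀ x, ∫⁻ v, (A ×ˢ D).indicator (1 : V3 × V3 → ENNReal) (x, x - v) = A.indicator 1 x * volume D := by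
    intro x
    rw [lintegral_sub_left_eq_self (fun v => (A ×ˢ D).indicator (1 : V3 × V3 → ENNReal) (x, v)) x]
    rw [← lintegral_indicator_one hD, ← lintegral_const_mul _ (measurable_one.indicator hD)]
    congr 1
    ext v
    by_cases hx : x ∈ A <;> by_cases hv : v ∈ D <;> simp [hx, hv]
  simp only [h2, h3, lintegral_zero] at h1
  rw [lintegral_mul_const _ (measurable_one.indicator hA), lintegral_indicator_one hA] at h1
  exact (mul_ne_zero hA0 hD0) h1

lemma image_mem_Cls {Q : Matrix (Fin 3) (Fin 3) ℝ} (hQ : Qᵀ * Q = 1) (hQ' : Q * Qᵀ = 1) {R g r : ℝ}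
    {C : TopologicalSpace.NonemptyCompacts V3} (hC : C ∈ Cls R g r) :
    ∃ C' ∈ Cls R g r, ∀ x, x ∈ C' ↔ Qᵀ *ᵥ x ∈ C := by
  have hcont : Continuous fun x : V3 => Q *ᵥ x := Continuous.matrix_mulVec continuous_const continuous_id
  have hinv : ∀ x, Q *ᵥ (Qᵀ *ᵥ x) = x := fun x => by rw [Matrix.mulVec_mulVec, hQ', Matrix.one_mulVec]
  have hinv' : ∀ x, Qᵀ *ᵥ (Q *ᵥ x) = x := fun x => by rw [Matrix.mulVec_mulVec, hQ, Matrix.one_mulVec]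
  have hmem : ∀ x, x ∈ C.map _ hcont ↔ Qᵀ *ᵥ x ∈ C := by
    intro x
    rw [← SetLike.mem_coe, TopologicalSpace.NonemptyCompacts.coe_map]
    constructor
    · rintro ⟨y, hy, rfl⟩
      rw [hinv']
      exact hy
    · intro h
      exact ⟨_, h, hinv x⟩
  refine ⟨C.map _ hcont, ⟨?_, ?_, ?_⟩, hmem⟩
  · intro x hx
    have := hC.1 ((hmem x).1 hx)
    rwa [← orth_mem_Bl hQ, hinv] at this
  · intro w hw
    have h1 := hC.2.1 (fun j => Qᵀ *ᵥ w j) fun j => (hmem _).1 (hw j)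
    rw [Gf_mulVec, abs_mul, orth_det (by simpa using hQ'), one_mul] at h1
    exact h1
  · refine hC.2.2.trans (le_of_eq ?_)
    rw [← (orth_measurePreserving (Q := Qᵀ) (by simpa using hQ')).measure_preimage
      C.isCompact.measurableSet.nullMeasurableSet]
    congr 1
    ext x
    exact (hmem x).symm

/-- The extremal set contains the ball up to measure zero. -/
lemma exists_extremal {R g r : ℝ} (hne : (Cls R g r).Nonempty) :
    ∃ C ∈ Cls R g r, volume (Bl r \ (C : Set V3)) = 0 := by
  have hfin : IsFiniteMeasure (volume.restrict (Bl r)) :=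
    ⟨by simpa using (isCompact_Bl r).measure_lt_top⟩
  obtain ⟨C, hC, hmax⟩ := UpperSemicontinuousOn.exists_isMaxOn hne (isCompact_Cls R g r)
    ((usc_measure (volume.restrict (Bl r))).upperSemicontinuousOn _)
  refine ⟨C, hC, ?_⟩
  have hmax : ∀ C' ∈ Cls R g r, volume ((C' : Set V3) ∩ Bl r) ≤ volume ((C : Set V3) ∩ Bl r) := by
    intro C' hC'
    have h := hmax hC'
    simpa only [Set.mem_ofPred_eq, Measure.restrict_apply' (isClosed_Bl r).measurableSet] using h
  have mC := C.isCompact.measurableSet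
  have mB := (isClosed_Bl r).measurableSet
  by_contra hA
  have hD : volume ((C : Set V3) \ Bl r) ≠ 0 := by
    intro hD
    have h1 := hC.2.2
    rw [← measure_inter_add_sdiff (Bl r) mC, ← measure_inter_add_sdiff (C : Set V3) mB, hD, add_zero,
      inter_comm] at h1
    exact absurd h1 (not_le.2 (ENNReal.lt_add_right
      (measure_ne_top_of_subset inter_subset_left C.isCompact.measure_lt_top.ne) hA))
  obtain ⟨v, hv⟩ := exists_translate (mB.diff mC) (mC.diff mB) hA hD
  have hv0 : v ≠ 0 := by
    rintro rfl
    apply hv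
    convert measure_empty (μ := (volume : Measure V3))
    ext x
    simp
    tauto
  obtain ⟨Q, hQ, hQ', s, hs⟩ := exists_orth v hv0
  obtain ⟨C', hC', hmem⟩ := image_mem_Cls hQ hQ' hC
  have hT : Qᵀᵀ * Qᵀ = 1 := by simpa using hQ'
  have mp := orth_measurePreserving hT
  have hv' : Qᵀ *ᵥ (Pi.single 0 s) = v := by
    rw [← hs, Matrix.mulVec_mulVec, hQ, Matrix.one_mulVec]
  have mT : MeasurableSet {x : V3 | x - v ∈ (C : Set V3) \ Bl r} := (measurable_id.sub_const v) (mC.diff mB)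
  have mT' : MeasurableSet {x : V3 | x - Pi.single 0 s ∈ (C' : Set V3) \ Bl r} :=
    (measurable_id.sub_const _) (C'.isCompact.measurableSet.diff mB)
  have e1 : volume ((Bl r \ (C' : Set V3)) ∩ {x | x - Pi.single 0 s ∈ (C' : Set V3) \ Bl r}) ≠ 0 := by
    rw [← mp.measure_preimage ((mB.diff mC).inter mT).nullMeasurableSet] at hv
    convert hv using 2
    ext x
    simp only [mem_inter_iff, mem_sdiff, mem_preimage, Set.mem_ofPred_eq, SetLike.mem_coe, hmem,
      orth_mem_Bl hT, Matrix.mulVec_sub, hv', ← orth_mem_Bl hT (x := x - Pi.single 0 s)]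
  have e2 := overlap_lt C'.isCompact ((mB.diff C'.isCompact.measurableSet).inter mT')
    inter_subset_left (fun x hx => hx.2) e1
  have e3 : volume ((C' : Set V3) ∩ Bl r) = volume ((C : Set V3) ∩ Bl r) := by
    rw [← mp.measure_preimage (mC.inter mB).nullMeasurableSet]
    congr 1
    ext x
    simp only [mem_inter_iff, mem_preimage, SetLike.mem_coe, hmem, orth_mem_Bl hT]
  have hclR : closure (St (C' : Set V3)) ⊆ Bl R := closure_minimal (St_subset_Bl hC'.1) (isClosed_Bl R)
  have hneS : (St (C' : Set V3)).Nonempty := by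
    rw [nonempty_iff_ne_empty]
    intro h
    rw [h] at e2
    simp at e2
  let C'' : TopologicalSpace.NonemptyCompacts V3 :=
    ⟨⟨closure (St (C' : Set V3)), (isCompact_Bl R).of_isClosed_subset isClosed_closure hclR⟩, hneS.closure⟩
  have hC'' : C'' ∈ Cls R g r := by
    refine ⟨hclR, GBound_closure (GBound_St C'.isCompact hC'.2.1), hC'.2.2.trans ?_⟩
    rw [← volume_St C'.isCompact]
    exact measure_mono subset_closure
  have e4 := hmax C'' hC''
  have e5 : volume (St (C' : Set V3) ∩ Bl r) ≤ volume ((C'' : Set V3) ∩ Bl r) :=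
    measure_mono (inter_subset_inter_left _ subset_closure)
  exact absurd (e2.trans_le (e5.trans e4)) (by rw [e3]; exact lt_irrefl _)

lemma GBound_ball {g r : ℝ} (hr : 0 < r) {C : Set V3} (hC : IsClosed C)
    (h0 : volume (Bl r \ C) = 0) (hG : GBound g C) : 12 * Real.sqrt 3 * r ^ 3 ≤ g := by
  let U : Set V3 := {x | x 0 ^ 2 + x 1 ^ 2 + x 2 ^ 2 < r ^ 2}
  have hU : IsOpen U := isOpen_lt (by fun_prop) continuous_const
  have hUC : U ⊆ C := by
    have hUB : U ⊆ Bl r := fun x hx => le_of_lt (show x 0 ^ 2 + x 1 ^ 2 + x 2 ^ 2 < r ^ 2 from hx)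
    have h1 : volume (U \ C) = 0 := measure_mono_null (sdiff_subset_sdiff_left hUB) h0
    have h2 := (hU.sdiff hC).measure_eq_zero_iff volume |>.1 h1
    exact sdiff_eq_empty.1 h2
  have h3 : Real.sqrt 3 * Real.sqrt 3 = 3 := Real.mul_self_sqrt (by norm_num)
  have key : ∀ s : ℝ, 0 < s → s < r → 12 * Real.sqrt 3 * s ^ 3 ≤ g := by
    intro s hs hsr
    let a : V3 := ![s, 0, 0]
    let b : V3 := ![-s / 2, s * Real.sqrt 3 / 2, 0]
    let c : V3 := ![-s / 2, -s * Real.sqrt 3 / 2, 0]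
    let z : V3 := ![0, 0, s]
    have := hG ![a, b, c, z, -a, -b, -c, -z] (by
      intro j
      apply hUC
      fin_cases j <;> simp [U, a, b, c, z] <;> nlinarith)
    have e : Gf ![a, b, c, z, -a, -b, -c, -z] = 12 * Real.sqrt 3 * s ^ 3 := by
      simp [Gf, det3, a, b, c, z]
      ring
    rw [e] at this
    exact (le_abs_self _).trans this
  have hlim : Filter.Tendsto (fun s : ℝ => 12 * Real.sqrt 3 * s ^ 3) (nhdsWithin r (Iio r))
      (nhds (12 * Real.sqrt 3 * r ^ 3)) :=
    (Continuous.tendsto (by fun_prop) r).mono_left nhdsWithin_le_nhds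
  refine le_of_tendsto hlim ?_
  filter_upwards [Ioo_mem_nhdsLT hr] with s hs
  exact key s hs.1 hs.2

/-- Macbeath-type inequality. -/
lemma macbeath {K : Set V3} (hK : IsCompact K) (h0 : 0 < (volume K).toReal) :
    ∃ w : Fin 8 → V3, (∀ j, w j ∈ K) ∧ 9 * Real.sqrt 3 / Real.pi * (volume K).toReal ≤ Gf w := by
  have hne : K.Nonempty := by
    rw [nonempty_iff_ne_empty]; rintro rfl; simp at h0
  have hcp : IsCompact (Set.pi univ fun _ : Fin 8 => K) := isCompact_univ_pi fun _ => hK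
  obtain ⟨w, hw, hmax⟩ := hcp.exists_isMaxOn (univ_pi_nonempty_iff.2 fun _ => hne) continuous_Gf.continuousOn
  refine ⟨w, fun j => hw j (mem_univ j), ?_⟩
  have hG : GBound (Gf w) K := by
    intro y hy
    rw [abs_le']
    refine ⟨hmax fun j _ => hy j, ?_⟩
    have := hmax (show ![y 0, y 1, y 2, y 7, y 4, y 5, y 6, y 3] ∈ Set.pi univ fun _ : Fin 8 => K by
      intro j _
      fin_cases j <;> simp [hy])
    refine le_trans (le_of_eq ?_) this
    simp [Gf, det3]
    ring
  obtain ⟨R, hR⟩ : ∃ R, K ⊆ Bl R := by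
    obtain ⟨M, hM⟩ := hK.exists_bound_of_continuousOn
      (f := fun x : V3 => x 0 ^ 2 + x 1 ^ 2 + x 2 ^ 2) (Continuous.continuousOn (by fun_prop))
    refine ⟨M + 1, fun x hx => ?_⟩
    have h1 := hM x hx
    have h2 := norm_nonneg (x 0 ^ 2 + x 1 ^ 2 + x 2 ^ 2)
    have h3 := Real.le_norm_self (x 0 ^ 2 + x 1 ^ 2 + x 2 ^ 2)
    change x 0 ^ 2 + x 1 ^ 2 + x 2 ^ 2 ≤ (M + 1) ^ 2
    nlinarith
  set v := (volume K).toReal with hv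
  have hp := Real.pi_pos
  set r := (3 * v / (4 * Real.pi)) ^ ((1 : ℝ) / 3) with hr
  have hr0 : 0 < r := by positivity
  have hr3 : r ^ 3 = 3 * v / (4 * Real.pi) := by
    rw [hr, ← Real.rpow_natCast, ← Real.rpow_mul (by positivity)]
    norm_num
  have hvol : volume (Bl r) = volume K := by
    rw [volume_Bl hr0.le, hr3, ← ENNReal.ofReal_toReal hK.measure_lt_top.ne]
    congr 1
    rw [← hv]
    field_simp
  obtain ⟨C, hC, hC0⟩ := exists_extremal (R := R) (g := Gf w) (r := r)
    ⟨⟨⟨K, hK⟩, hne⟩, hR, hG, hvol.le⟩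
  have := GBound_ball hr0 C.isCompact.isClosed hC0 hC.2.1
  rw [hr3] at this
  refine le_trans (le_of_eq ?_) this
  field_simp
  ring

lemma conv_bound {x y s lam mu al : ℝ} (hl : 0 ≤ lam) (hm : 0 ≤ mu) (hal : 0 < al)
    (hsum : lam + mu = al) (h : al * s = lam * x + mu * y) (hxy : 0 < x * y) :
    |x| ≤ |s| ∨ |y| ≤ |s| := by
  by_contra! hc
  obtain ⟨h1, h2⟩ := hc
  rcases pos_and_pos_or_neg_and_neg_of_mul_pos hxy with ⟨hx, hy⟩ | ⟨hx, hy⟩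
  · rw [abs_of_pos hx] at h1
    rw [abs_of_pos hy] at h2
    have h3 := le_abs_self s
    have : al * s < al * s := by
      nth_rewrite 2 [h]
      rw [← hsum]
      rcases hl.lt_or_eq with h4 | h4
      · nlinarith
      · subst h4; nlinarith
    exact lt_irrefl _ this
  · rw [abs_of_neg hx] at h1
    rw [abs_of_neg hy] at h2
    have h3 := neg_abs_le s
    have : al * s < al * s := by
      nth_rewrite 1 [h]
      rw [← hsum]
      rcases hl.lt_or_eq with h4 | h4
      · nlinarith
      · subst h4; nlinarith
    exact lt_irrefl _ this

lemma schur_ineq {x y z : ℝ} (hx : 0 < x) (hy : 0 < y) (hz : 0 < z) :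
    (x + y + z) * (4 * x * y - (x + y - z) ^ 2) ≤ 9 * x * y * z := by
  rcases le_total x y with h1 | h1 <;> rcases le_total y z with h2 | h2 <;>
    rcases le_total x z with h3 | h3 <;>
    nlinarith [mul_nonneg (sub_nonneg.2 h1) (sub_nonneg.2 h2), mul_nonneg (sub_nonneg.2 h1) (sub_nonneg.2 h3),
      mul_nonneg (sub_nonneg.2 h2) (sub_nonneg.2 h3), sq_nonneg (x - y), sq_nonneg (y - z), sq_nonneg (x - z),
      mul_nonneg hx.le (mul_nonneg (sub_nonneg.2 h1) (sub_nonneg.2 h3)),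
      mul_nonneg hy.le (mul_nonneg (sub_nonneg.2 h1) (sub_nonneg.2 h2)),
      mul_nonneg hz.le (mul_nonneg (sub_nonneg.2 h2) (sub_nonneg.2 h3)),
      mul_nonneg (sub_nonneg.2 h1) (sq_nonneg (x - y)), mul_nonneg (sub_nonneg.2 h2) (sq_nonneg (y - z)),
      mul_nonneg (sub_nonneg.2 h3) (sq_nonneg (x - z)),
      mul_nonneg hx.le (sq_nonneg (y - z)), mul_nonneg hy.le (sq_nonneg (x - z)), mul_nonneg hz.le (sq_nonneg (x - y)),
      mul_nonneg (sub_nonneg.2 h1) (mul_nonneg (sub_nonneg.2 h2) (sub_nonneg.2 h3))]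

lemma eq_zero_of_dots {a b c u : V3} (h : det3 a b c ≠ 0) (ha : u ⬝ᵥ a = 0) (hb : u ⬝ᵥ b = 0)
    (hc : u ⬝ᵥ c = 0) : u = 0 := by
  simp only [dotProduct, Fin.sum_univ_three] at ha hb hc
  have h0 : det3 a b c * u 0 = 0 := by
    simp only [det3]
    linear_combination (b 1 * c 2 - b 2 * c 1) * ha + (c 1 * a 2 - c 2 * a 1) * hb + (a 1 * b 2 - a 2 * b 1) * hc
  have h1 : det3 a b c * u 1 = 0 := by
    simp only [det3]
    linear_combination (b 2 * c 0 - b 0 * c 2) * ha + (c 2 * a 0 - c 0 * a 2) * hb + (a 2 * b 0 - a 0 * b 2) * hc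
  have h2 : det3 a b c * u 2 = 0 := by
    simp only [det3]
    linear_combination (b 0 * c 1 - b 1 * c 0) * ha + (c 0 * a 1 - c 1 * a 0) * hb + (a 0 * b 1 - a 1 * b 0) * hc
  have h0 := (mul_eq_zero.1 h0).resolve_left h
  have h1 := (mul_eq_zero.1 h1).resolve_left h
  have h2 := (mul_eq_zero.1 h2).resolve_left h
  ext i
  fin_cases i <;> simp [h0, h1, h2]

/-- The numbers which are the values of `u` on the lattice spanned by `a, b, c` contain a
nonzero one of absolute value at most that of the value on one of the points of `P`. -/
def GoodBasis (P : Set V3) (a b c : V3) : Prop :=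
  ∀ u : V3, u ≠ 0 → ∃ k l m : ℤ, ∃ d ∈ P,
    0 < |k * (u ⬝ᵥ a) + l * (u ⬝ᵥ b) + m * (u ⬝ᵥ c)| ∧
      |k * (u ⬝ᵥ a) + l * (u ⬝ᵥ b) + m * (u ⬝ᵥ c)| ≤ |u ⬝ᵥ d|

lemma goodBasis_octahedron {P : Set V3} {a b c : V3} (ha : a ∈ P) (hb : b ∈ P) (hc : c ∈ P)
    (h : det3 a b c ≠ 0) : GoodBasis P a b c := by
  intro u hu
  by_cases h1 : u ⬝ᵥ a = 0
  · by_cases h2 : u ⬝ᵥ b = 0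
    · by_cases h3 : u ⬝ᵥ c = 0
      · exact absurd (eq_zero_of_dots h h1 h2 h3) hu
      · exact ⟨0, 0, 1, c, hc, by simpa using h3, by simp⟩
    · exact ⟨0, 1, 0, b, hb, by simpa using h2, by simp⟩
  · exact ⟨1, 0, 0, a, ha, by simpa using h1, by simp⟩

lemma exists_basis {P : Set V3} {p q r z : V3} (hp : p ∈ P) (hq : q ∈ P) (hr : r ∈ P) (hz : z ∈ P)
    {F : ℝ} (hF : 0 < F) (hFe : F = det3 p q z + det3 q r z + det3 r p z) :
    ∃ a b c, 4 * F / 9 ≤ |det3 a b c| ∧ GoodBasis P a b c := by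
  by_cases h1 : 4 * F / 9 ≤ |det3 p q z|
  · exact ⟨p, q, z, h1, goodBasis_octahedron hp hq hz (abs_pos.1 (by linarith))⟩
  by_cases h2 : 4 * F / 9 ≤ |det3 q r z|
  · exact ⟨q, r, z, h2, goodBasis_octahedron hq hr hz (abs_pos.1 (by linarith))⟩
  by_cases h3 : 4 * F / 9 ≤ |det3 r p z|
  · exact ⟨r, p, z, h3, goodBasis_octahedron hr hp hz (abs_pos.1 (by linarith))⟩
  push Not at h1 h2 h3
  have cramer : ∀ u : V3, u ⬝ᵥ z = 0 →
      det3 q r z * (u ⬝ᵥ p) + det3 r p z * (u ⬝ᵥ q) + det3 p q z * (u ⬝ᵥ r) = 0 := by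
    intro u hu
    simp only [dotProduct, Fin.sum_univ_three, det3] at hu ⊢
    linear_combination (p 0 * (q 1 * r 2 - q 2 * r 1) - p 1 * (q 0 * r 2 - q 2 * r 0)
      + p 2 * (q 0 * r 1 - q 1 * r 0)) * hu
  set x := det3 q r z with hx
  set y := det3 r p z with hy
  set w := det3 p q z with hw
  replace h1 := (abs_lt.1 h1).2
  replace h2 := (abs_lt.1 h2).2
  replace h3 := (abs_lt.1 h3).2
  have hx0 : 0 < x := by linarith
  have hy0 : 0 < y := by linarith
  have hw0 : 0 < w := by linarith
  set s := x + y - w with hs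
  have hs0 : 0 < s := by linarith
  have hsx : s < 2 * x := by linarith
  have hsy : s < 2 * y := by linarith
  set D := 1 - s ^ 2 / (4 * x * y) with hD
  have hD0 : 0 < D := by
    rw [hD, sub_pos, div_lt_one (by positivity)]
    nlinarith
  have hDxy : D * (4 * x * y) = 4 * x * y - s ^ 2 := by rw [hD]; field_simp
  let a : V3 := D⁻¹ • (p + (s / (2 * x)) • q)
  let b : V3 := D⁻¹ • (q + (s / (2 * y)) • p)
  have hdet : det3 a b z = w / D := by
    have : det3 a b z = D⁻¹ * D⁻¹ * (1 - s ^ 2 / (4 * x * y)) * w := by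
      rw [hw]
      simp only [a, b, det3, Pi.smul_apply, Pi.add_apply, smul_eq_mul]
      field_simp
      ring
    rw [this, ← hD]
    field_simp
  have hdpos : 0 < w / D := by positivity
  refine ⟨a, b, z, ?_, ?_⟩
  · rw [hdet, abs_of_pos hdpos, le_div_iff₀ hD0]
    have hsch := schur_ineq hx0 hy0 hw0
    rw [← hs, ← hDxy] at hsch
    have hFx : F = x + y + w := by linarith
    rw [← hFx] at hsch
    have : (4 * F * D) * (x * y) ≤ (9 * w) * (x * y) := by linarith
    have := le_of_mul_le_mul_right this (by positivity)
    linarith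
  · intro u hu
    by_cases huz : u ⬝ᵥ z = 0
    swap
    · exact ⟨0, 0, 1, z, hz, by simpa using huz, by simp⟩
    have hc := cramer u huz
    set m := u ⬝ᵥ a with hm
    set n := u ⬝ᵥ b with hn
    have em : D * m = u ⬝ᵥ p + s / (2 * x) * (u ⬝ᵥ q) := by
      simp only [hm, a, dotProduct_smul, dotProduct_add, smul_eq_mul]
      field_simp
    have en : D * n = u ⬝ᵥ q + s / (2 * y) * (u ⬝ᵥ p) := by
      simp only [hn, b, dotProduct_smul, dotProduct_add, smul_eq_mul]
      field_simp
    have e1 : u ⬝ᵥ p = m - s / (2 * x) * n := by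
      apply mul_left_cancel₀ hD0.ne'
      have : D * (m - s / (2 * x) * n) = D * m - s / (2 * x) * (D * n) := by ring
      rw [this, em, en, hD]
      field_simp
      ring
    have e2 : u ⬝ᵥ q = n - s / (2 * y) * m := by
      apply mul_left_cancel₀ hD0.ne'
      have : D * (n - s / (2 * y) * m) = D * n - s / (2 * y) * (D * m) := by ring
      rw [this, em, en, hD]
      field_simp
      ring
    have e1' : 2 * x * (u ⬝ᵥ p) = (2 * x - s) * m + s * (m - n) := by
      rw [e1]; field_simp; ring
    have e2' : 2 * y * (u ⬝ᵥ q) = 2 * y * n - s * m := by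
      rw [e2]; field_simp
    have e3' : 2 * w * (-(u ⬝ᵥ r)) = (2 * x - s) * m + (2 * y - s) * n := by
      linear_combination -2 * hc + e1' + e2'
    by_cases hn0 : n = 0
    · have hm0 : m ≠ 0 := fun hm0 => hu (eq_zero_of_dots (by rw [hdet]; exact hdpos.ne') hm0 hn0 huz)
      refine ⟨1, 0, 0, p, hp, by simpa using hm0, ?_⟩
      rw [e1, hn0]
      simp
    by_cases hm0 : m = 0
    · refine ⟨0, 1, 0, q, hq, by simpa using hn0, ?_⟩
      rw [e2, hm0]
      simp
    rcases lt_or_gt_of_ne (mul_ne_zero hm0 hn0) with hneg | hpos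
    · have hmm : 0 < m * (m - n) := by nlinarith [sq_nonneg m]
      rcases conv_bound (by linarith) hs0.le (by linarith) (by ring) e1' hmm with h | h
      · exact ⟨1, 0, 0, p, hp, by simpa using hm0, by simpa using h⟩
      · refine ⟨1, -1, 0, p, hp, ?_, ?_⟩
        · have : m - n ≠ 0 := fun h0 => by rw [h0] at hmm; simp at hmm
          simpa [← sub_eq_add_neg] using this
        · simpa [← sub_eq_add_neg] using h
    · rcases conv_bound (by linarith) (by linarith) (by linarith) (by rw [hs]; ring) e3' hpos with h | h
      · exact ⟨1, 0, 0, r, hr, by simpa using hm0, by simpa using h⟩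
      · exact ⟨0, 1, 0, r, hr, by simpa using hn0, by simpa using h⟩

lemma nonSeparable_of {K : Set V3} (hK : Convex ℝ K) {Λ : Set V3}
    (hΛ : ∀ x ∈ Λ, ∀ k : ℤ, (k : ℝ) • x ∈ Λ)
    (h : ∀ u : V3, u ≠ 0 → ∃ x ∈ Λ, ∃ y₁ ∈ K, ∃ y₂ ∈ K, 0 < |u ⬝ᵥ x| ∧ |u ⬝ᵥ x| ≤ |u ⬝ᵥ (y₁ - y₂)|) :
    NonSeparable Λ K := by
  intro u hu c
  have h' : ∃ x ∈ Λ, ∃ y₁ ∈ K, ∃ y₂ ∈ K, 0 < u ⬝ᵥ x ∧ u ⬝ᵥ x ≤ u ⬝ᵥ y₂ - u ⬝ᵥ y₁ := by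
    obtain ⟨x, hx, y₁, hy₁, y₂, hy₂, h1, h2⟩ := h u hu
    have hx' : ∃ x' ∈ Λ, u ⬝ᵥ x' = |u ⬝ᵥ x| := by
      rcases abs_choice (u ⬝ᵥ x) with e | e
      · exact ⟨x, hx, e.symm⟩
      · exact ⟨_, hΛ x hx (-1), by rw [e]; simp⟩
    obtain ⟨x', hx', e⟩ := hx'
    rw [dotProduct_sub] at h2
    rcases abs_choice (u ⬝ᵥ y₁ - u ⬝ᵥ y₂) with e' | e'
    · exact ⟨x', hx', y₂, hy₂, y₁, hy₁, by rw [e]; exact h1, by rw [e]; linarith⟩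
    · exact ⟨x', hx', y₁, hy₁, y₂, hy₂, by rw [e]; exact h1, by rw [e]; linarith⟩
  obtain ⟨x, hx, y₁, hy₁, y₂, hy₂, h1, h2⟩ := h'
  set k := ⌊(c - u ⬝ᵥ y₁) / (u ⬝ᵥ x)⌋ with hk
  have k1 : (k : ℝ) * (u ⬝ᵥ x) ≤ c - u ⬝ᵥ y₁ := (le_div_iff₀ h1).1 (Int.floor_le _)
  have k2 : c - u ⬝ᵥ y₁ < ((k : ℝ) + 1) * (u ⬝ᵥ x) := (div_lt_iff₀ h1).1 (Int.lt_floor_add_one _)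
  set L := u ⬝ᵥ y₂ - u ⬝ᵥ y₁ with hL
  have hL0 : 0 < L := by linarith
  set t := (c - u ⬝ᵥ y₁ - k * (u ⬝ᵥ x)) / L with ht
  have ht0 : 0 ≤ t := div_nonneg (by linarith) hL0.le
  have ht1 : t ≤ 1 := (div_le_one hL0).2 (by linarith)
  have htL : t * L = c - u ⬝ᵥ y₁ - k * (u ⬝ᵥ x) := by rw [ht]; field_simp
  refine ⟨_, hΛ x hx k, _, hK hy₁ hy₂ (sub_nonneg.2 ht1) ht0 (by ring), ?_⟩
  simp only [dotProduct_add, dotProduct_smul, smul_eq_mul]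
  rw [hL] at htL
  linarith

/-- For every convex body `K ⊆ ℝ³` one has `d_{3,2}(K) ≤ π/(4√3)`. -/
theorem d32_le_pi_div_four_sqrt_three (K : Set (Fin 3 → ℝ))
    (hKc : IsCompact K) (hKconv : Convex ℝ K) (hKint : (interior K).Nonempty) :
    dTrans K ≤ Real.pi / (4 * Real.sqrt 3) := by
  have hvpos : 0 < (volume K).toReal := by
    refine ENNReal.toReal_pos ?_ hKc.measure_lt_top.ne
    exact ((isOpen_interior.measure_pos volume hKint).trans_le (measure_mono interior_subset)).ne'
  obtain ⟨w, hw, hF⟩ := macbeath hKc hvpos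
  have hpi := Real.pi_pos
  have h3 : 0 < Real.sqrt 3 := Real.sqrt_pos.2 (by norm_num)
  have hFpos : 0 < Gf w := lt_of_lt_of_le (by positivity) hF
  let P : Set V3 := {d | ∃ y₁ ∈ K, ∃ y₂ ∈ K, d = y₁ - y₂}
  have hP : ∀ i j, w i - w j ∈ P := fun i j => ⟨_, hw i, _, hw j, rfl⟩
  obtain ⟨a, b, c, hdet, hgood⟩ := exists_basis (hP 0 4) (hP 1 5) (hP 2 6) (hP 3 7) hFpos rfl
  let A : Matrix (Fin 3) (Fin 3) ℝ := (Matrix.of ![a, b, c])ᵀ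
  have hA : A.det = det3 a b c := by
    simp only [A, Matrix.det_transpose, Matrix.det_fin_three, det3]
    simp
    ring
  have hApos : 0 < |A.det| := by rw [hA]; linarith
  have hns : NonSeparable (latticeOf A) K := by
    refine nonSeparable_of hKconv ?_ ?_
    · rintro _ ⟨m, rfl⟩ k
      refine ⟨fun i => k * m i, ?_⟩
      dsimp only
      rw [← Matrix.mulVec_smul]
      congr 1
      ext i
      simp
    · intro u hu
      obtain ⟨k, l, m, d, ⟨y₁, hy₁, y₂, hy₂, rfl⟩, h1, h2⟩ := hgood u hu
      refine ⟨_, ⟨![k, l, m], rfl⟩, y₁, hy₁, y₂, hy₂, ?_⟩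
      have : u ⬝ᵥ (A *ᵥ fun i => ((![k, l, m] i : ℤ) : ℝ)) =
          k * (u ⬝ᵥ a) + l * (u ⬝ᵥ b) + m * (u ⬝ᵥ c) := by
        simp [A, Matrix.mulVec, dotProduct, Fin.sum_univ_three]
        ring
      dsimp only
      rw [this]
      exact ⟨h1, h2⟩
  have hle : dTrans K ≤ (volume K).toReal / |A.det| := by
    refine csInf_le ⟨0, ?_⟩ ⟨A, abs_pos.1 hApos, hns, rfl⟩
    rintro _ ⟨B, _, _, rfl⟩
    positivity
  refine hle.trans ?_
  rw [div_le_div_iff₀ hApos (by positivity), hA]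
  have hsq : Real.sqrt 3 * Real.sqrt 3 = 3 := Real.mul_self_sqrt (by norm_num)
  have hF' : 9 * Real.sqrt 3 * (volume K).toReal ≤ Gf w * Real.pi := by
    rw [div_mul_eq_mul_div, div_le_iff₀ hpi] at hF
    exact hF
  have h4 : 4 * Gf w / 9 * Real.pi ≤ |det3 a b c| * Real.pi := by gcongr
  linarith
end
end

section
/- For every convex body K in ℝⁿ one has the duality formula d_{n,n−1}(K) = |K| · |((K−K)/2)°| / (4ⁿ · δ_L(((K−K)/2)°)). -/
open MeasureTheory Set Matrix Pointwise

noncomputable section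

theorem dd_interior_polar {n : ℕ} (C : Set (Fin n → ℝ)) (hC : IsCompact C) (x : Fin n → ℝ) :
    x ∈ interior (polarBody C) ↔ ∀ y ∈ C, y ⬝ᵥ x < 1 := by
  constructor
  · intro hx y hy
    have hcont : Continuous fun t : ℝ => t • x := by fun_prop
    have h1 : ∀ᶠ t in nhds (1 : ℝ), t • x ∈ polarBody C := by
      apply hcont.continuousAt.eventually_mem
      simpa using mem_interior_iff_mem_nhds.1 hx
    obtain ⟨ε, hε, hb⟩ := Metric.eventually_nhds_iff.1 h1
    have h2 := hb (y := 1 + ε / 2) (by rw [Real.dist_eq]; simp [abs_of_pos (half_pos hε), hε]) y hy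
    rw [dotProduct_smul, smul_eq_mul] at h2
    by_contra h3
    push Not at h3
    nlinarith
  · intro h
    rw [mem_interior_iff_mem_nhds]
    have : ∀ᶠ z in nhds x, ∀ y ∈ C, y ⬝ᵥ z < 1 := by
      apply hC.eventually_forall_of_forall_eventually
      intro y hy
      have hc : Continuous fun p : (Fin n → ℝ) × (Fin n → ℝ) => p.2 ⬝ᵥ p.1 :=
        Continuous.dotProduct continuous_snd continuous_fst
      exact hc.continuousAt.eventually_lt_const (h y hy)
    filter_upwards [this] with z hz y hy
    exact (hz y hy).le

theorem dd_main {n : ℕ} (K : Set (Fin n → ℝ))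
    (hKc : IsCompact K) (hKconv : Convex ℝ K) (hKint : (interior K).Nonempty)
    (A B : Matrix (Fin n) (Fin n) ℝ) (hAB : Aᵀ * B = (2 : ℝ) • 1) :
    NonSeparable (latticeOf A) K ↔
      Admissible (latticeOf B) (polarBody ((2⁻¹ : ℝ) • (K - K))) := by
  have hC : IsCompact ((2⁻¹ : ℝ) • (K - K)) := by
    have h : IsCompact (K - K) := by
      rw [sub_eq_add_neg]
      exact hKc.add hKc.neg
    exact h.smul _
  have hKne : K.Nonempty := hKint.mono interior_subset
  have hBA : B * Aᵀ = (2 : ℝ) • 1 := by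
    have h1 : Aᵀ * ((2⁻¹ : ℝ) • B) = 1 := by
      rw [Matrix.mul_smul, hAB, smul_smul]; norm_num
    have h2 := mul_eq_one_comm.1 h1
    rw [Matrix.smul_mul] at h2
    rw [← h2, smul_smul]; norm_num
  have hdot : ∀ (u : Fin n → ℝ) (m : Fin n → ℝ), u ⬝ᵥ (A *ᵥ m) = (Aᵀ *ᵥ u) ⬝ᵥ m := by
    intro u m
    rw [dotProduct_mulVec, mulVec_transpose]
  constructor
  · intro hN
    ext w
    simp only [mem_inter_iff, mem_singleton_iff]
    constructor
    · rintro ⟨⟨m, rfl⟩, hint⟩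
      rw [dd_interior_polar _ hC] at hint
      by_contra hne
      set w : Fin n → ℝ := B *ᵥ fun i => (m i : ℝ) with hw
      obtain ⟨y1, hy1, hmin⟩ := hKc.exists_isMinOn hKne
        (f := fun y => w ⬝ᵥ y) (Continuous.dotProduct continuous_const continuous_id).continuousOn
      obtain ⟨y2, hy2, hmax⟩ := hKc.exists_isMaxOn hKne
        (f := fun y => w ⬝ᵥ y) (Continuous.dotProduct continuous_const continuous_id).continuousOn
      have hlt := hint ((2⁻¹ : ℝ) • (y2 - y1)) (smul_mem_smul_set (sub_mem_sub hy2 hy1))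
      rw [smul_dotProduct, dotProduct_comm, dotProduct_sub, smul_eq_mul] at hlt
      obtain ⟨x, ⟨k, rfl⟩, y, hy, he⟩ := hN w hne (w ⬝ᵥ y1 + w ⬝ᵥ y2 + 2 - w ⬝ᵥ y1/2 - w ⬝ᵥ y2/2 - 1)
      have h1 : w ⬝ᵥ y1 ≤ w ⬝ᵥ y := hmin hy
      have h2 : w ⬝ᵥ y ≤ w ⬝ᵥ y2 := hmax hy
      rw [dotProduct_add] at he
      have h3 : w ⬝ᵥ (A *ᵥ fun i => (k i : ℝ)) = ((2 * ∑ i, m i * k i : ℤ) : ℝ) := by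
        rw [hdot, hw, mulVec_mulVec, hAB, smul_mulVec, one_mulVec, smul_dotProduct]
        simp [dotProduct]
      dsimp only at he
      rw [h3] at he
      push_cast at he
      have h4 : ((0 : ℤ) : ℝ) < ((∑ i, m i * k i : ℤ) : ℝ) := by push_cast; linarith
      have h5 : ((∑ i, m i * k i : ℤ) : ℝ) < ((1 : ℤ) : ℝ) := by push_cast; linarith
      rw [Int.cast_lt] at h4 h5
      omega
    · rintro rfl
      refine ⟨⟨0, by ext; simp [mulVec, dotProduct]⟩, ?_⟩
      rw [dd_interior_polar _ hC]
      simp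
  · intro hAd u hu c
    -- key width bound
    have key : ∀ v : Fin n → ℝ, v ≠ 0 → (∃ k : Fin n → ℤ, Aᵀ *ᵥ v = fun i => (k i : ℝ)) →
        ∃ y1 ∈ K, ∃ y2 ∈ K, v ⬝ᵥ y1 + 1 ≤ v ⬝ᵥ y2 := by
      rintro v hv ⟨k, hk⟩
      by_contra hcon
      push Not at hcon
      have h2v : (2 : ℝ) • v ∈ latticeOf B := by
        refine ⟨k, ?_⟩
        dsimp only
        rw [← hk, mulVec_mulVec, hBA, smul_mulVec, one_mulVec]
      have hi : (2 : ℝ) • v ∈ interior (polarBody ((2⁻¹ : ℝ) • (K - K))) := by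
        rw [dd_interior_polar _ hC]
        rintro _ ⟨_, ⟨a, ha, b, hb, rfl⟩, rfl⟩
        have := hcon b hb a ha
        simp only [smul_dotProduct, dotProduct_smul, smul_eq_mul, sub_dotProduct]
        rw [dotProduct_comm a, dotProduct_comm b]
        linarith
      have : (2 : ℝ) • v ∈ ({0} : Set (Fin n → ℝ)) := by rw [← hAd]; exact ⟨h2v, hi⟩
      simp [hv] at this
    have hival : ∀ y1 ∈ K, ∀ y2 ∈ K, ∀ s ∈ Icc (u ⬝ᵥ y1) (u ⬝ᵥ y2), ∃ y ∈ K, u ⬝ᵥ y = s := by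
      intro y1 hy1 y2 hy2 s hs
      exact hKconv.isPreconnected.intermediate_value hy1 hy2
        (f := fun y => u ⬝ᵥ y)
        (Continuous.dotProduct continuous_const continuous_id).continuousOn hs
    let φ : (Fin n → ℤ) →+ ℝ :=
      { toFun := fun m => u ⬝ᵥ (A *ᵥ fun i => (m i : ℝ))
        map_zero' := by
          have : (fun i : Fin n => (((0 : Fin n → ℤ) i : ℤ) : ℝ)) = 0 := by ext; simp
          rw [this]; simp
        map_add' := by
          intro a b
          have : (fun i : Fin n => (((a + b) i : ℤ) : ℝ)) =
            (fun i => (a i : ℝ)) + fun i => (b i : ℝ) := by ext; simp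
          rw [this, mulVec_add, dotProduct_add] }
    have hφ : ∀ m, φ m = u ⬝ᵥ (A *ᵥ fun i => (m i : ℝ)) := fun _ => rfl
    -- it suffices to find a lattice value
    suffices h : ∃ m, ∃ y ∈ K, φ m + u ⬝ᵥ y = c by
      obtain ⟨m, y, hy, he⟩ := h
      exact ⟨_, ⟨m, rfl⟩, y, hy, by rw [dotProduct_add]; exact he⟩
    have hsing : ∀ i, φ (Pi.single i 1) = (Aᵀ *ᵥ u) i := by
      intro i
      rw [hφ, hdot]
      have : (fun j : Fin n => ((Pi.single i 1 : Fin n → ℤ) j : ℝ)) = Pi.single i 1 := by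
        ext j
        by_cases h : j = i
        · subst h; simp
        · simp [h]
      rw [this]; simp
    have hAu : Aᵀ *ᵥ u ≠ 0 := by
      intro h
      have h2 : B *ᵥ (Aᵀ *ᵥ u) = (2 : ℝ) • u := by
        rw [mulVec_mulVec, hBA, smul_mulVec, one_mulVec]
      rw [h, mulVec_zero] at h2
      exact hu (by simpa using h2.symm)
    rcases AddSubgroup.dense_or_cyclic φ.range with hd | ⟨a, ha⟩
    · -- dense case
      obtain ⟨p, hp⟩ := hKint
      have hex : ∃ q ∈ K, u ⬝ᵥ p < u ⬝ᵥ q := by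
        have hcont : Continuous fun t : ℝ => p + t • u := by fun_prop
        have h1 : ∀ᶠ t in nhds (0 : ℝ), p + t • u ∈ K := by
          apply hcont.continuousAt.eventually_mem
          simpa using mem_interior_iff_mem_nhds.1 hp
        obtain ⟨ε, hε, hb⟩ := Metric.eventually_nhds_iff.1 h1
        refine ⟨_, hb (y := ε / 2) (by rw [Real.dist_eq]; simp [abs_of_pos (half_pos hε), hε]), ?_⟩
        rw [dotProduct_add, dotProduct_smul, smul_eq_mul]
        have h0 : 0 < u ⬝ᵥ u := by
          have h' : u ⬝ᵥ u ≠ 0 := by simpa [dotProduct_self_eq_zero] using hu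
          have : 0 ≤ u ⬝ᵥ u := Finset.sum_nonneg fun i _ => mul_self_nonneg _
          exact lt_of_le_of_ne this h'.symm
        have := mul_pos (half_pos hε) h0
        linarith
      obtain ⟨q, hq, hpq⟩ := hex
      obtain ⟨g, ⟨m, rfl⟩, hg1, hg2⟩ := hd.exists_between (show c - u ⬝ᵥ q < c - u ⬝ᵥ p by linarith)
      obtain ⟨y, hy, he⟩ := hival p (interior_subset hp) q hq (c - φ m)
        ⟨by linarith, by linarith⟩
      exact ⟨m, y, hy, by rw [he]; ring⟩
    · have hmem : ∀ m, ∃ k : ℤ, k • a = φ m := by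
        intro m
        have : φ m ∈ φ.range := ⟨m, rfl⟩
        rw [ha] at this
        exact AddSubgroup.mem_closure_singleton.1 this
      have ha0 : a ≠ 0 := by
        rintro rfl
        apply hAu
        ext i
        obtain ⟨k, hk⟩ := hmem (Pi.single i 1)
        rw [← hsing, ← hk]; simp
      obtain ⟨m0, hm0⟩ : a ∈ φ.range := by
        rw [ha]; exact AddSubgroup.mem_closure_singleton.2 ⟨1, by simp⟩
      -- absolute-value generator
      obtain ⟨b, hb, m1, hm1, hb2⟩ : ∃ b : ℝ, 0 < b ∧ ∃ m1, φ m1 = b ∧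
          ∀ m, ∃ k : ℤ, k • b = φ m := by
        rcases lt_or_gt_of_ne ha0 with h | h
        · refine ⟨-a, by linarith, -m0, by rw [map_neg, hm0], fun m => ?_⟩
          obtain ⟨k, hk⟩ := hmem m
          exact ⟨-k, by rw [← hk]; simp⟩
        · exact ⟨a, h, m0, hm0, hmem⟩
      choose k hk using fun i => hb2 (Pi.single i 1)
      obtain ⟨y1, hy1, y2, hy2, hw⟩ := key (b⁻¹ • u) (by simp [hb.ne', hu]) ⟨k, by
        ext i
        rw [mulVec_smul, Pi.smul_apply, ← hsing, ← hk, zsmul_eq_mul, smul_eq_mul]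
        field_simp⟩
      rw [smul_dotProduct, smul_dotProduct, smul_eq_mul, smul_eq_mul] at hw
      have hw' : u ⬝ᵥ y1 + b ≤ u ⬝ᵥ y2 := by
        have := mul_le_mul_of_nonneg_left hw hb.le
        rw [mul_add, mul_inv_cancel_left₀ hb.ne', mul_inv_cancel_left₀ hb.ne'] at this
        linarith
      obtain ⟨z, ⟨hz1, hz2⟩, -⟩ := existsUnique_add_zsmul_mem_Ico hb c (u ⬝ᵥ y1)
      obtain ⟨y, hy, he⟩ := hival y1 hy1 y2 hy2 _ ⟨hz1, hz2.le.trans hw'⟩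
      refine ⟨(-z) • m1, y, hy, ?_⟩
      rw [map_zsmul, hm1, he]
      simp

theorem dd_vol {n : ℕ} (K : Set (Fin n → ℝ))
    (hKc : IsCompact K) (hKint : (interior K).Nonempty) :
    (volume (polarBody ((2⁻¹ : ℝ) • (K - K)))).toReal ≠ 0 := by
  have hC : IsCompact ((2⁻¹ : ℝ) • (K - K)) := by
    have h : IsCompact (K - K) := by
      rw [sub_eq_add_neg]
      exact hKc.add hKc.neg
    exact h.smul _
  have h0 : (2⁻¹ : ℝ) • (K - K) ∈ nhds (0 : Fin n → ℝ) := by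
    rw [set_smul_mem_nhds_zero_iff (by norm_num)]
    obtain ⟨p, hp⟩ := hKint
    have hcont : Continuous fun t : Fin n → ℝ => p + t := by fun_prop
    have h1 : ∀ᶠ t in nhds (0 : Fin n → ℝ), p + t ∈ K := by
      apply hcont.continuousAt.eventually_mem
      simpa using mem_interior_iff_mem_nhds.1 hp
    filter_upwards [h1] with t ht
    exact ⟨p + t, ht, p, interior_subset hp, by simp⟩
  have hpos : volume (polarBody ((2⁻¹ : ℝ) • (K - K))) ≠ 0 := by
    apply (Measure.measure_pos_of_mem_nhds volume (x := 0) ?_).ne'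
    rw [← mem_interior_iff_mem_nhds, dd_interior_polar _ hC]
    simp
  have hfin : volume (polarBody ((2⁻¹ : ℝ) • (K - K))) ≠ ⊤ := by
    obtain ⟨r, hr, hb⟩ := Metric.mem_nhds_iff.1 h0
    apply ne_top_of_le_ne_top (b := volume (Metric.closedBall (0 : Fin n → ℝ) (2 / r)))
    · exact measure_closedBall_lt_top.ne
    · apply measure_mono
      intro x hx
      rw [mem_closedBall_zero_iff, pi_norm_le_iff_of_nonneg (by positivity)]
      intro i
      have hm : ∀ s : ℝ, |s| < r → s * x i ≤ 1 := by
        intro s hs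
        have := hx (Pi.single i s) (hb (by
          rw [mem_ball_zero_iff, pi_norm_lt_iff hr]
          intro j
          by_cases h : j = i
          · subst h; simpa using hs
          · simpa [h] using hr))
        simpa using this
      have h1 := hm (r / 2) (by rw [abs_of_pos (by linarith)]; linarith)
      have h2 := hm (-(r / 2)) (by rw [abs_neg, abs_of_pos (by linarith)]; linarith)
      rw [Real.norm_eq_abs, le_div_iff₀ hr]
      rcases abs_cases (x i) with ⟨h, _⟩ | ⟨h, _⟩ <;> rw [h] <;> linarith
  exact ENNReal.toReal_ne_zero.2 ⟨hpos, hfin⟩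

theorem dd_pair {n : ℕ} (A : Matrix (Fin n) (Fin n) ℝ) (hA : A.det ≠ 0) :
    ∃ B : Matrix (Fin n) (Fin n) ℝ, Aᵀ * B = (2 : ℝ) • 1 := by
  refine ⟨(2 : ℝ) • (Aᵀ)⁻¹, ?_⟩
  rw [Matrix.mul_smul, Matrix.mul_nonsing_inv]
  rw [det_transpose]
  exact hA.isUnit

theorem dd_det {n : ℕ} (A B : Matrix (Fin n) (Fin n) ℝ) (h : Aᵀ * B = (2 : ℝ) • 1) :
    |A.det| * |B.det| = 2 ^ n := by
  have := congrArg Matrix.det h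
  rw [det_mul, det_transpose, det_smul, det_one, Fintype.card_fin, mul_one] at this
  rw [← abs_mul, this]
  simp

/-- Duality: for every convex body `K ⊆ ℝⁿ`,
`d_{n,n-1}(K) = |K| · |((K-K)/2)°| / (4ⁿ · δ_L(((K-K)/2)°))`. -/
theorem dTrans_duality {n : ℕ} (K : Set (Fin n → ℝ))
    (hKc : IsCompact K) (hKconv : Convex ℝ K) (hKint : (interior K).Nonempty) :
    dTrans K = (volume K).toReal * (volume (polarBody ((2⁻¹ : ℝ) • (K - K)))).toReal /
      (4 ^ n * deltaL (polarBody ((2⁻¹ : ℝ) • (K - K)))) := by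
  have hV := dd_vol K hKc hKint
  have hR : dTrans K = ((volume K).toReal / 2 ^ n) *
      critDet (polarBody ((2⁻¹ : ℝ) • (K - K))) := by
    unfold dTrans critDet
    rw [← smul_eq_mul, ← Real.sInf_smul_of_nonneg (by positivity)]
    congr 1
    ext d
    simp only [mem_smul_set, mem_setOf_eq]
    constructor
    · rintro ⟨A, hA, hN, rfl⟩
      obtain ⟨B, hAB⟩ := dd_pair A hA
      have hd := dd_det A B hAB
      have hA' : |A.det| ≠ 0 := abs_ne_zero.2 hA
      refine ⟨|B.det|, ⟨B, ?_, (dd_main K hKc hKconv hKint A B hAB).1 hN, rfl⟩, ?_⟩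
      · intro h0
        rw [h0] at hd
        simp at hd
        exact absurd hd (by positivity)
      · rw [← hd, smul_eq_mul]
        have hB' : |B.det| ≠ 0 := by
          intro h0
          rw [h0, mul_zero] at hd
          exact absurd hd.symm (by positivity)
        field_simp
    · rintro ⟨_, ⟨B, hB, hN, rfl⟩, rfl⟩
      obtain ⟨A, hBA⟩ := dd_pair B hB
      have hAB : Aᵀ * B = (2 : ℝ) • 1 := by
        have := congrArg Matrix.transpose hBA
        simpa [transpose_mul] using this
      have hd := dd_det A B hAB
      have hB' : |B.det| ≠ 0 := abs_ne_zero.2 hB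
      have hA' : |A.det| ≠ 0 := by
        intro h0
        rw [h0, zero_mul] at hd
        exact absurd hd.symm (by positivity)
      refine ⟨A, abs_ne_zero.1 hA', (dd_main K hKc hKconv hKint A B hAB).2 hN, ?_⟩
      rw [← hd, smul_eq_mul]
      field_simp
  rw [hR]
  unfold deltaL
  have h4 : (4 : ℝ) ^ n = 2 ^ n * 2 ^ n := by rw [← mul_pow]; norm_num
  rw [h4]
  generalize (volume (polarBody ((2⁻¹ : ℝ) • (K - K)))).toReal = V at *
  generalize critDet (polarBody ((2⁻¹ : ℝ) • (K - K))) = D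
  by_cases hD : D = 0
  · simp [hD]
  · field_simp
end
end

section
/- The supremum of d_{2,1}(K) over all convex bodies K in ℝ² equals the supremum of d_{2,1}(K) over all centrally symmetric convex bodies K in ℝ². -/
open MeasureTheory Set Matrix Pointwise

noncomputable section

/-- One-dimensional Brunn-Minkowski in quasi-concave form, for bounded convex sets. -/
theorem bm_one {A B M : Set ℝ} (hA : Convex ℝ A) (hB : Convex ℝ B)
    (bA : Bornology.IsBounded A) (bB : Bornology.IsBounded B) (bM : Bornology.IsBounded M)
    {α β : ℝ} (hα : 0 ≤ α) (hβ : 0 ≤ β) (hαβ : α + β = 1)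
    (hM : ∀ x ∈ A, ∀ y ∈ B, α * x + β * y ∈ M) {t : ℝ} (ht : 0 ≤ t)
    (htA : t < volume.real A) (htB : t < volume.real B) : t < volume.real M := by
  have key : ∀ S : Set ℝ, Convex ℝ S → Bornology.IsBounded S → t < volume.real S →
      ∃ a b, t < b - a ∧ Ioo a b ⊆ S := by
    intro S hS bS h
    have hne : S.Nonempty := by
      by_contra hh
      rw [not_nonempty_iff_eq_empty] at hh
      subst hh
      simp at h
      linarith
    refine ⟨sInf S, sSup S, ?_, ?_⟩
    · have h1 : volume.real S ≤ volume.real (Icc (sInf S) (sSup S)) :=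
        measureReal_mono (subset_Icc_csInf_csSup bS.bddBelow bS.bddAbove)
          isCompact_Icc.measure_lt_top.ne
      have h2 : sInf S ≤ sSup S := csInf_le_csSup hne bS.bddBelow bS.bddAbove
      rw [Real.volume_real_Icc_of_le h2] at h1
      linarith
    · exact IsConnected.Ioo_csInf_csSup_subset ⟨hne, hS.isPreconnected⟩ bS.bddBelow bS.bddAbove
  obtain ⟨a, b, hab, hSA⟩ := key A hA bA htA
  obtain ⟨c, d, hcd, hSB⟩ := key B hB bB htB
  have hlen : t < (α * b + β * d) - (α * a + β * c) := by
    have h3 : (α * b + β * d) - (α * a + β * c) - t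
        = α * ((b - a) - t) + β * ((d - c) - t) := by
      linear_combination t * hαβ
    have h4 : 0 < α * ((b - a) - t) + β * ((d - c) - t) := by
      rcases hα.eq_or_lt with h | h
      · have : β = 1 := by linarith
        subst this; subst h; linarith
      · have := mul_pos h (sub_pos.2 hab)
        have := mul_nonneg hβ (sub_pos.2 hcd).le
        linarith
    linarith
  have hsub : Ioo (α * a + β * c) (α * b + β * d) ⊆ M := by
    intro z hz
    obtain ⟨hz1, hz2⟩ := hz
    set L := (α * b + β * d) - (α * a + β * c) with hL
    have hLpos : 0 < L := by linarith
    set θ := (z - (α * a + β * c)) / L with hθ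
    have hθ0 : 0 < θ := div_pos (by linarith) hLpos
    have hθ1 : θ < 1 := by rw [hθ, div_lt_one hLpos]; linarith
    have hθL : θ * L = z - (α * a + β * c) := div_mul_cancel₀ _ hLpos.ne'
    have hx : a + θ * (b - a) ∈ A := hSA ⟨by nlinarith, by nlinarith⟩
    have hy : c + θ * (d - c) ∈ B := hSB ⟨by nlinarith, by nlinarith⟩
    have := hM _ hx _ hy
    convert this using 1
    rw [hL] at hθL
    linear_combination -hθL
  have h5 : volume.real (Ioo (α * a + β * c) (α * b + β * d)) ≤ volume.real M :=
    measureReal_mono hsub bM.measure_lt_top.ne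
  rw [Real.volume_real_Ioo_of_le (by linarith)] at h5
  linarith

/-- Slices of bounded planar sets are bounded. -/
theorem slice_bdd {C : Set (ℝ × ℝ)} (hC : IsCompact C) (x : ℝ) :
    Bornology.IsBounded (Prod.mk x ⁻¹' C) :=
  (hC.image continuous_snd).isBounded.subset fun y hy => ⟨(x, y), hy, rfl⟩

theorem level_bdd {C : Set (ℝ × ℝ)} (hC : IsCompact C) {t : ℝ} (ht : 0 ≤ t) :
    Bornology.IsBounded {x : ℝ | t < volume.real (Prod.mk x ⁻¹' C)} := by
  refine (hC.image continuous_fst).isBounded.subset fun x hx => ?_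
  simp only [mem_ofPred_eq] at hx
  have hne : (Prod.mk x ⁻¹' C).Nonempty := by
    by_contra hh
    rw [not_nonempty_iff_eq_empty] at hh
    rw [hh] at hx
    simp at hx
    linarith
  obtain ⟨y, hy⟩ := hne
  exact ⟨(x, y), hy, rfl⟩

theorem slice_convex {C : Set (ℝ × ℝ)} (hC : Convex ℝ C) (x : ℝ) :
    Convex ℝ (Prod.mk x ⁻¹' C) := by
  intro y hy z hz a b ha hb hab
  have := hC hy hz ha hb hab
  have e : a • (x, y) + b • (x, z) = (x, a • y + b • z) := by
    ext
    · simp; linear_combination x * hab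
    · simp
  rw [e] at this
  exact this

theorem volume_layer {C : Set (ℝ × ℝ)} (hC : IsCompact C) :
    volume C = ∫⁻ t in Ioi (0 : ℝ), volume {x : ℝ | t < volume.real (Prod.mk x ⁻¹' C)} := by
  have hm : MeasurableSet C := hC.measurableSet
  have hf : Measurable fun x => volume.real (Prod.mk x ⁻¹' C) :=
    (measurable_measure_prodMk_left (ν := (volume : Measure ℝ)) hm).ennreal_toReal
  rw [← lintegral_eq_lintegral_meas_lt volume
    (Filter.Eventually.of_forall fun x => measureReal_nonneg) hf.aemeasurable,
    Measure.volume_eq_prod, Measure.prod_apply hm]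
  refine lintegral_congr fun x => ?_
  rw [measureReal_def, ENNReal.ofReal_toReal (slice_bdd hC x).measure_lt_top.ne]

/-- The difference-body inequality `|C| ≤ |(C - C)/2|` in the plane. -/
theorem vol_le_prod {C D : Set (ℝ × ℝ)} (hC : IsCompact C) (hD : IsCompact D)
    (cC : Convex ℝ C)
    (h : ∀ p ∈ C, ∀ q ∈ C, (1 / 2 : ℝ) • (p - q) ∈ D) : volume C ≤ volume D := by
  rw [volume_layer hC, volume_layer hD]
  refine setLIntegral_mono' measurableSet_Ioi fun t ht => ?_
  have ht0 : (0 : ℝ) ≤ t := le_of_lt ht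
  set S := {x : ℝ | t < volume.real (Prod.mk x ⁻¹' C)} with hS
  set M := {x : ℝ | t < volume.real (Prod.mk x ⁻¹' D)} with hM
  have bS : Bornology.IsBounded S := level_bdd hC ht0
  have bM : Bornology.IsBounded M := level_bdd hD ht0
  have cS : Convex ℝ S := by
    intro x hx y hy a b ha hb hab
    refine bm_one (slice_convex cC x) (slice_convex cC y) (slice_bdd hC x) (slice_bdd hC y)
      (slice_bdd hC _) ha hb hab ?_ ht0 hx hy
    intro u hu v hv
    have := cC hu hv ha hb hab
    simpa using this
  have hneg : ∀ T : Set ℝ, volume.real (-T) = volume.real T := by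
    intro T
    rw [measureReal_def, measureReal_def, Measure.measure_neg]
  have hSM : ∀ x ∈ S, ∀ y ∈ -S, (1 / 2 : ℝ) * x + (1 / 2) * y ∈ M := by
    intro x hx y hy
    have hy' : t < volume.real (-(Prod.mk (-y) ⁻¹' C)) := by
      rw [hneg]; exact hy
    refine bm_one (α := 1 / 2) (β := 1 / 2) (slice_convex cC x) (slice_convex cC (-y)).neg (slice_bdd hC x)
      (slice_bdd hC (-y)).neg (slice_bdd hD _) (by norm_num) (by norm_num) (by norm_num)
      ?_ ht0 hx hy'
    intro u hu v hv
    have := h _ hu _ hv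
    have e : (1 / 2 : ℝ) • ((x, u) - (-y, -v))
      = ((1 / 2 : ℝ) * x + (1 / 2) * y, (1 / 2 : ℝ) * u + (1 / 2) * v) := by
      ext
      · simp; ring
      · simp; ring
    rw [e] at this
    exact this
  rw [← ENNReal.toReal_le_toReal bS.measure_lt_top.ne bM.measure_lt_top.ne]
  by_contra hlt
  push Not at hlt
  have hlt' : volume.real M < volume.real S := hlt
  exact lt_irrefl _ (bm_one cS cS.neg bS bS.neg bM (by norm_num) (by norm_num) (by norm_num)
    hSM measureReal_nonneg hlt' (by rw [hneg]; exact hlt'))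

/-- Half of the difference body. -/
def symK (K : Set (Fin 2 → ℝ)) : Set (Fin 2 → ℝ) := (1 / 2 : ℝ) • (K - K)

theorem mem_symK {K : Set (Fin 2 → ℝ)} {z : Fin 2 → ℝ} :
    z ∈ symK K ↔ ∃ p ∈ K, ∃ q ∈ K, (1 / 2 : ℝ) • (p - q) = z := by
  constructor
  · rintro ⟨_, ⟨p, hp, q, hq, rfl⟩, rfl⟩
    exact ⟨p, hp, q, hq, rfl⟩
  · rintro ⟨p, hp, q, hq, rfl⟩
    exact ⟨_, ⟨p, hp, q, hq, rfl⟩, rfl⟩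

theorem symK_compact {K : Set (Fin 2 → ℝ)} (hK : IsCompact K) : IsCompact (symK K) := by
  unfold symK
  rw [sub_eq_add_neg]
  exact (hK.add hK.neg).smul _

theorem vol_le_symK {K : Set (Fin 2 → ℝ)} (hK : IsCompact K) (cK : Convex ℝ K) :
    volume K ≤ volume (symK K) := by
  let e := (ContinuousLinearEquiv.finTwoArrow ℝ ℝ).symm
  have hv : ∀ T : Set (Fin 2 → ℝ), volume (e ⁻¹' T) = volume T := fun T =>
    (volume_preserving_finTwoArrow ℝ).symm.measure_preimage_equiv T
  rw [← hv K, ← hv (symK K)]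
  refine vol_le_prod (e.toHomeomorph.isCompact_preimage.2 hK)
    (e.toHomeomorph.isCompact_preimage.2 (symK_compact hK))
    (cK.linear_preimage e.toLinearEquiv.toLinearMap) ?_
  intro p hp q hq
  refine mem_symK.2 ⟨e p, hp, e q, hq, ?_⟩
  rw [map_smul, map_sub]

theorem nonsep_iff {K : Set (Fin 2 → ℝ)} (hK : IsCompact K) (cK : Convex ℝ K)
    (nK : K.Nonempty) (Λ : Set (Fin 2 → ℝ)) :
    NonSeparable Λ (symK K) ↔ NonSeparable Λ K := by
  have key : ∀ u : Fin 2 → ℝ, ∃ s : ℝ,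
      (∀ y ∈ K, ∃ z ∈ symK K, u ⬝ᵥ z = u ⬝ᵥ y - s) ∧
      (∀ z ∈ symK K, ∃ y ∈ K, u ⬝ᵥ z = u ⬝ᵥ y - s) := by
    intro u
    have hcont : Continuous fun y : Fin 2 → ℝ => u ⬝ᵥ y := by
      unfold dotProduct; fun_prop
    obtain ⟨p, hp, hpmin⟩ := hK.exists_isMinOn nK hcont.continuousOn
    obtain ⟨q, hq, hqmax⟩ := hK.exists_isMaxOn nK hcont.continuousOn
    have hpmin' : ∀ y ∈ K, u ⬝ᵥ p ≤ u ⬝ᵥ y := fun y hy => hpmin hy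
    have hqmax' : ∀ y ∈ K, u ⬝ᵥ y ≤ u ⬝ᵥ q := fun y hy => hqmax hy
    have hseg : ∀ r : ℝ, u ⬝ᵥ p ≤ r → r ≤ u ⬝ᵥ q → ∃ y ∈ K, u ⬝ᵥ y = r := by
      intro r h1 h2
      exact cK.isPreconnected.intermediate_value hp hq hcont.continuousOn ⟨h1, h2⟩
    refine ⟨(u ⬝ᵥ p + u ⬝ᵥ q) / 2, ?_, ?_⟩
    · intro y hy
      have h1 := hpmin' y hy
      have h2 := hqmax' y hy
      obtain ⟨y', hy', h3⟩ := hseg (u ⬝ᵥ p + u ⬝ᵥ q - u ⬝ᵥ y) (by linarith) (by linarith)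
      refine ⟨_, mem_symK.2 ⟨y, hy, y', hy', rfl⟩, ?_⟩
      rw [dotProduct_smul, dotProduct_sub, h3, smul_eq_mul]
      ring
    · intro z hz
      obtain ⟨a, ha, b, hb, rfl⟩ := mem_symK.1 hz
      have h1 := hpmin' a ha
      have h2 := hqmax' a ha
      have h3 := hpmin' b hb
      have h4 := hqmax' b hb
      obtain ⟨y, hy, h5⟩ := hseg ((u ⬝ᵥ a - u ⬝ᵥ b) / 2 + (u ⬝ᵥ p + u ⬝ᵥ q) / 2)
        (by linarith) (by linarith)
      refine ⟨y, hy, ?_⟩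
      rw [dotProduct_smul, dotProduct_sub, h5, smul_eq_mul]
      ring
  constructor
  · intro h u hu c
    obtain ⟨s, _, hs⟩ := key u
    obtain ⟨x, hx, z, hz, hxz⟩ := h u hu (c - s)
    obtain ⟨y, hy, hzy⟩ := hs z hz
    refine ⟨x, hx, y, hy, ?_⟩
    rw [dotProduct_add] at hxz ⊢
    linarith
  · intro h u hu c
    obtain ⟨s, hs, _⟩ := key u
    obtain ⟨x, hx, y, hy, hxy⟩ := h u hu (c + s)
    obtain ⟨z, hz, hzy⟩ := hs y hy
    refine ⟨x, hx, z, hz, ?_⟩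
    rw [dotProduct_add] at hxy ⊢
    linarith

theorem dTrans_le_symK {K : Set (Fin 2 → ℝ)} (hK : IsCompact K) (cK : Convex ℝ K)
    (nK : K.Nonempty) : dTrans K ≤ dTrans (symK K) := by
  unfold dTrans
  simp only [nonsep_iff hK cK nK]
  have hvol : (volume K).toReal ≤ (volume (symK K)).toReal :=
    ENNReal.toReal_mono (symK_compact hK).measure_lt_top.ne (vol_le_symK hK cK)
  by_cases hne : ∃ A : Matrix (Fin 2) (Fin 2) ℝ, A.det ≠ 0 ∧ NonSeparable (latticeOf A) K
  · obtain ⟨A₀, h0, h1⟩ := hne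
    refine le_csInf ⟨_, A₀, h0, h1, rfl⟩ ?_
    rintro _ ⟨A, hA, hn, rfl⟩
    refine le_trans (csInf_le ⟨0, ?_⟩ ⟨A, hA, hn, rfl⟩) (by gcongr)
    rintro _ ⟨B, _, _, rfl⟩
    positivity
  · have : ∀ v : ℝ, {d : ℝ | ∃ A : Matrix (Fin 2) (Fin 2) ℝ, A.det ≠ 0 ∧
        NonSeparable (latticeOf A) K ∧ d = v / |A.det|} = ∅ := by
      intro v
      ext d
      simp only [mem_ofPred_eq, mem_empty_iff_false, iff_false]
      rintro ⟨A, hA, hn, _⟩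
      exact hne ⟨A, hA, hn⟩
    rw [this, this]

/-- The supremum of `d_{2,1}` over all convex bodies in `ℝ²` equals its supremum
over all centrally symmetric convex bodies in `ℝ²`. -/
theorem sSup_d21_eq_sSup_d21_symm :
    sSup {d : ℝ | ∃ K : Set (Fin 2 → ℝ),
        IsCompact K ∧ Convex ℝ K ∧ (interior K).Nonempty ∧ d = dTrans K} =
    sSup {d : ℝ | ∃ K : Set (Fin 2 → ℝ),
        IsCompact K ∧ Convex ℝ K ∧ (interior K).Nonempty ∧ K = -K ∧ d = dTrans K} := by
  set S := {d : ℝ | ∃ K : Set (Fin 2 → ℝ),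
        IsCompact K ∧ Convex ℝ K ∧ (interior K).Nonempty ∧ d = dTrans K} with hS
  set T := {d : ℝ | ∃ K : Set (Fin 2 → ℝ),
        IsCompact K ∧ Convex ℝ K ∧ (interior K).Nonempty ∧ K = -K ∧ d = dTrans K} with hT
  have hTS : T ⊆ S := by
    rintro d ⟨K, h1, h2, h3, _, h5⟩
    exact ⟨K, h1, h2, h3, h5⟩
  have hST : ∀ s ∈ S, ∃ t ∈ T, s ≤ t := by
    rintro _ ⟨K, h1, h2, h3, rfl⟩
    have nK : K.Nonempty := h3.mono interior_subset
    refine ⟨_, ⟨symK K, symK_compact h1, (h2.sub h2).smul _, ?_, ?_, rfl⟩,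
      dTrans_le_symK h1 h2 nK⟩
    · have ho : IsOpen ((1 / 2 : ℝ) • (interior K - K)) :=
        (isOpen_interior.sub_right).smul₀ (by norm_num)
      have hs : (1 / 2 : ℝ) • (interior K - K) ⊆ symK K :=
        smul_set_mono (sub_subset_sub_right interior_subset)
      exact ((h3.sub nK).smul_set).mono (interior_maximal hs ho)
    · unfold symK
      have hn : -((1 / 2 : ℝ) • (K - K)) = (1 / 2 : ℝ) • -(K - K) := (smul_set_neg _ _).symm
      rw [hn, neg_sub]
  have hub : upperBounds S = upperBounds T := by
    ext b
    constructor
    · exact fun hb t ht => hb (hTS ht)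
    · intro hb s hs
      obtain ⟨t, ht, hst⟩ := hST s hs
      exact hst.trans (hb ht)
  by_cases hb : BddAbove T
  · rcases S.eq_empty_or_nonempty with hE | hE
    · have : T = ∅ := subset_empty_iff.1 (hE ▸ hTS)
      rw [hE, this]
    · have hTn : T.Nonempty := by
        obtain ⟨s, hs⟩ := hE
        obtain ⟨t, ht, _⟩ := hST s hs
        exact ⟨t, ht⟩
      have hbS : BddAbove S := by
        unfold BddAbove at hb ⊢
        rwa [hub]
      have l1 := isLUB_csSup hE hbS
      have l2 := isLUB_csSup hTn hb
      unfold IsLUB at l1 l2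
      rw [hub] at l1
      exact l1.unique l2
  · have hbS : ¬ BddAbove S := by
      unfold BddAbove at hb ⊢
      rwa [hub]
    rw [Real.sSup_of_not_bddAbove hb, Real.sSup_of_not_bddAbove hbS]
end
end
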